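/- arXiv:1704.07111 — 3 statements merged into one kernel-verified Lean document; each statement's English description precedes it below -/
import Mathlib

section
/- Let G be a 2-edge-connected graph and T ⊆ V(G). Then G contains a T-join if and only if T is infinite or |T| is even. -/
namespace SimpleGraph

variable {V : Type*}

/-- A `T`-join in `G`: a set `P` of (oriented) paths, pairwise edge-disjoint, each with two
distinct endpoints lying in `T`, such that every vertex of `T` is an endpoint of exactly one
path of `P`. -/
def IsTJoin (G : SimpleGraph V) (T : Set V) (P : Set (Σ u : V, Σ v : V, G.Walk u v)) : Prop :=
  (∀ p ∈ P, p.2.2.IsPath ∧ p.1 ≠ p.2.1 ∧ p.1 ∈ T ∧ p.2.1 ∈ T) ∧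
  (∀ p ∈ P, ∀ q ∈ P, p ≠ q → ∀ e ∈ p.2.2.edges, e ∉ q.2.2.edges) ∧
  (∀ t ∈ T, ∃! p, p ∈ P ∧ (p.1 = t ∨ p.2.1 = t))

/-- `G` contains a `T`-join. -/
def HasTJoin (G : SimpleGraph V) (T : Set V) : Prop := ∃ P, G.IsTJoin T P

end SimpleGraph

namespace SimpleGraph

variable {V : Type*}

/-- A graph is 2-edge-connected if it is connected and stays connected after deleting any
single edge. -/
def TwoEdgeConnected (G : SimpleGraph V) : Prop :=
  G.Connected ∧ ∀ e ∈ G.edgeSet, (G.deleteEdges {e}).Connected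

end SimpleGraph

/-!
In a tree, send a token from each vertex of `T` towards the root, and let each vertex pair up the
tokens that reach it, passing on the last one if there are oddly many. The paired tokens have
travelled along edge-disjoint paths, so this yields a `T`-join as soon as an even or infinite number
of tokens reaches the root. If a vertex receives infinitely many tokens, it may pass on one or
none, as it likes.

For finite `T` a spanning tree will do, by parity. For infinite `T` the parity at the root can be
corrected if the tree contains a ray from the root that meets `T` infinitely often: reverse the
decisions of all vertices along it. A 2-edge-connected graph need not contain such a ray, but it
contains an infinite trail that meets `T` in infinitely many vertices. Giving every visit of the
trail a vertex of its own turns the trail into a ray, and the edge-disjointness of the walks is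
not affected.
-/

namespace TJoin

open SimpleGraph Set
open scoped symmDiff

/-! ### Even sets, finite or infinite -/

section Even

universe u

variable {α : Type*} {s : Set α} {a : α} {n : ℕ∞}

theorem even_natCast {m : ℕ} : Even (m : ℕ∞) ↔ Even m := by
  refine ⟨fun ⟨k, hk⟩ => ?_, fun h => h.map (Nat.castRingHom ℕ∞)⟩
  lift k to ℕ using fun h => by simp [h] at hk
  exact ⟨k, by exact_mod_cast hk⟩

theorem even_top : Even (⊤ : ℕ∞) :=
  ⟨⊤, (top_add _).symm⟩

theorem even_encard_iff_infinite_or_even_ncard :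
    Even s.encard ↔ s.Infinite ∨ Even s.ncard := by
  rcases s.finite_or_infinite with hs | hs
  · simp only [hs.not_infinite, false_or, ← hs.cast_ncard_eq, even_natCast]
  · simp only [hs, true_or, encard_eq_top_iff.2 hs, even_top]

theorem even_encard_iff_exists_equiv_prod_bool {α : Type u} {s : Set α} :
    Even s.encard ↔ ∃ ι : Type u, Nonempty (s ≃ ι × Bool) := by
  classical
  constructor
  · intro hs
    obtain ⟨t, u, rfl, htu, hcard⟩ := exists_union_disjoint_cardinal_eq_of_even <|
      (even_encard_iff_infinite_or_even_ncard.1 hs).elim (fun h => by simp [h.ncard]) id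
    obtain ⟨e⟩ := Cardinal.eq.1 hcard
    exact ⟨t, ⟨(Equiv.Set.union htu).trans <| ((Equiv.refl t).sumCongr e.symm).trans <|
      (Equiv.boolProdEquivSum t).symm.trans (Equiv.prodComm _ _)⟩⟩
  · rintro ⟨ι, ⟨e⟩⟩
    refine ⟨ENat.card ι, ?_⟩
    rw [encard, ENat.card_congr e, ENat.card_prod, ENat.card_eq_coe_fintype_card (α := Bool),
      Fintype.card_bool, Nat.cast_ofNat, mul_two]

theorem even_add_one_of_not_even (h : ¬ Even n) : Even (n + 1) := by
  induction n with
  | top => exact absurd even_top h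
  | coe n => exact even_natCast.2 (Nat.even_add_one.2 (even_natCast.not.1 h))

theorem even_add_one_add_one_iff : Even (n + 1 + 1) ↔ Even n := by
  induction n with
  | top => simp only [top_add]
  | coe n =>
    simp only [← Nat.cast_succ, even_natCast, Nat.succ_eq_add_one, Nat.even_add_one, not_not]

theorem even_encard_symmDiff_singleton_add_one_iff :
    Even ((s ∆ {a}).encard + 1) ↔ Even s.encard := by
  by_cases ha : a ∈ s
  · rw [symmDiff_of_ge (singleton_subset_iff.2 ha), encard_sdiff_singleton_add_one ha]
  · have : s ∆ {a} = insert a s :=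
      (disjoint_singleton_right.2 ha).symmDiff_eq_sup.trans union_singleton
    rw [this, encard_insert_of_notMem ha, even_add_one_add_one_iff]

theorem even_encard_symmDiff_singleton_iff :
    Even (s ∆ {a}).encard ↔ Even (s.encard + 1) := by
  rw [← even_encard_symmDiff_singleton_add_one_iff (a := a), symmDiff_symmDiff_cancel_right]

end Even

/-! ### Joins from edge-disjoint walks -/

section Walks

variable {V : Type*} {G : SimpleGraph V} {T : Set V}

theorem hasTJoin_of_walks {ι : Type*} {x : ι × Bool → V} (hx : x.Injective)
    (w : ∀ i, G.Walk (x (i, false)) (x (i, true)))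
    (hw : Pairwise fun i j => (w i).edges.Disjoint (w j).edges) : G.HasTJoin (range x) := by
  classical
  refine ⟨range fun i => ⟨x (i, false), x (i, true), (w i).bypass⟩, ?_, ?_, ?_⟩
  · rintro _ ⟨i, rfl⟩
    exact ⟨(w i).bypass_isPath, hx.ne (by simp), mem_range_self _, mem_range_self _⟩
  · rintro _ ⟨i, rfl⟩ _ ⟨j, rfl⟩ hij e he he'
    have ij_ne : i ≠ j := by rintro rfl; exact hij rfl
    exact hw ij_ne ((w i).edges_bypass_subset_edges he)
      ((w j).edges_bypass_subset_edges he')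
  · rintro _ ⟨⟨i, b⟩, rfl⟩
    refine ⟨_, ⟨mem_range_self i, by cases b <;> simp⟩, ?_⟩
    rintro _ ⟨⟨j, rfl⟩, h⟩
    obtain rfl : j = i := by
      rcases h with h | h <;> exact congrArg Prod.fst (hx h)
    rfl

theorem even_encard_of_hasTJoin (h : G.HasTJoin T) : Even T.encard := by
  obtain ⟨P, hP, -, hT⟩ := h
  let f : P × Bool → T
    | (p, false) => ⟨p.1.1, (hP _ p.2).2.2.1⟩
    | (p, true) => ⟨p.1.2.1, (hP _ p.2).2.2.2⟩
  have f_end (p : P) (b : Bool) : p.1.1 = f (p, b) ∨ p.1.2.1 = f (p, b) := by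
    cases b
    exacts [.inl rfl, .inr rfl]
  have f_injective : f.Injective := by
    rintro ⟨p, b⟩ ⟨q, c⟩ h
    obtain rfl : p = q := Subtype.ext <|
      (hT _ (f (p, b)).2).unique ⟨p.2, f_end p b⟩ ⟨q.2, h ▸ f_end q c⟩
    have ends_ne : f (p, false) ≠ f (p, true) := fun h => (hP _ p.2).2.1 (congrArg Subtype.val h)
    cases b <;> cases c
    exacts [rfl, absurd h ends_ne, absurd h.symm ends_ne, rfl]
  have f_surjective : f.Surjective := by
    rintro ⟨t, ht⟩
    obtain ⟨p, ⟨hp, rfl | rfl⟩, -⟩ := hT t ht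
    exacts [⟨(⟨p, hp⟩, false), rfl⟩, ⟨(⟨p, hp⟩, true), rfl⟩]
  exact even_encard_iff_exists_equiv_prod_bool.2
    ⟨P, ⟨(Equiv.ofBijective f ⟨f_injective, f_surjective⟩).symm⟩⟩

theorem hasTJoin_of_walks_to {ι X : Type*} {x : ι → V} {loc : ι → X} {f : X → V}
    (hx : x.Injective) (w : ∀ i, G.Walk (x i) (f (loc i)))
    (hw : Pairwise fun i j => (w i).edges.Disjoint (w j).edges)
    (heven : ∀ v, Even (loc ⁻¹' {v}).encard) : G.HasTJoin (range x) := by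
  choose κ e using fun v => even_encard_iff_exists_equiv_prod_bool.1 (heven v)
  let σ : (Σ v, κ v) × Bool ≃ ι := (Equiv.sigmaProdDistrib κ Bool).trans <|
    (Equiv.sigmaCongrRight fun v => (e v).some.symm).trans (Equiv.sigmaFiberEquiv loc)
  have loc_σ (p) : loc (σ p) = p.1.1 := ((e p.1.1).some.symm (p.1.2, p.2)).2
  rw [← σ.surjective.range_comp x]
  refine hasTJoin_of_walks (hx.comp σ.injective) (fun p => (w (σ (p, false))).append <|
    (w (σ (p, true))).reverse.copy (congrArg f ((loc_σ _).trans (loc_σ (p, false)).symm)) rfl) ?_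
  intro p q hpq a hp hq
  simp only [Walk.edges_append, Walk.edges_copy, Walk.edges_reverse, List.mem_append,
    List.mem_reverse] at hp hq
  have σ_ne (b c) : σ (p, b) ≠ σ (q, c) := σ.injective.ne fun h => hpq (congrArg Prod.fst h)
  rcases hp with hp | hp <;> rcases hq with hq | hq <;> exact hw (σ_ne _ _) hp hq

end Walks

section Descent

open Relation

variable {α : Type*}

theorem exists_descent (R : α → α → Prop) (S : Set α) :
    ∃ (f : α → α) (ρ : α → ℕ), ∀ a ∉ S, (∃ b ∈ S, ReflTransGen R a b) →
      R a (f a) ∧ (∃ b ∈ S, ReflTransGen R (f a) b) ∧ ρ (f a) < ρ a := by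
  let N (n : ℕ) : Set α := (fun A => {a | ∃ b ∈ A, R a b})^[n] S
  have N_succ (n : ℕ) : N (n + 1) = {a | ∃ b ∈ N n, R a b} := Function.iterate_succ_apply' ..
  have reaches_of_mem : ∀ {n a}, a ∈ N n → ∃ b ∈ S, ReflTransGen R a b := by
    intro n
    induction n with
    | zero => exact fun {a} ha => ⟨a, ha, .refl⟩
    | succ n ih =>
      rw [N_succ]
      rintro a ⟨b, hb, hab⟩
      exact (ih hb).imp fun c hc => hc.imp_right (.head hab)
  have mem_of_reaches {a} : (∃ b ∈ S, ReflTransGen R a b) → ∃ n, a ∈ N n := by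
    rintro ⟨b, hb, hab⟩
    induction hab using ReflTransGen.head_induction_on with
    | refl => exact ⟨0, hb⟩
    | head h _ ih => exact ih.imp' (· + 1) fun n hn => N_succ n ▸ ⟨_, hn, h⟩
  let ρ (a : α) : ℕ := sInf {n | a ∈ N n}
  have step (a : α) (haS : a ∉ S) (ha : ∃ b ∈ S, ReflTransGen R a b) :
      ∃ b, R a b ∧ (∃ c ∈ S, ReflTransGen R b c) ∧ ρ b < ρ a := by
    have mem_ρ : a ∈ N (ρ a) := Nat.sInf_mem (mem_of_reaches ha)
    obtain ⟨m, hm⟩ := Nat.exists_eq_succ_of_ne_zero fun h : ρ a = 0 => haS (by rwa [h] at mem_ρ)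
    rw [hm, Nat.succ_eq_add_one, N_succ] at mem_ρ
    obtain ⟨b, hb, hab⟩ := mem_ρ
    exact ⟨b, hab, reaches_of_mem hb, hm ▸ Nat.lt_succ_of_le (Nat.sInf_le hb)⟩
  choose! f hf using step
  exact ⟨f, ρ, hf⟩

theorem exists_parent_toward {V : Type*} {G : SimpleGraph V} (hG : G.Preconnected) {S : Set V}
    (hS : S.Nonempty) :
    ∃ (π : V → V) (ρ : V → ℕ), ∀ v ∉ S, G.Adj v (π v) ∧ ρ (π v) < ρ v := by
  obtain ⟨s, hs⟩ := hS
  obtain ⟨π, ρ, h⟩ := exists_descent G.Adj S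
  refine ⟨π, ρ, fun v hv => ?_⟩
  have := h v hv ⟨s, hs, (reachable_iff_reflTransGen v s).1 (hG v s)⟩
  exact ⟨this.1, this.2.2⟩

end Descent

/-- A rooted tree on the vertex set `X`, encoded by its parent function; the parent of the root is
a junk value. -/
structure RootedTree (X : Type*) where
  root : X
  parent : X → X
  exists_iterate_parent : ∀ x, ∃ n, parent^[n] x = root

namespace RootedTree

open Relation

variable {X : Type*} (τ : RootedTree X) {T U U' N N' M W : Set X} {v : X}

/-- The distance of a vertex from the root. -/
noncomputable def depth (x : X) : ℕ :=
  sInf {n | τ.parent^[n] x = τ.root}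

theorem depth_parent_lt (hv : v ≠ τ.root) : τ.depth (τ.parent v) < τ.depth v := by
  have hroot : τ.parent^[τ.depth v] v = τ.root := Nat.sInf_mem (τ.exists_iterate_parent v)
  obtain ⟨n, hn⟩ := Nat.exists_eq_succ_of_ne_zero fun h : τ.depth v = 0 => hv (by rwa [h] at hroot)
  rw [hn, Nat.succ_eq_add_one, Function.iterate_succ_apply] at hroot
  exact hn ▸ Nat.lt_succ_of_le (Nat.sInf_le hroot)

theorem parent_ne (hv : v ≠ τ.root) : τ.parent v ≠ v :=
  fun h => (h ▸ τ.depth_parent_lt hv).false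

theorem exists_topDown (F : X → Prop → Prop) :
    ∃ M : Set X, τ.root ∉ M ∧ ∀ v ≠ τ.root, v ∈ M ↔ F v (τ.parent v ∈ M) := by
  let M : X → Prop := (measure τ.depth).wf.fix fun v rec =>
    ∃ hv : v ≠ τ.root, F v (rec (τ.parent v) (τ.depth_parent_lt hv))
  have M_iff (v) : M v ↔ ∃ _ : v ≠ τ.root, F v (M (τ.parent v)) :=
    iff_of_eq (WellFounded.fix_eq ..)
  exact ⟨M, fun h => ((M_iff _).1 h).1 rfl, fun v hv => (M_iff v).trans (exists_prop_of_true hv)⟩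

/-! ### Routings -/

/-- Send a token from each vertex of `T` towards the root, where `U` is the set of vertices whose
edge to the parent carries a token. This is the set of tokens passing through `v`; a token is named
after the child of `v` it comes from, or `v` itself if it starts there. -/
def incoming (T U : Set X) (v : X) : Set X :=
  {c | c ∈ U ∧ τ.parent c = v ∨ c ∈ T ∧ c = v}

/-- Some descending path of vertices in `U` leads from `v` to a vertex of `T`. -/
def ReachesTerminal (T U : Set X) (v : X) : Prop :=
  ∃ t ∈ T, ReflTransGen (fun x y => y ∈ U ∧ τ.parent y = x) v t

/-- A rule telling which tokens move on to the parent, given on the union `U ∪ N` of subtrees only: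
the vertices in `U` pass one token on, those in `N` none, and the remaining tokens can be paired
up at every vertex. The last condition excludes that an edge carries a token starting nowhere. -/
structure IsPartialRouting (T U N : Set X) : Prop where
  root_notMem_up : τ.root ∉ U
  root_notMem_still : τ.root ∉ N
  disjoint : Disjoint U N
  mem_of_parent_mem : ∀ c ≠ τ.root, τ.parent c ∈ U ∪ N → c ∈ U ∪ N
  even_add_one : ∀ v ∈ U, Even ((τ.incoming T U v).encard + 1)
  even : ∀ v ∈ N, Even (τ.incoming T U v).encard
  reachesTerminal : ∀ v ∈ U, τ.ReachesTerminal T U v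

/-- A partial routing that decides about every vertex except for the root. -/
def IsRouting (T U : Set X) : Prop :=
  τ.IsPartialRouting T U (insert τ.root U)ᶜ

variable {τ}

theorem ReachesTerminal.mono (h : τ.ReachesTerminal T U v) (hU : U ⊆ U') :
    τ.ReachesTerminal T U' v :=
  h.imp fun _ ht => ht.imp_right <| ReflTransGen.mono (fun _ _ => And.imp_left (@hU _)) _ _

theorem ReachesTerminal.of_parent (h : τ.ReachesTerminal T U v) (hv : v ∈ U) :
    τ.ReachesTerminal T U (τ.parent v) :=
  h.imp fun _ ht => ht.imp_right <| ReflTransGen.head ⟨hv, rfl⟩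

theorem reachesTerminal_of_incoming_nonempty (hU : ∀ u ∈ U, τ.ReachesTerminal T U u)
    (hv : (τ.incoming T U v).Nonempty) : τ.ReachesTerminal T U v := by
  obtain ⟨c, ⟨hc, rfl⟩ | ⟨hc, rfl⟩⟩ := hv
  exacts [(hU c hc).of_parent hc, ⟨c, hc, .refl⟩]

theorem incoming_nonempty_of_not_even (hv : ¬ Even (τ.incoming T U v).encard) :
    (τ.incoming T U v).Nonempty := by
  rw [nonempty_iff_ne_empty]
  exact fun h => hv (by simp [h])

theorem incoming_nonempty_of_even_add_one (hv : Even ((τ.incoming T U v).encard + 1)) :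
    (τ.incoming T U v).Nonempty := by
  rw [nonempty_iff_ne_empty]
  intro h
  rw [h, encard_empty, zero_add, ← Nat.cast_one, even_natCast] at hv
  exact absurd hv (by decide)

theorem incoming_eq_of_subset (hU : U ⊆ U') (h : ∀ c ∈ U', τ.parent c = v → c ∈ U) :
    τ.incoming T U' v = τ.incoming T U v := by
  ext c
  exact or_congr_left ⟨fun hc => ⟨h c hc.1 hc.2, hc.2⟩, fun hc => hc.imp_left (@hU c)⟩

namespace IsPartialRouting

theorem incoming_eq (h : τ.IsPartialRouting T U N) (hU : U ⊆ U') (hroot : τ.root ∉ U')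
    (hN : Disjoint U' N) (hv : v ∈ U ∪ N) : τ.incoming T U' v = τ.incoming T U v :=
  incoming_eq_of_subset hU fun c hc hcv =>
    (h.mem_of_parent_mem c (ne_of_mem_of_not_mem hc hroot) (hcv ▸ hv)).resolve_right
      (disjoint_left.1 hN hc)

theorem extend (h : τ.IsPartialRouting T U N) (hU : U ⊆ U') (hN : N ⊆ N')
    (hrootU : τ.root ∉ U') (hrootN : τ.root ∉ N') (hdisj : Disjoint U' N')
    (hparent : ∀ c ≠ τ.root, τ.parent c ∈ (U' ∪ N') \ (U ∪ N) → c ∈ U' ∪ N')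
    (hodd : ∀ v ∈ U', v ∉ U ∪ N → Even ((τ.incoming T U' v).encard + 1))
    (heven : ∀ v ∈ N', v ∉ U ∪ N → Even (τ.incoming T U' v).encard)
    (hreach : ∀ v ∈ U', v ∉ U ∪ N → τ.ReachesTerminal T U' v) :
    τ.IsPartialRouting T U' N' := by
  have incoming_eq : ∀ v ∈ U ∪ N, τ.incoming T U' v = τ.incoming T U v :=
    fun v => h.incoming_eq hU hrootU (hdisj.mono_right hN)
  have mem_U {v} (hv : v ∈ U') (hv' : v ∈ U ∪ N) : v ∈ U :=
    hv'.resolve_right fun hvN => disjoint_left.1 hdisj hv (hN hvN)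
  have mem_N {v} (hv : v ∈ N') (hv' : v ∈ U ∪ N) : v ∈ N :=
    hv'.resolve_left fun hvU => disjoint_left.1 hdisj (hU hvU) hv
  refine ⟨hrootU, hrootN, hdisj, fun c hc hcp => ?_, fun v hv => ?_, fun v hv => ?_,
    fun v hv => ?_⟩
  · by_cases hold : τ.parent c ∈ U ∪ N
    exacts [union_subset_union hU hN (h.mem_of_parent_mem c hc hold), hparent c hc ⟨hcp, hold⟩]
  · by_cases hold : v ∈ U ∪ N
    exacts [incoming_eq v hold ▸ h.even_add_one v (mem_U hv hold), hodd v hv hold]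
  · by_cases hold : v ∈ U ∪ N
    exacts [incoming_eq v hold ▸ h.even v (mem_N hv hold), heven v hv hold]
  · by_cases hold : v ∈ U ∪ N
    exacts [(h.reachesTerminal v (mem_U hv hold)).mono hU, hreach v hv hold]

end IsPartialRouting

theorem isPartialRouting_iUnion_of_isChain {C : Set (Set X × Set X)} (hchain : IsChain (· ≤ ·) C)
    (hC : ∀ p ∈ C, τ.IsPartialRouting T p.1 p.2) :
    τ.IsPartialRouting T (⋃ p ∈ C, p.1) (⋃ p ∈ C, p.2) := by
  have le_up {p} (hp : p ∈ C) : p.1 ⊆ ⋃ p ∈ C, p.1 := subset_biUnion_of_mem hp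
  have le_still {p} (hp : p ∈ C) : p.2 ⊆ ⋃ p ∈ C, p.2 := subset_biUnion_of_mem (u := Prod.snd) hp
  have root_notMem : τ.root ∉ ⋃ p ∈ C, p.1 := by
    simpa using fun U N hp => (hC (U, N) hp).root_notMem_up
  have disjoint_still {q} (hq : q ∈ C) : Disjoint (⋃ p ∈ C, p.1) q.2 := by
    refine disjoint_iUnion₂_left.2 fun p hp => ?_
    rcases hchain.total hp hq with hpq | hqp
    exacts [(hC q hq).disjoint.mono_left hpq.1, (hC p hp).disjoint.mono_right hqp.2]
  have incoming_eq {p v} (hp : p ∈ C) (hv : v ∈ p.1 ∪ p.2) :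
      τ.incoming T (⋃ p ∈ C, p.1) v = τ.incoming T p.1 v :=
    (hC p hp).incoming_eq (le_up hp) root_notMem (disjoint_still hp) hv
  refine ⟨root_notMem, by simpa using fun U N hp => (hC (U, N) hp).root_notMem_still,
    disjoint_iUnion₂_right.2 fun p hp => disjoint_still hp, fun c hc hcp => ?_, fun v hv => ?_,
    fun v hv => ?_, fun v hv => ?_⟩
  · obtain ⟨p, hp, hcp⟩ : ∃ p ∈ C, τ.parent c ∈ p.1 ∪ p.2 := by
      simpa only [← iUnion_union_distrib, mem_iUnion₂, exists_prop] using hcp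
    exact union_subset_union (le_up hp) (le_still hp) ((hC p hp).mem_of_parent_mem c hc hcp)
  all_goals obtain ⟨p, hp, hv⟩ := mem_iUnion₂.1 hv
  · exact incoming_eq hp (.inl hv) ▸ (hC p hp).even_add_one v hv
  · exact incoming_eq hp (.inr hv) ▸ (hC p hp).even v hv
  · exact ((hC p hp).reachesTerminal v hv).mono (le_up hp)

theorem exists_maximal_isPartialRouting (τ : RootedTree X) (T : Set X) :
    ∃ U N, τ.IsPartialRouting T U N ∧
      ∀ U' N', τ.IsPartialRouting T U' N' → U ⊆ U' → N ⊆ N' → U' ∪ N' ⊆ U ∪ N := by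
  obtain ⟨⟨U, N⟩, hUN, hmax⟩ := zorn_le₀ {p : Set X × Set X | τ.IsPartialRouting T p.1 p.2}
    fun C hC hchain => ⟨(⋃ p ∈ C, p.1, ⋃ p ∈ C, p.2),
      isPartialRouting_iUnion_of_isChain hchain hC, fun p hp =>
        ⟨subset_biUnion_of_mem (u := Prod.fst) hp, subset_biUnion_of_mem (u := Prod.snd) hp⟩⟩
  refine ⟨U, N, hUN, fun U' N' h hU hN => ?_⟩
  have := hmax (y := (U', N')) h ⟨hU, hN⟩
  exact union_subset_union this.1 this.2

/-! ### Existence of routings -/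

variable (τ) in
/-- The vertices, other than the root, about which a partial routing `U`, `N` does not decide. -/
def undecided (U N : Set X) : Set X :=
  (insert τ.root (U ∪ N))ᶜ

theorem mem_undecided : v ∈ τ.undecided U N ↔ v ≠ τ.root ∧ v ∉ U ∪ N :=
  not_or

theorem incoming_insert_self (hv : v ≠ τ.root) :
    τ.incoming T (insert v U) v = τ.incoming T U v :=
  incoming_eq_of_subset (subset_insert v U) fun _ hc hcv => hc.resolve_left <| by
    rintro rfl
    exact τ.parent_ne hv hcv

namespace IsPartialRouting

variable (h : τ.IsPartialRouting T U N)
  (hmax : ∀ U' N', τ.IsPartialRouting T U' N' → U ⊆ U' → N ⊆ N' → U' ∪ N' ⊆ U ∪ N)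

include h

theorem extend_still (hM : M ⊆ τ.undecided U N)
    (hparent : ∀ c ∈ τ.undecided U N, τ.parent c ∈ M → c ∈ M)
    (heven : ∀ v ∈ M, Even (τ.incoming T U v).encard) :
    τ.IsPartialRouting T U (N ∪ M) := by
  refine h.extend subset_rfl subset_union_left h.root_notMem_up ?_ ?_ ?_ ?_ ?_ ?_
  · exact fun hroot => hroot.elim h.root_notMem_still fun hroot => (hM hroot).elim (.inl rfl)
  · exact h.disjoint.union_right <| disjoint_right.2 fun v hv hvU => (hM hv).elim (.inr (.inl hvU))
  · rintro c hc ⟨hcM, hcUN⟩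
    rw [← union_assoc] at hcM ⊢
    by_contra hcM'
    exact hcM' (.inr (hparent c (not_or.2 ⟨hc, fun hc => hcM' (.inl hc)⟩)
      (hcM.resolve_left hcUN)))
  · exact fun v hv hv' => (hv' (.inl hv)).elim
  · exact fun v hv hv' => heven v (hv.resolve_left fun hv => hv' (.inr hv))
  · exact fun v hv hv' => (hv' (.inl hv)).elim

theorem extend_up (hv : v ∈ τ.undecided U N) (hparent : ∀ c ∈ τ.undecided U N, τ.parent c ≠ v)
    (hodd : ¬ Even (τ.incoming T U v).encard) : τ.IsPartialRouting T (insert v U) N := by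
  obtain ⟨hvroot, hvUN⟩ := mem_undecided.1 hv
  have eq_v {w} (hw : w ∈ insert v U) (hwUN : w ∉ U ∪ N) : w = v :=
    hw.resolve_right fun hw => hwUN (.inl hw)
  refine h.extend (subset_insert v U) subset_rfl ?_ h.root_notMem_still ?_ ?_ ?_ ?_ ?_
  · exact not_or.2 ⟨hvroot.symm, h.root_notMem_up⟩
  · exact disjoint_insert_left.2 ⟨fun hvN => hvUN (.inr hvN), h.disjoint⟩
  · rintro c hc ⟨hcv, hcUN⟩
    rw [insert_union] at hcv ⊢
    by_contra hc'
    exact hparent c (not_or.2 ⟨hc, fun hc => hc' (.inr hc)⟩) (hcv.resolve_right hcUN)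
  · intro w hw hwUN
    rw [eq_v hw hwUN, incoming_insert_self hvroot]
    exact even_add_one_of_not_even hodd
  · exact fun w hw hwUN => (hwUN (.inr hw)).elim
  · intro w hw hwUN
    rw [eq_v hw hwUN]
    exact (reachesTerminal_of_incoming_nonempty h.reachesTerminal
      (incoming_nonempty_of_not_even hodd)).mono (subset_insert v U)

include hmax

theorem exists_undecided_child (hv : v ∈ τ.undecided U N) :
    ∃ c ∈ τ.undecided U N, τ.parent c = v := by
  by_contra! hchild
  have hvUN := (mem_undecided.1 hv).2
  by_cases heven : Even (τ.incoming T U v).encard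
  · have := h.extend_still (singleton_subset_iff.2 hv) (fun c hc hcv => absurd hcv (hchild c hc))
      (fun w hw => by rwa [mem_singleton_iff.1 hw])
    exact hvUN (hmax _ _ this subset_rfl subset_union_left (.inr (.inr rfl)))
  · have := h.extend_up hv hchild heven
    exact hvUN (hmax _ _ this (subset_insert v U) subset_rfl (.inl (.inl rfl)))

theorem exists_undecided_descendant_not_even (hv : v ∈ τ.undecided U N) :
    ∃ w ∈ {w | ¬ Even (τ.incoming T U w).encard},
      ReflTransGen (fun x y => y ∈ τ.undecided U N ∧ τ.parent y = x) v w := by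
  by_contra! heven
  let M : Set X := {w | ReflTransGen (fun x y => y ∈ τ.undecided U N ∧ τ.parent y = x) v w}
  have hM : M ⊆ τ.undecided U N := fun w hw => by
    rcases ReflTransGen.cases_tail hw with rfl | ⟨_, _, hw, _⟩ <;> assumption
  have := h.extend_still hM (fun c hc hcM => ReflTransGen.tail hcM ⟨hc, rfl⟩)
    (fun w hw => not_not.1 fun hw' => heven w hw' hw)
  exact (mem_undecided.1 hv).2 (hmax _ _ this subset_rfl subset_union_left (.inr (.inr .refl)))

theorem exists_descending_child :
    ∃ (κ : X → X) (ρ : X → ℕ), ∀ v ∈ τ.undecided U N, κ v ∈ τ.undecided U N ∧ τ.parent (κ v) = v ∧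
      (Even (τ.incoming T U v).encard → ρ (κ v) < ρ v) := by
  obtain ⟨f, ρ, hf⟩ := exists_descent (fun x y => y ∈ τ.undecided U N ∧ τ.parent y = x)
    {w | ¬ Even (τ.incoming T U w).encard}
  have exists_child (v) (hv : v ∈ τ.undecided U N) : ∃ c ∈ τ.undecided U N, τ.parent c = v ∧
      (Even (τ.incoming T U v).encard → ρ c < ρ v) := by
    by_cases heven : Even (τ.incoming T U v).encard
    · obtain ⟨⟨hmem, hparent⟩, -, hlt⟩ :=
        hf v (not_not.2 heven) (h.exists_undecided_descendant_not_even hmax hv)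
      exact ⟨f v, hmem, hparent, fun _ => hlt⟩
    · obtain ⟨c, hc, hcv⟩ := h.exists_undecided_child hmax hv
      exact ⟨c, hc, hcv, fun h => absurd h heven⟩
  choose! κ hκ using exists_child
  exact ⟨κ, ρ, hκ⟩

end IsPartialRouting

theorem exists_correction {F : Set X} (hroot : τ.root ∉ F) {κ : X → X}
    (hκ : ∀ v ∈ F, κ v ∈ F ∧ τ.parent (κ v) = v) (P : X → Prop) :
    ∃ M ⊆ F, (∀ v ∈ F, κ v ∈ M ↔ (v ∈ M ↔ P v)) ∧
      ∀ c ∈ M, τ.parent c ∈ F ∧ κ (τ.parent c) = c := by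
  obtain ⟨M, hrootM, hM⟩ := τ.exists_topDown fun v parent_mem =>
    (τ.parent v ∈ F ∧ κ (τ.parent v) = v) ∧ (parent_mem ↔ P (τ.parent v))
  have of_mem {c} (hc : c ∈ M) : τ.parent c ∈ F ∧ κ (τ.parent c) = c :=
    ((hM c (ne_of_mem_of_not_mem hc hrootM)).1 hc).1
  refine ⟨M, fun c hc => ?_, fun v hv => ?_, fun c hc => of_mem hc⟩
  · rw [← (of_mem hc).2]
    exact (hκ _ (of_mem hc).1).1
  · obtain ⟨hmem, hparent⟩ := hκ v hv
    rw [hM _ (ne_of_mem_of_not_mem hmem hroot), hparent]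
    exact and_iff_right ⟨hv, rfl⟩

theorem incoming_union_of_child_notMem (h : ∀ c ∈ M, τ.parent c ≠ v) :
    τ.incoming T (U ∪ M) v = τ.incoming T U v :=
  incoming_eq_of_subset subset_union_left fun c hc hcv => hc.resolve_right fun hc => h c hc hcv

theorem encard_incoming_union_of_child_mem {k : X} (hroot : τ.root ∉ M) (hdisj : Disjoint U M)
    (hk : k ∈ M) (hkv : τ.parent k = v) (h : ∀ c ∈ M, τ.parent c = v → c = k) :
    (τ.incoming T (U ∪ M) v).encard = (τ.incoming T U v).encard + 1 := by
  have hkroot : k ≠ τ.root := ne_of_mem_of_not_mem hk hroot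
  have : τ.incoming T (U ∪ M) v = insert k (τ.incoming T U v) := by
    ext c
    constructor
    · rintro (⟨hc | hc, hcv⟩ | hc)
      exacts [.inr (.inl ⟨hc, hcv⟩), .inl (h c hc hcv), .inr (.inr hc)]
    · rintro (rfl | ⟨hc, hcv⟩ | hc)
      exacts [.inl ⟨.inr hk, hkv⟩, .inl ⟨.inl hc, hcv⟩, .inr hc]
  rw [this, encard_insert_of_notMem]
  rintro (hk' | hk')
  exacts [disjoint_left.1 hdisj hk'.1 hk, τ.parent_ne hkroot (hkv.trans hk'.2.symm)]

theorem IsPartialRouting.isRouting_union (h : τ.IsPartialRouting T U N)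
    (hM : M ⊆ τ.undecided U N) (hodd : ∀ v ∈ M, Even ((τ.incoming T (U ∪ M) v).encard + 1))
    (heven : ∀ v ∈ τ.undecided U N, v ∉ M → Even (τ.incoming T (U ∪ M) v).encard)
    (hreach : ∀ v ∈ M, τ.ReachesTerminal T (U ∪ M) v) : τ.IsRouting T (U ∪ M) := by
  refine h.extend subset_union_left ?_ ?_ (not_not.2 (.inl rfl)) ?_ ?_ ?_ ?_ ?_
  · rintro v hv (rfl | hvU | hvM)
    exacts [h.root_notMem_still hv, disjoint_left.1 h.disjoint hvU hv, hM hvM (.inr (.inr hv))]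
  · exact not_or.2 ⟨h.root_notMem_up, fun hroot => hM hroot (.inl rfl)⟩
  · exact disjoint_compl_right.mono_left (subset_insert _ _)
  · exact fun c hc _ => (em (c ∈ U ∪ M)).imp_right fun hcUM => not_or.2 ⟨hc, hcUM⟩
  · exact fun v hv hvUN => hodd v (hv.resolve_left fun hvU => hvUN (.inl hvU))
  · exact fun v hv hvUN => heven v (not_or.2 ⟨fun hroot => hv (.inl hroot), hvUN⟩)
      fun hvM => hv (.inr (.inr hvM))
  · exact fun v hv hvUN => hreach v (hv.resolve_left fun hvU => hvUN (.inl hvU))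

/-- A maximal partial routing, in which every undecided vertex has an undecided child `κ v`, is
completed from the top down: `κ v` passes a token on whenever the parity at `v` asks for it. The
rank `ρ` ensures that these tokens have an origin. -/
theorem IsPartialRouting.exists_isRouting (h : τ.IsPartialRouting T U N) {κ : X → X} {ρ : X → ℕ}
    (hκ : ∀ v ∈ τ.undecided U N, κ v ∈ τ.undecided U N ∧ τ.parent (κ v) = v ∧
      (Even (τ.incoming T U v).encard → ρ (κ v) < ρ v)) : ∃ U', τ.IsRouting T U' := by
  have root_notMem : τ.root ∉ τ.undecided U N := not_not.2 (.inl rfl)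
  obtain ⟨M, hM, mem_iff, eq_κ⟩ := exists_correction root_notMem
    (fun v hv => (hκ v hv).imp_right And.left) fun v => Even (τ.incoming T U v).encard
  have rootM : τ.root ∉ M := fun hroot => root_notMem (hM hroot)
  have disjUM : Disjoint U M := disjoint_right.2 fun v hv hvU => (hM hv) (.inr (.inl hvU))
  have incoming_of_mem {v} (hv : v ∈ τ.undecided U N) (hκv : κ v ∈ M) :
      (τ.incoming T (U ∪ M) v).encard = (τ.incoming T U v).encard + 1 :=
    encard_incoming_union_of_child_mem rootM disjUM hκv (hκ v hv).2.1 fun c hc hcv => by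
      rw [← hcv, (eq_κ c hc).2]
  have incoming_of_notMem {v} (hκv : κ v ∉ M) : τ.incoming T (U ∪ M) v = τ.incoming T U v :=
    incoming_union_of_child_notMem fun c hc hcv => hκv (by rwa [← hcv, (eq_κ c hc).2])
  have odd_of_mem {v} (hv : v ∈ M) : Even ((τ.incoming T (U ∪ M) v).encard + 1) := by
    by_cases heven : Even (τ.incoming T U v).encard
    · rwa [incoming_of_mem (hM hv) ((mem_iff v (hM hv)).2 (iff_of_true hv heven)),
        even_add_one_add_one_iff]
    · rw [incoming_of_notMem ((mem_iff v (hM hv)).not.2 fun h => heven (h.1 hv))]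
      exact even_add_one_of_not_even heven
  have even_of_notMem {v} (hv : v ∈ τ.undecided U N) (hvM : v ∉ M) :
      Even (τ.incoming T (U ∪ M) v).encard := by
    by_cases heven : Even (τ.incoming T U v).encard
    · rwa [incoming_of_notMem ((mem_iff v hv).not.2 fun h => hvM (h.2 heven))]
    · rw [incoming_of_mem hv ((mem_iff v hv).2 (iff_of_false hvM heven))]
      exact even_add_one_of_not_even heven
  have reaches {v} (hv : v ∈ M) : τ.ReachesTerminal T (U ∪ M) v := by
    induction hn : ρ v using Nat.strong_induction_on generalizing v with | _ n ih =>
    subst hn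
    obtain ⟨-, hparent, hlt⟩ := hκ v (hM hv)
    by_cases heven : Even (τ.incoming T U v).encard
    · have hκM : κ v ∈ M := (mem_iff v (hM hv)).2 (iff_of_true hv heven)
      exact hparent ▸ (ih _ (hlt heven) hκM rfl).of_parent (.inr hκM)
    · exact (reachesTerminal_of_incoming_nonempty h.reachesTerminal
        (incoming_nonempty_of_not_even heven)).mono subset_union_left
  exact ⟨U ∪ M, h.isRouting_union hM (fun v => odd_of_mem) (fun v => even_of_notMem)
    fun v => reaches⟩

theorem exists_isRouting (τ : RootedTree X) (T : Set X) : ∃ U, τ.IsRouting T U := by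
  obtain ⟨U, N, h, hmax⟩ := τ.exists_maximal_isPartialRouting T
  obtain ⟨κ, ρ, hκ⟩ := h.exists_descending_child hmax
  exact h.exists_isRouting hκ

/-! ### Correcting a routing at the root -/

theorem incoming_symmDiff_root (hU : τ.root ∉ U) :
    τ.incoming (T ∆ {τ.root}) U τ.root = τ.incoming T U τ.root ∆ {τ.root} := by
  ext c
  have : c = τ.root → c ∉ U := by
    rintro rfl
    exact hU
  simp only [incoming, mem_symmDiff, mem_singleton_iff, mem_ofPred_eq]
  tauto

theorem incoming_symmDiff_root_of_ne (hv : v ≠ τ.root) :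
    τ.incoming (T ∆ {τ.root}) U v = τ.incoming T U v := by
  ext c
  have : c = v → c ≠ τ.root := by
    rintro rfl
    exact hv
  simp only [incoming, mem_symmDiff, mem_singleton_iff, mem_ofPred_eq]
  tauto

theorem IsRouting.symmDiff_root (h : τ.IsRouting T U) :
    τ.IsRouting (T ∆ {τ.root}) U := by
  have ne_root {v : X} (hv : v ∈ U) : v ≠ τ.root := ne_of_mem_of_not_mem hv h.root_notMem_up
  refine ⟨h.root_notMem_up, h.root_notMem_still, h.disjoint, h.mem_of_parent_mem, fun v hv => ?_,
    fun v hv => ?_, fun v hv => ?_⟩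
  · rw [incoming_symmDiff_root_of_ne (ne_root hv)]
    exact h.even_add_one v hv
  · rw [incoming_symmDiff_root_of_ne fun h => hv (.inl h)]
    exact h.even v hv
  · obtain ⟨t, ht, hvt⟩ := h.reachesTerminal v hv
    have htU : t ∈ U := by
      rcases hvt.cases_tail with rfl | ⟨_, -, htU, -⟩
      exacts [hv, htU]
    exact ⟨t, .inl ⟨ht, ne_root htU⟩, hvt⟩

theorem incoming_symmDiff (hU : τ.root ∉ U) (hW : τ.root ∉ W) (v : X) :
    τ.incoming T (U ∆ W) v = τ.incoming T U v ∆ {c ∈ W | τ.parent c = v} := by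
  ext c
  have hc : c = v → c ∈ W → τ.parent c ≠ v := by
    rintro rfl hcW
    exact τ.parent_ne (ne_of_mem_of_not_mem hcW hW)
  have hc' : c = v → c ∈ U → τ.parent c ≠ v := by
    rintro rfl hcU
    exact τ.parent_ne (ne_of_mem_of_not_mem hcU hU)
  simp only [incoming, mem_symmDiff, mem_ofPred_eq]
  tauto

/-- The routing rule `U`, with the decision reversed at each vertex of a ray except the first. -/
def flipAlong (ray : ℕ → X) (U : Set X) : Set X :=
  U ∆ range fun n => ray (n + 1)

theorem mem_flipAlong_iff_of_notMem {ray : ℕ → X} (hv : v ∉ range ray) :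
    v ∈ flipAlong ray U ↔ v ∈ U := by
  have : v ∉ range fun n => ray (n + 1) := fun ⟨n, hn⟩ => hv ⟨n + 1, hn⟩
  simp only [flipAlong, mem_symmDiff, this, not_false_eq_true, and_true, false_and, or_false]

theorem succ_mem_flipAlong_iff {ray : ℕ → X} {n : ℕ} :
    ray (n + 1) ∈ flipAlong ray U ↔ ray (n + 1) ∉ U := by
  have : ray (n + 1) ∈ range fun n => ray (n + 1) := mem_range_self n
  simp only [flipAlong, mem_symmDiff, this, not_true_eq_false, and_false, true_and, false_or]

variable (τ) in
/-- An infinite path that starts at the root. -/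
structure IsRay (ray : ℕ → X) : Prop where
  zero : ray 0 = τ.root
  parent_succ : ∀ n, τ.parent (ray (n + 1)) = ray n
  injective : ray.Injective

namespace IsRay

variable {ray : ℕ → X} (hray : τ.IsRay ray)

include hray

theorem succ_ne_root (n : ℕ) : ray (n + 1) ≠ τ.root :=
  fun h => n.succ_ne_zero (hray.injective (h.trans hray.zero.symm))

theorem root_notMem : τ.root ∉ range fun n => ray (n + 1) :=
  fun ⟨n, hn⟩ => hray.succ_ne_root n hn

theorem incoming_flipAlong (hU : τ.root ∉ U) (n : ℕ) :
    τ.incoming T (flipAlong ray U) (ray n) =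
      τ.incoming T U (ray n) ∆ {ray (n + 1)} := by
  rw [flipAlong, incoming_symmDiff hU hray.root_notMem]
  congr 1
  ext c
  constructor
  · rintro ⟨⟨m, rfl⟩, hm⟩
    rw [hray.injective ((hray.parent_succ m).symm.trans hm)]
    rfl
  · rintro rfl
    exact ⟨mem_range_self n, hray.parent_succ n⟩

theorem incoming_flipAlong_of_notMem (hU : τ.root ∉ U) (hv : v ∉ range ray) :
    τ.incoming T (flipAlong ray U) v = τ.incoming T U v := by
  rw [flipAlong, incoming_symmDiff hU hray.root_notMem]
  have : {c ∈ range fun n => ray (n + 1) | τ.parent c = v} = ∅ := eq_empty_of_forall_notMem ?_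
  · rw [this, bot_eq_empty.symm, symmDiff_bot]
  rintro _ ⟨⟨n, rfl⟩, hn⟩
  exact hv ⟨n, (hray.parent_succ n).symm.trans hn⟩

theorem notMem_range_of_parent {c : X} (hc : c ≠ τ.root) (hcv : τ.parent c ∉ range ray) :
    c ∉ range ray := by
  rintro ⟨_ | n, rfl⟩
  exacts [hc hray.zero, hcv ⟨n, (hray.parent_succ n).symm⟩]

theorem reachesTerminal_flipAlong_of_notMem (hU : τ.root ∉ U) (hv : v ∉ range ray)
    (h : τ.ReachesTerminal T U v) :
    τ.ReachesTerminal T (flipAlong ray U) v := by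
  obtain ⟨t, ht, hvt⟩ := h
  refine ⟨t, ht, ?_⟩
  induction hvt using ReflTransGen.head_induction_on with
  | refl => exact .refl
  | head hxy _ ih =>
    obtain ⟨hy, rfl⟩ := hxy
    have hyray := hray.notMem_range_of_parent (ne_of_mem_of_not_mem hy hU) hv
    exact .head ⟨(mem_flipAlong_iff_of_notMem hyray).2 hy, rfl⟩ (ih hyray)

theorem root_notMem_flipAlong (hU : τ.root ∉ U) : τ.root ∉ flipAlong ray U := by
  rintro (⟨hroot, -⟩ | ⟨hroot, -⟩)
  exacts [hU hroot, hray.root_notMem hroot]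

theorem even_add_one_of_succ_mem (h : τ.IsRouting T U) {n : ℕ}
    (hn : ray (n + 1) ∈ flipAlong ray U) :
    Even ((τ.incoming T (flipAlong ray U) (ray (n + 1))).encard + 1) := by
  rw [hray.incoming_flipAlong h.root_notMem_up, even_encard_symmDiff_singleton_add_one_iff]
  exact h.even _ (not_or.2 ⟨hray.succ_ne_root n, succ_mem_flipAlong_iff.1 hn⟩)

theorem even_of_succ_notMem (h : τ.IsRouting T U) {n : ℕ}
    (hn : ray (n + 1) ∉ flipAlong ray U) :
    Even (τ.incoming T (flipAlong ray U) (ray (n + 1))).encard := by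
  rw [hray.incoming_flipAlong h.root_notMem_up, even_encard_symmDiff_singleton_iff]
  exact h.even_add_one _ (not_not.1 (succ_mem_flipAlong_iff.not.1 hn))

theorem reachesTerminal_flipAlong_succ (h : τ.IsRouting T U) {m n : ℕ}
    (hT : ray (n + 1 + m) ∈ T) (hn : ray (n + 1) ∈ flipAlong ray U) :
    τ.ReachesTerminal T (flipAlong ray U) (ray (n + 1)) := by
  induction m generalizing n with
  | zero => exact ⟨_, hT, .refl⟩
  | succ m ih =>
    by_cases hnext : ray (n + 2) ∈ flipAlong ray U
    · rw [← Nat.add_assoc, Nat.add_right_comm] at hT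
      exact hray.parent_succ (n + 1) ▸ (ih hT hnext).of_parent hnext
    · obtain ⟨c, ⟨hc, hcn⟩ | ⟨hc, rfl⟩⟩ :=
        incoming_nonempty_of_even_add_one (hray.even_add_one_of_succ_mem h hn)
      · have hcray : c ∉ range ray := by
          rintro ⟨_ | k, rfl⟩
          · exact hray.root_notMem_flipAlong h.root_notMem_up (hray.zero ▸ hc)
          · rw [hray.parent_succ] at hcn
            obtain rfl := hray.injective hcn
            exact hnext hc
        exact hcn ▸ (hray.reachesTerminal_flipAlong_of_notMem h.root_notMem_up hcray
          (h.reachesTerminal c ((mem_flipAlong_iff_of_notMem hcray).1 hc))).of_parent hc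
      · exact ⟨_, hc, .refl⟩

theorem isRouting_flipAlong (h : τ.IsRouting T U) (hT : (ray ⁻¹' T).Infinite) :
    τ.IsRouting T (flipAlong ray U) := by
  have root_notMem := hray.root_notMem_flipAlong h.root_notMem_up
  refine ⟨root_notMem, not_not.2 (.inl rfl), disjoint_compl_right.mono_left (subset_insert _ _),
    fun c hc _ => (em _).imp_right fun hcU => not_or.2 ⟨hc, hcU⟩, fun v hv => ?_,
    fun v hv => ?_, fun v hv => ?_⟩
  all_goals by_cases hvray : v ∈ range ray
  · obtain ⟨_ | n, rfl⟩ := hvray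
    exacts [absurd (hray.zero ▸ hv) root_notMem, hray.even_add_one_of_succ_mem h hv]
  · rw [hray.incoming_flipAlong_of_notMem h.root_notMem_up hvray]
    exact h.even_add_one v ((mem_flipAlong_iff_of_notMem hvray).1 hv)
  · obtain ⟨_ | n, rfl⟩ := hvray
    exacts [absurd (.inl hray.zero) hv, hray.even_of_succ_notMem h fun hn => hv (.inr hn)]
  · rw [hray.incoming_flipAlong_of_notMem h.root_notMem_up hvray]
    exact h.even v fun hvU => hv (hvU.imp_right (mem_flipAlong_iff_of_notMem hvray).2)
  · obtain ⟨_ | n, rfl⟩ := hvray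
    · exact absurd (hray.zero ▸ hv) root_notMem
    · obtain ⟨m, hm, hnm⟩ := hT.exists_gt n
      obtain ⟨k, rfl⟩ := Nat.exists_eq_add_of_le (Nat.succ_le_of_lt hnm)
      exact hray.reachesTerminal_flipAlong_succ h hm hv
  · exact hray.reachesTerminal_flipAlong_of_notMem h.root_notMem_up hvray
      (h.reachesTerminal v ((mem_flipAlong_iff_of_notMem hvray).1 hv))

theorem exists_isRouting_even_root (hT : (ray ⁻¹' T).Infinite) :
    ∃ U, τ.IsRouting T U ∧ Even (τ.incoming T U τ.root).encard := by
  obtain ⟨U, h⟩ := τ.exists_isRouting T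
  by_cases heven : Even (τ.incoming T U τ.root).encard
  · exact ⟨U, h, heven⟩
  · refine ⟨flipAlong ray U, hray.isRouting_flipAlong h hT, ?_⟩
    rw [← hray.zero, hray.incoming_flipAlong h.root_notMem_up, even_encard_symmDiff_singleton_iff,
      hray.zero]
    exact even_add_one_of_not_even heven

end IsRay

/-! ### The join carried out by a routing -/

theorem injOn_iterate_parent {t : X} {n : ℕ} (h : ∀ j < n, τ.parent^[j] t ≠ τ.root) :
    InjOn (fun j => τ.parent^[j] t) (Iic n) := by
  have anti : StrictAntiOn (fun j => τ.depth (τ.parent^[j] t)) (Iic n) :=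
    strictAntiOn_Iic_of_succ_lt fun j hj => by
      change τ.depth (τ.parent^[j + 1] t) < τ.depth (τ.parent^[j] t)
      rw [Function.iterate_succ_apply']
      exact τ.depth_parent_lt (h j hj)
  exact fun i hi j hj hij => anti.injOn hi hj (congrArg τ.depth hij)

variable (τ T U) in
/-- Assigns to each vertex `v` of `U` the starting point `o v` of the token that `v` passes on: this
token has travelled from `o v` up to `v`, and all vertices on its way passed it on. -/
structure IsOrigin (o : X → X) : Prop where
  self : ∀ t ∈ T, o t = t
  mem : ∀ v ∈ U, o v ∈ T
  exists_iterate : ∀ v ∈ U, ∃ n, τ.parent^[n] (o v) = v ∧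
    ∀ j ≤ n, τ.parent^[j] (o v) ∈ U ∧ o (τ.parent^[j] (o v)) = o v

theorem exists_isOrigin (h : ∀ v ∈ U, τ.ReachesTerminal T U v) : ∃ o, τ.IsOrigin T U o := by
  classical
  obtain ⟨κ, ρ, hκ⟩ := exists_descent (fun x y => y ∈ U ∧ τ.parent y = x) T
  let o : X → X := (measure ρ).wf.fix fun v rec =>
    if hv : v ∉ T ∧ ρ (κ v) < ρ v then rec (κ v) hv.2 else v
  have o_eq (v) : o v = if v ∉ T ∧ ρ (κ v) < ρ v then o (κ v) else v := WellFounded.fix_eq ..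
  have o_self (t) (ht : t ∈ T) : o t = t := (o_eq t).trans (if_neg fun h => h.1 ht)
  have spec (v) (hv : v ∈ U) : o v ∈ T ∧ ∃ n, τ.parent^[n] (o v) = v ∧
      ∀ j ≤ n, τ.parent^[j] (o v) ∈ U ∧ o (τ.parent^[j] (o v)) = o v := by
    induction hn : ρ v using Nat.strong_induction_on generalizing v with | _ n ih =>
    subst hn
    by_cases hvT : v ∈ T
    · rw [o_self v hvT]
      refine ⟨hvT, 0, rfl, fun j hj => ?_⟩
      obtain rfl := Nat.le_zero.1 hj
      exact ⟨hv, o_self v hvT⟩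
    · obtain ⟨⟨hκU, hparent⟩, -, hlt⟩ := hκ v hvT (h v hv)
      have o_κ : o v = o (κ v) := (o_eq v).trans (if_pos ⟨hvT, hlt⟩)
      obtain ⟨hmem, n, hn, hj⟩ := ih _ hlt (κ v) hκU rfl
      have hsucc : τ.parent^[n + 1] (o v) = v := by
        rw [Function.iterate_succ_apply', o_κ, hn, hparent]
      refine ⟨o_κ ▸ hmem, n + 1, hsucc, fun j hjn => ?_⟩
      rcases hjn.eq_or_lt with rfl | hjn
      · rw [hsucc]
        exact ⟨hv, rfl⟩
      · exact o_κ ▸ hj j (Nat.le_of_lt_succ hjn)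
  exact ⟨o, o_self, fun v hv => (spec v hv).1, fun v hv => (spec v hv).2⟩

namespace IsOrigin

variable {o : X → X} (ho : τ.IsOrigin T U o) (hU : τ.root ∉ U)

include ho

theorem mem_of_mem_incoming {c : X} (hc : c ∈ τ.incoming T U v) : o c ∈ T := by
  rcases hc with ⟨hc, -⟩ | ⟨hc, rfl⟩
  exacts [ho.mem c hc, (ho.self c hc).symm ▸ hc]

-- For `n = 0` the token starts at `v` and `n - 1 = 0`.
theorem exists_iterate_of_mem_incoming {c : X} (hc : c ∈ τ.incoming T U v) :
    ∃ n, τ.parent^[n] (o c) = v ∧ τ.parent^[n - 1] (o c) = c ∧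
      ∀ j < n, τ.parent^[j] (o c) ∈ U ∧ o (τ.parent^[j] (o c)) = o c := by
  rcases hc with ⟨hc, rfl⟩ | ⟨hc, rfl⟩
  · obtain ⟨n, hn, hj⟩ := ho.exists_iterate c hc
    exact ⟨n + 1, by rw [Function.iterate_succ_apply', hn], hn, fun j hjn => hj j (by omega)⟩
  · exact ⟨0, ho.self c hc, ho.self c hc, fun j hj => absurd hj j.not_lt_zero⟩

theorem mem_incoming_iterate {t : X} {n : ℕ} (ht : t ∈ T)
    (hj : ∀ j < n, τ.parent^[j] t ∈ U ∧ o (τ.parent^[j] t) = t) :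
    ∃ c ∈ τ.incoming T U (τ.parent^[n] t), o c = t := by
  rcases n with _ | n
  · exact ⟨t, .inr ⟨ht, rfl⟩, ho.self t ht⟩
  · obtain ⟨hmem, horigin⟩ := hj n n.lt_succ_self
    exact ⟨_, .inl ⟨hmem, (Function.iterate_succ_apply' ..).symm⟩, horigin⟩

theorem exists_mem_incoming (hv : v ∈ U) : ∃ c ∈ τ.incoming T U v, o c = o v := by
  obtain ⟨n, hn, hj⟩ := ho.exists_iterate v hv
  have := ho.mem_incoming_iterate (ho.mem v hv) fun j hjn => hj j hjn.le
  rwa [hn] at this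

include hU

theorem injOn_incoming (v : X) : InjOn o (τ.incoming T U v) := by
  intro c hc d hd hcd
  obtain ⟨m, hm, hmc, hmU⟩ := ho.exists_iterate_of_mem_incoming hc
  obtain ⟨n, hn, hnd, hnU⟩ := ho.exists_iterate_of_mem_incoming hd
  rw [← hcd] at hn hnd hnU
  have hinj := τ.injOn_iterate_parent (t := o c) (n := max m n) fun j hj =>
    ne_of_mem_of_not_mem ((lt_max_iff.1 hj).elim (hmU j · |>.1) (hnU j · |>.1)) hU
  have : m = n := hinj (le_max_left m n) (le_max_right m n) (hm.trans hn.symm)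
  rw [← hmc, ← hnd, this]

theorem exists_travel_length :
    ∃ len : X → ℕ, (∀ t, ∀ j < len t, τ.parent^[j] t ∈ U ∧ o (τ.parent^[j] t) = t) ∧
      ∀ t ∈ T, ∀ v, τ.parent^[len t] t = v ↔ t ∈ o '' τ.incoming T U v ∧ ¬ (v ∈ U ∧ o v = t) := by
  classical
  have exists_not (t : X) : ∃ n, ¬ (τ.parent^[n] t ∈ U ∧ o (τ.parent^[n] t) = t) := by
    obtain ⟨n, hn⟩ := τ.exists_iterate_parent t
    exact ⟨n, fun h => hU (hn ▸ h.1)⟩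
  have len_min {t : X} : ∀ j < Nat.find (exists_not t),
      τ.parent^[j] t ∈ U ∧ o (τ.parent^[j] t) = t :=
    fun j hj => not_not.1 (Nat.find_min _ hj)
  refine ⟨fun t => Nat.find (exists_not t), fun t => len_min, fun t ht v => ⟨?_, ?_⟩⟩
  · rintro rfl
    exact ⟨ho.mem_incoming_iterate ht len_min, Nat.find_spec (exists_not t)⟩
  · rintro ⟨⟨c, hc, rfl⟩, hv⟩
    obtain ⟨n, rfl, -, hj⟩ := ho.exists_iterate_of_mem_incoming hc
    have : Nat.find (exists_not (o c)) = n :=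
      (Nat.find_eq_iff _).2 ⟨hv, fun j hjn => not_not.2 (hj j hjn)⟩
    exact congrArg (fun n => τ.parent^[n] (o c)) this

end IsOrigin

theorem even_encard_image_incoming_sdiff {o : X → X} (ho : τ.IsOrigin T U o)
    (h : τ.IsRouting T U) (hroot : Even (τ.incoming T U τ.root).encard) (v : X) :
    Even {t ∈ o '' τ.incoming T U v | ¬ (v ∈ U ∧ o v = t)}.encard := by
  have hinj := ho.injOn_incoming h.root_notMem_up v
  by_cases hv : v ∈ U
  · have : {t ∈ o '' τ.incoming T U v | ¬ (v ∈ U ∧ o v = t)} = o '' τ.incoming T U v \ {o v} := by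
      ext t
      simp [hv, eq_comm]
    have hov : o v ∈ o '' τ.incoming T U v := ho.exists_mem_incoming hv
    rw [this, ← even_add_one_add_one_iff, encard_sdiff_singleton_add_one hov, hinj.encard_image]
    exact h.even_add_one v hv
  · have : {t ∈ o '' τ.incoming T U v | ¬ (v ∈ U ∧ o v = t)} = o '' τ.incoming T U v :=
      sep_eq_self_iff_mem_true.2 fun t _ hvt => hv hvt.1
    rw [this, hinj.encard_image]
    by_cases hvroot : v = τ.root
    exacts [hvroot ▸ hroot, h.even v (not_or.2 ⟨hvroot, hv⟩)]

theorem exists_walk_iterate_parent {V : Type*} {G : SimpleGraph V} {f : X → V}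
    (hadj : ∀ x ≠ τ.root, G.Adj (f x) (f (τ.parent x))) (t : X) (n : ℕ)
    (hn : ∀ j < n, τ.parent^[j] t ≠ τ.root) :
    ∃ p : G.Walk (f t) (f (τ.parent^[n] t)), ∀ e ∈ p.edges, ∃ j < n,
      e = s(f (τ.parent^[j] t), f (τ.parent (τ.parent^[j] t))) := by
  induction n with
  | zero => exact ⟨.nil, by simp⟩
  | succ n ih =>
    obtain ⟨p, hp⟩ := ih fun j hj => hn j (hj.trans n.lt_succ_self)
    have hstep := hadj _ (hn n n.lt_succ_self)
    rw [Function.iterate_succ_apply']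
    refine ⟨p.concat hstep, fun e he => ?_⟩
    rw [Walk.edges_concat, List.concat_eq_append, List.mem_append, List.mem_singleton] at he
    rcases he with he | rfl
    exacts [(hp e he).imp fun j hj => hj.imp_left (·.trans n.lt_succ_self),
      ⟨n, n.lt_succ_self, rfl⟩]

theorem IsRouting.hasTJoin {V : Type*} {G : SimpleGraph V} {f : X → V} (h : τ.IsRouting T U)
    (hroot : Even (τ.incoming T U τ.root).encard)
    (hadj : ∀ x ≠ τ.root, G.Adj (f x) (f (τ.parent x)))
    (hedge : InjOn (fun x => s(f x, f (τ.parent x))) {τ.root}ᶜ) (hT : InjOn f T) :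
    G.HasTJoin (f '' T) := by
  obtain ⟨o, ho⟩ := exists_isOrigin h.reachesTerminal
  obtain ⟨len, passed_on, iterate_len_eq_iff⟩ := ho.exists_travel_length h.root_notMem_up
  choose w hw using fun t : T => exists_walk_iterate_parent hadj t.1 (len t) fun j hj =>
    ne_of_mem_of_not_mem (passed_on t j hj).1 h.root_notMem_up
  rw [image_eq_range]
  refine hasTJoin_of_walks_to hT.injective w (fun s t hst e hs ht => ?_) fun v => ?_
  · obtain ⟨i, hi, rfl⟩ := hw s e hs
    obtain ⟨j, hj, hij⟩ := hw t _ ht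
    obtain ⟨hi, hsi⟩ := passed_on s i hi
    obtain ⟨hj, htj⟩ := passed_on t j hj
    have := hedge (ne_of_mem_of_not_mem hi h.root_notMem_up)
      (ne_of_mem_of_not_mem hj h.root_notMem_up) hij
    exact hst (Subtype.ext (hsi.symm.trans (this ▸ htj)))
  · rw [← Subtype.val_injective.encard_image]
    convert even_encard_image_incoming_sdiff ho h hroot v using 2
    ext t
    constructor
    · rintro ⟨t, ht, rfl⟩
      exact (iterate_len_eq_iff t t.2 v).1 ht
    · intro ht
      have htT : t ∈ T := by
        obtain ⟨c, hc, rfl⟩ := ht.1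
        exact ho.mem_of_mem_incoming hc
      exact ⟨⟨t, htT⟩, (iterate_len_eq_iff t htT v).2 ht, rfl⟩

end RootedTree

/-! ### 2-edge-connectivity -/

section EdgeReachable

variable {V : Type*} {G : SimpleGraph V} {u v w x y : V}

theorem isEdgeReachable_two_of_twoEdgeConnected (hG : G.TwoEdgeConnected) (u v : V) :
    G.IsEdgeReachable 2 u v := by
  refine isEdgeReachable_two.2 fun e => ?_
  by_cases he : e ∈ G.edgeSet
  · exact (hG.2 e he).preconnected u v
  · rw [deleteEdges_eq_self.2 (disjoint_singleton_right.2 he)]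
    exact hG.1.preconnected u v

theorem exists_walk_to_first_hit (S : Set V) (p : G.Walk u v) (hv : v ∈ S) :
    ∃ r ∈ S, ∃ q : G.Walk u r, q.edges ⊆ p.edges ∧ ∀ e ∈ q.edges, ∃ x ∈ e, x ∉ S := by
  induction p with
  | nil => exact ⟨_, hv, .nil, by simp⟩
  | @cons u w v h p ih =>
    by_cases hu : u ∈ S
    · exact ⟨u, hu, .nil, by simp⟩
    · obtain ⟨r, hr, q, hqp, hq⟩ := ih hv
      refine ⟨r, hr, .cons h q, List.cons_subset_cons _ hqp, ?_⟩
      rw [Walk.edges_cons, List.forall_mem_cons]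
      exact ⟨⟨u, Sym2.mem_mk_left u w, hu⟩, hq⟩

theorem disjoint_edges_concat {D : G.Walk x y} {B : G.Walk u v} (h : G.Adj v w) :
    D.edges.Disjoint (B.concat h).edges ↔ D.edges.Disjoint B.edges ∧ s(v, w) ∉ D.edges := by
  rw [Walk.edges_concat, List.concat_eq_append, List.disjoint_append_right, List.disjoint_singleton]

theorem exists_edgeDisjoint_walks_of_mem_edges (hvw : G.Adj v w) {A B : G.Walk u v}
    (hA : A.IsPath) (hAB : A.edges.Disjoint B.edges) (he : s(v, w) ∈ A.edges) :
    ∃ A B : G.Walk u w, A.edges.Disjoint B.edges := by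
  classical
  have hw := A.snd_mem_support_of_mem_edges he
  refine ⟨A.takeUntil w hw, B.concat hvw, (disjoint_edges_concat hvw).2
    ⟨List.disjoint_of_subset_left (A.edges_takeUntil_subset_edges hw) hAB, fun he => ?_⟩⟩
  exact Walk.endpoint_notMem_support_takeUntil hA hw hvw.ne (Walk.fst_mem_support_of_mem_edges _ he)

theorem exists_edgeDisjoint_walks_of_adj (hvw : G.Adj v w)
    (hbridge : (G.deleteEdges {s(v, w)}).Reachable w v) {A B : G.Walk u v} (hA : A.IsPath)
    (hB : B.IsPath) (hAB : A.edges.Disjoint B.edges) :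
    ∃ A B : G.Walk u w, A.edges.Disjoint B.edges := by
  classical
  by_cases heA : s(v, w) ∈ A.edges
  · exact exists_edgeDisjoint_walks_of_mem_edges hvw hA hAB heA
  by_cases heB : s(v, w) ∈ B.edges
  · exact exists_edgeDisjoint_walks_of_mem_edges hvw hB hAB.symm heB
  obtain ⟨p, hp⟩ := reachable_deleteEdges_iff_exists_walk.1 hbridge
  obtain ⟨r, hr, q, hqp, hq⟩ :=
    exists_walk_to_first_hit {x | x ∈ A.support ∨ x ∈ B.support} p (.inl A.end_mem_support)
  have reroute {A B : G.Walk u v} (hAB : A.edges.Disjoint B.edges) (heA : s(v, w) ∉ A.edges)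
      (hqB : ∀ e ∈ q.edges, ∃ x ∈ e, x ∉ B.support) (hr : r ∈ A.support) :
      ∃ A B : G.Walk u w, A.edges.Disjoint B.edges := by
    have hsub := A.edges_takeUntil_subset_edges hr
    refine ⟨(A.takeUntil r hr).append q.reverse, B.concat hvw, (disjoint_edges_concat hvw).2 ?_⟩
    simp only [Walk.edges_append, Walk.edges_reverse, List.disjoint_append_left, List.mem_append,
      List.mem_reverse]
    refine ⟨⟨List.disjoint_of_subset_left hsub hAB, fun e he heB => ?_⟩,
      not_or.2 ⟨fun h => heA (hsub h), fun h => hp (hqp h)⟩⟩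
    obtain ⟨x, hx, hxB⟩ := hqB e (List.mem_reverse.1 he)
    exact hxB (B.mem_support_of_mem_edges heB hx)
  rcases hr with hr | hr
  · exact reroute hAB heA (fun e he => (hq e he).imp fun _ => And.imp_right (mt .inr)) hr
  · exact reroute hAB.symm heB (fun e he => (hq e he).imp fun _ => And.imp_right (mt .inl)) hr

theorem exists_edgeDisjoint_walks (p : G.Walk v u)
    (hp : ∀ x ∈ p.support, G.IsEdgeReachable 2 x u) :
    ∃ A B : G.Walk u v, A.edges.Disjoint B.edges := by
  classical
  induction p with
  | nil => exact ⟨.nil, .nil, by simp⟩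
  | @cons w v u h p ih =>
    rw [Walk.support_cons, List.forall_mem_cons] at hp
    obtain ⟨A, B, hAB⟩ := ih hp.2
    have hwv : G.IsEdgeReachable 2 w v := hp.1.trans (hp.2 v p.start_mem_support).symm
    exact exists_edgeDisjoint_walks_of_adj h.symm (isEdgeReachable_two.1 hwv _) A.bypass_isPath
      B.bypass_isPath <| List.disjoint_of_subset_left A.edges_bypass_subset_edges <|
        List.disjoint_of_subset_right B.edges_bypass_subset_edges hAB

theorem exists_edgeDisjoint_paths (h : G.IsEdgeReachable 2 u v) :
    ∃ A B : G.Walk u v, A.IsPath ∧ B.IsPath ∧ A.edges.Disjoint B.edges := by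
  classical
  obtain ⟨p, hp⟩ := (h.symm.reachable two_ne_zero).exists_isPath
  obtain ⟨A, B, hAB⟩ := exists_edgeDisjoint_walks p fun x hx =>
    hp.isTrail.isEdgeReachable_two_of_isEdgeReachable_two h.symm hx p.end_mem_support
  exact ⟨A.bypass, B.bypass, A.bypass_isPath, B.bypass_isPath,
    List.disjoint_of_subset_left A.edges_bypass_subset_edges <|
      List.disjoint_of_subset_right B.edges_bypass_subset_edges hAB⟩

theorem exists_subgraph_trail_through (h : G.IsEdgeReachable 2 u v) :
    ∃ K : G.Subgraph, K.edgeSet.Finite ∧ u ∈ K.verts ∧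
      ∀ z ∈ K.verts, ∃ q : G.Walk u z,
        q.IsTrail ∧ v ∈ q.support ∧ ∀ e ∈ q.edges, e ∈ K.edgeSet := by
  classical
  obtain ⟨A, B, hA, hB, hAB⟩ := exists_edgeDisjoint_paths h
  have go_round {A B : G.Walk u v} (hA : A.IsPath) (hB : B.IsPath)
      (hAB : A.edges.Disjoint B.edges) {z : V} (hz : z ∈ A.support) :
      ∃ q : G.Walk u z, q.IsTrail ∧ v ∈ q.support ∧ ∀ e ∈ q.edges, e ∈ A.edges ∨ e ∈ B.edges := by
    have hsub := A.edges_dropUntil_subset_edges hz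
    refine ⟨B.append (A.dropUntil z hz).reverse, ?_, ?_, fun e he => ?_⟩
    · rw [Walk.isTrail_def, Walk.edges_append, Walk.edges_reverse, List.nodup_append']
      exact ⟨hB.isTrail.edges_nodup, List.nodup_reverse.2 (hA.dropUntil hz).isTrail.edges_nodup,
        fun e heB heA => hAB (hsub (List.mem_reverse.1 heA)) heB⟩
    · exact Walk.mem_support_append_iff .. |>.2 (.inl B.end_mem_support)
    · rw [Walk.edges_append, Walk.edges_reverse, List.mem_append, List.mem_reverse] at he
      exact he.symm.imp_left (@hsub e)
  refine ⟨A.toSubgraph ⊔ B.toSubgraph, ?_, .inl A.start_mem_verts_toSubgraph, fun z hz => ?_⟩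
  · rw [Subgraph.edgeSet_sup, Walk.edgeSet_toSubgraph, Walk.edgeSet_toSubgraph]
    exact A.edges.finite_toSet.union B.edges.finite_toSet
  · simp only [Subgraph.edgeSet_sup, Walk.edgeSet_toSubgraph]
    rcases hz with hz | hz <;> rw [Walk.mem_verts_toSubgraph] at hz
    · exact go_round hA hB hAB hz
    · obtain ⟨q, hq, hv, hsub⟩ := go_round hB hA hAB.symm hz
      exact ⟨q, hq, hv, fun e he => (hsub e he).symm⟩

end EdgeReachable

section Shrinking

variable {V : Type*} {G : SimpleGraph V} {X : Set V} {a b x y : V}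

theorem isEdgeReachable_two_deleteEdges (h : G.IsEdgeReachable 2 x y) {S : Set (Sym2 V)}
    (hS : ∀ e ∈ S, ∃ z ∈ e, ¬ G.IsEdgeReachable 2 x z) :
    (G.deleteEdges S).IsEdgeReachable 2 x y := by
  refine isEdgeReachable_two.2 fun e => ?_
  obtain ⟨p, hp⟩ := (isEdgeReachable_two.1 h e).exists_isPath
  rw [deleteEdges_deleteEdges, union_comm, ← deleteEdges_deleteEdges]
  refine (p.toDeleteEdges S fun f hf hfS => ?_).reachable
  obtain ⟨z, hzf, hz⟩ := hS f hfS
  have hpG := (hp.mapLe (deleteEdges_le {e})).isTrail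
  refine hz (hpG.isEdgeReachable_two_of_isEdgeReachable_two h (Walk.start_mem_support _) ?_)
  rw [Walk.support_mapLe_eq_support]
  exact p.mem_support_of_mem_edges hf hzf

theorem reachable_deleteEdges_or (c d : V) (h : G.Reachable x y) :
    ∃ z ∈ ({c, d, y} : Set V), (G.deleteEdges {s(c, d)}).Reachable x z := by
  obtain ⟨p⟩ := h
  obtain ⟨z, hz, q, -, hq⟩ := exists_walk_to_first_hit {c, d, y} p (by simp)
  refine ⟨z, hz, reachable_deleteEdges_iff_exists_walk.2 ⟨q, fun he => ?_⟩⟩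
  obtain ⟨w, hw, hwS⟩ := hq _ he
  rcases Sym2.mem_iff.1 hw with rfl | rfl <;> simp at hwS

theorem exists_infinite_pairwise_reachable_deleteEdges (hX : X.Infinite)
    (h : X.Pairwise G.Reachable) (e : Sym2 V) :
    ∃ Y ⊆ X, Y.Infinite ∧ Y.Pairwise (G.deleteEdges {e}).Reachable := by
  induction e with | _ c d
  obtain ⟨y, hy⟩ := hX.nonempty
  have cover : X ⊆ ⋃ z ∈ ({c, d, y} : Set V),
      {x ∈ X | (G.deleteEdges {s(c, d)}).Reachable x z} := by
    intro x hx
    have hxy : G.Reachable x y := (eq_or_ne x y).elim (· ▸ .rfl) (h hx hy)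
    obtain ⟨z, hz, hxz⟩ := reachable_deleteEdges_or c d hxy
    exact mem_biUnion hz ⟨hx, hxz⟩
  obtain ⟨z, -, hz⟩ : ∃ z ∈ ({c, d, y} : Set V),
      {x ∈ X | (G.deleteEdges {s(c, d)}).Reachable x z}.Infinite := by
    by_contra! hfin
    exact hX ((Finite.biUnion (toFinite _) hfin).subset cover)
  exact ⟨_, sep_subset _ _, hz, fun x hx x' hx' _ => hx.2.trans hx'.2.symm⟩

theorem exists_infinite_forall_pairwise_reachable_deleteEdges (hX : X.Infinite)
    (h : X.Pairwise G.Reachable) {S : Set (Sym2 V)} (hS : S.Finite) :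
    ∃ Y ⊆ X, Y.Infinite ∧ ∀ e ∈ S, Y.Pairwise (G.deleteEdges {e}).Reachable := by
  induction S, hS using Set.Finite.induction_on with
  | empty => exact ⟨X, Subset.rfl, hX, by simp⟩
  | @insert e S _ _ ih =>
    obtain ⟨Y, hYX, hY, hYS⟩ := ih
    obtain ⟨Z, hZY, hZ, hZe⟩ := exists_infinite_pairwise_reachable_deleteEdges hY (h.mono hYX) e
    exact ⟨Z, hZY.trans hYX, hZ, forall_mem_insert.2 ⟨hZe, fun e he => (hYS e he).mono hZY⟩⟩

theorem reachable_deleteEdges_of_reachable (hab : (G.deleteEdges {s(a, b)}).Reachable a b)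
    (h : G.Reachable x y) : (G.deleteEdges {s(a, b)}).Reachable x y := by
  obtain ⟨p⟩ := h
  induction p with
  | nil => exact .rfl
  | @cons u v w h _ ih =>
    refine Reachable.trans ?_ ih
    by_cases he : s(u, v) = s(a, b)
    · rcases Sym2.eq_iff.1 he with ⟨rfl, rfl⟩ | ⟨rfl, rfl⟩
      exacts [hab, hab.symm]
    · exact Adj.reachable (deleteEdges_adj.2 ⟨h, he⟩)

theorem exists_infinite_pairwise_isEdgeReachable_deleteEdges_of_reachable (hX : X.Infinite)
    (h : X.Pairwise (G.IsEdgeReachable 2)) (hab : (G.deleteEdges {s(a, b)}).Reachable a b) :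
    ∃ Y ⊆ X, Y.Infinite ∧ Y.Pairwise ((G.deleteEdges {s(a, b)}).IsEdgeReachable 2) := by
  obtain ⟨p⟩ := hab
  obtain ⟨Y, hYX, hY, hYp⟩ := exists_infinite_forall_pairwise_reachable_deleteEdges hX
    (h.imp fun x y hxy => isEdgeReachable_two.1 hxy _) p.edges.finite_toSet
  refine ⟨Y, hYX, hY, fun x hx y hy hxy => isEdgeReachable_two.2 fun e => ?_⟩
  by_cases he : e ∈ p.edges
  · exact hYp e he hx hy hxy
  · have hp := (p.toDeleteEdge e he).reachable
    rw [deleteEdges_deleteEdges, union_comm, ← deleteEdges_deleteEdges] at hp ⊢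
    exact reachable_deleteEdges_of_reachable hp (isEdgeReachable_two.1 (h (hYX hx) (hYX hy) hxy) e)

theorem exists_infinite_pairwise_isEdgeReachable_deleteEdges_singleton (hX : X.Infinite)
    (h : X.Pairwise (G.IsEdgeReachable 2)) (e : Sym2 V) :
    ∃ Y ⊆ X, Y.Infinite ∧ Y.Pairwise ((G.deleteEdges {e}).IsEdgeReachable 2) := by
  induction e with | _ a b
  by_cases hab : G.IsEdgeReachable 2 a b
  · exact exists_infinite_pairwise_isEdgeReachable_deleteEdges_of_reachable hX h
      (isEdgeReachable_two.1 hab _)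
  · refine ⟨X, Subset.rfl, hX, fun x hx y hy hxy =>
      isEdgeReachable_two_deleteEdges (h hx hy hxy) ?_⟩
    rintro _ rfl
    by_contra! hx
    exact hab ((hx a (Sym2.mem_mk_left a b)).symm.trans (hx b (Sym2.mem_mk_right a b)))

theorem exists_infinite_pairwise_isEdgeReachable_deleteEdges (hX : X.Infinite)
    (h : X.Pairwise (G.IsEdgeReachable 2)) {S : Set (Sym2 V)} (hS : S.Finite) :
    ∃ Y ⊆ X, Y.Infinite ∧ Y.Pairwise ((G.deleteEdges S).IsEdgeReachable 2) := by
  induction S, hS using Set.Finite.induction_on with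
  | empty => exact ⟨X, Subset.rfl, hX, by simpa using h⟩
  | @insert e S _ _ ih =>
    obtain ⟨Y, hYX, hY, hYS⟩ := ih
    obtain ⟨Z, hZY, hZ, hZe⟩ :=
      exists_infinite_pairwise_isEdgeReachable_deleteEdges_singleton hY hYS e
    rw [deleteEdges_deleteEdges, union_singleton] at hZe
    exact ⟨Z, hZY.trans hYX, hZ, hZe⟩

end Shrinking

/-! ### An infinite trail -/

section Trail

variable {V : Type*} {G : SimpleGraph V} {T : Set V} {u v x : V}

theorem exists_connecting_path {A D : Set V} (hu : u ∈ A) (hv : v ∈ D) (h : G.Reachable u v) :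
    ∃ a ∈ A, ∃ d ∈ D, ∃ p : G.Walk a d, p.IsPath ∧
      ∀ e ∈ p.edges, (∃ x ∈ e, x ∉ A) ∧ ∃ x ∈ e, x ∉ D := by
  classical
  obtain ⟨p⟩ := h.symm
  obtain ⟨a, ha, q, -, hqA⟩ := exists_walk_to_first_hit A p hu
  obtain ⟨d, hd, r, hrq, hrD⟩ := exists_walk_to_first_hit D q.reverse hv
  have hsub := r.edges_bypass_subset_edges
  refine ⟨a, ha, d, hd, r.bypass, r.bypass_isPath, fun e he => ⟨hqA e ?_, hrD e (hsub he)⟩⟩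
  simpa using hrq (hsub he)

theorem exists_trail_extension (hx : {t ∈ T | G.IsEdgeReachable 2 x t}.Infinite) {B : Set V}
    (hB : B.Finite) :
    ∃ (x' : V) (q : G.Walk x x'), q.IsTrail ∧ (∃ t ∈ T \ B, t ∈ q.support) ∧
      {t ∈ T | (G.deleteEdges q.edgeSet).IsEdgeReachable 2 x' t}.Infinite := by
  obtain ⟨t, ⟨htT, hxt⟩, htB⟩ := hx.exists_notMem_finite hB
  obtain ⟨K, hK, hxK, hq⟩ := exists_subgraph_trail_through hxt
  obtain ⟨Y, hYT, hY, hYK⟩ := exists_infinite_pairwise_isEdgeReachable_deleteEdges hx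
    (fun s hs t ht _ => hs.2.symm.trans ht.2) hK
  obtain ⟨y, hy⟩ := hY.nonempty
  obtain ⟨z, hz, x', hx', r, hr, hr_edges⟩ := exists_connecting_path hxK
    (D := {v | (G.deleteEdges K.edgeSet).IsEdgeReachable 2 y v}) (.refl y)
    ((hYT hy).2.reachable two_ne_zero)
  obtain ⟨q, hq, htq, hqK⟩ := hq z hz
  have hrK : ∀ e ∈ r.edges, e ∉ K.edgeSet := fun e he heK => by
    obtain ⟨v, hve, hv⟩ := (hr_edges e he).1
    exact hv (K.mem_verts_of_mem_edge heK hve)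
  refine ⟨x', q.append r, ?_, ⟨t, ⟨htT, htB⟩, ?_⟩, hY.mono fun s hs => ⟨(hYT hs).1, ?_⟩⟩
  · rw [Walk.isTrail_def, Walk.edges_append, List.nodup_append']
    exact ⟨hq.edges_nodup, hr.isTrail.edges_nodup, fun e heq her => hrK e her (hqK e heq)⟩
  · exact (Walk.mem_support_append_iff ..).2 (.inl htq)
  · have hys : (G.deleteEdges K.edgeSet).IsEdgeReachable 2 y s := by
      rcases eq_or_ne y s with rfl | hys
      exacts [.refl y, hYK hy hs hys]
    refine (isEdgeReachable_two_deleteEdges (S := r.edgeSet) (hx'.symm.trans hys) ?_).mono ?_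
    · intro e he
      obtain ⟨v, hve, hv⟩ := (hr_edges e he).2
      exact ⟨v, hve, fun h => hv (hx'.trans h)⟩
    · rw [deleteEdges_deleteEdges]
      refine deleteEdges_anti fun e he => ?_
      rw [Walk.mem_edgeSet, Walk.edges_append, List.mem_append] at he
      exact he.imp_left (hqK e)

theorem exists_limit {x : ℕ → V} (p : ∀ n, G.Walk u (x n))
    (hp : ∀ n, ∃ q : G.Walk (x n) (x (n + 1)), ¬ q.Nil ∧ p (n + 1) = (p n).append q) :
    ∃ W : ℕ → V, (∀ n, n ≤ (p n).length) ∧ ∀ n, ∀ k ≤ (p n).length, (p n).getVert k = W k := by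
  have lt_succ (n : ℕ) : (p n).length < (p (n + 1)).length := by
    obtain ⟨q, hq, hpq⟩ := hp n
    rw [hpq, Walk.length_append]
    exact Nat.lt_add_of_pos_right (Walk.not_nil_iff_lt_length.1 hq)
  have getVert_succ (n k : ℕ) (hk : k ≤ (p n).length) :
      (p (n + 1)).getVert k = (p n).getVert k := by
    obtain ⟨q, -, hpq⟩ := hp n
    rw [hpq, Walk.getVert_append']
    exact if_pos hk
  have le_length (n : ℕ) : n ≤ (p n).length := (strictMono_nat_of_lt_succ lt_succ).le_apply
  have agree (m n : ℕ) (hmn : m ≤ n) (k : ℕ) (hk : k ≤ (p m).length) :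
      (p n).getVert k = (p m).getVert k := by
    induction n, hmn using Nat.le_induction with
    | base => rfl
    | succ n hmn ih =>
      rw [getVert_succ n k (hk.trans ((strictMono_nat_of_lt_succ lt_succ).monotone hmn)), ih]
  refine ⟨fun k => (p k).getVert k, le_length, fun n k hk => ?_⟩
  rcases le_total k n with hkn | hnk
  exacts [agree k n hkn k (le_length k), (agree n k hnk k hk).symm]

theorem exists_trail_append {p : G.Walk u x} (hp : p.IsTrail)
    (hx : {t ∈ T | (G.deleteEdges p.edgeSet).IsEdgeReachable 2 x t}.Infinite) :
    ∃ (x' : V) (q : G.Walk x x'), (p.append q).IsTrail ∧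
      (∃ t ∈ T, t ∈ q.support ∧ t ∉ p.support) ∧
      {t ∈ T | (G.deleteEdges (p.append q).edgeSet).IsEdgeReachable 2 x' t}.Infinite := by
  obtain ⟨x', q, hq, ⟨t, ⟨htT, htp⟩, htq⟩, hx'⟩ :=
    exists_trail_extension hx (B := {v | v ∈ p.support}) p.support.finite_toSet
  refine ⟨x', q.mapLe (deleteEdges_le _), ?_, ⟨t, htT, by simpa using htq, htp⟩, ?_⟩
  · rw [Walk.isTrail_def, Walk.edges_append, List.nodup_append', Walk.edges_mapLe_eq_edges]
    exact ⟨hp.edges_nodup, hq.edges_nodup, fun e hep heq =>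
      (edgeSet_deleteEdges _ ▸ q.edges_subset_edgeSet heq).2 hep⟩
  · have : (p.append (q.mapLe (deleteEdges_le _))).edgeSet = p.edgeSet ∪ q.edgeSet := by
      ext e
      simp
    rwa [this, ← deleteEdges_deleteEdges]

theorem exists_trail_seq (hx : {t ∈ T | G.IsEdgeReachable 2 u t}.Infinite) :
    ∃ (x : ℕ → V) (p : ∀ n, G.Walk u (x n)), (∀ n, (p n).IsTrail) ∧
      ∀ n, ∃ q : G.Walk (x n) (x (n + 1)), p (n + 1) = (p n).append q ∧
        ∃ t ∈ T, t ∈ q.support ∧ t ∉ (p n).support := by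
  let P (s : Σ x, G.Walk u x) : Prop :=
    s.2.IsTrail ∧ {t ∈ T | (G.deleteEdges s.2.edgeSet).IsEdgeReachable 2 s.1 t}.Infinite
  have step (s : Subtype P) : ∃ s' : Subtype P, ∃ q, s'.1.2 = s.1.2.append q ∧
      ∃ t ∈ T, t ∈ q.support ∧ t ∉ s.1.2.support := by
    obtain ⟨x', q, hq, ht, hx'⟩ := exists_trail_append s.2.1 s.2.2
    exact ⟨⟨⟨x', s.1.2.append q⟩, hq, hx'⟩, q, rfl, ht⟩
  choose next h using step
  let s (n : ℕ) : Subtype P :=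
    n.rec ⟨⟨u, .nil⟩, .nil, by simpa [Walk.edgeSet] using hx⟩ fun _ => next
  exact ⟨fun n => (s n).1.1, fun n => (s n).1.2, fun n => (s n).2.1, fun n => h (s n)⟩

theorem exists_infinite_trail (hG : ∀ u v, G.IsEdgeReachable 2 u v) (hT : T.Infinite) :
    ∃ W : ℕ → V, (∀ n, G.Adj (W n) (W (n + 1))) ∧
      Function.Injective (fun n => s(W n, W (n + 1))) ∧ (T ∩ range W).Infinite := by
  obtain ⟨u, -⟩ := hT.nonempty
  obtain ⟨x, p, p_isTrail, hp⟩ := exists_trail_seq (G := G) (u := u) (by simpa [hG] using hT)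
  obtain ⟨W, le_length, getVert_eq⟩ := exists_limit p fun n => by
    obtain ⟨q, hpq, t, -, htq, htp⟩ := hp n
    refine ⟨q, fun hq => htp ?_, hpq⟩
    rw [Walk.nil_iff_support_eq.1 hq, List.mem_singleton] at htq
    exact htq ▸ (p n).end_mem_support
  have edge_eq {n N : ℕ} (h : n < N) : s(W n, W (n + 1)) =
      (p N).edges[n]'(by simpa using h.trans_le (le_length N)) := by
    have := le_length N
    rw [Walk.getElem_edges, getVert_eq N n (by omega), getVert_eq N (n + 1) (by omega)]
  refine ⟨W, fun n => ?_, fun m n hmn => ?_, ?_⟩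
  · rw [← mem_edgeSet, edge_eq n.lt_succ_self]
    exact (p (n + 1)).edges_subset_edgeSet (List.getElem_mem _)
  · have hm : m < max m n + 1 := by omega
    have hn : n < max m n + 1 := by omega
    simp only [edge_eq hm, edge_eq hn] at hmn
    exact (p_isTrail _).edges_nodup.getElem_inj_iff.1 hmn
  · choose q hpq t htT htq htp using hp
    have support_mono : Monotone fun n => {v | v ∈ (p n).support} :=
      monotone_nat_of_le_succ fun n v hv =>
        hpq n ▸ (Walk.mem_support_append_iff ..).2 (.inl hv)
    have ht (n : ℕ) : t n ∈ (p (n + 1)).support :=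
      hpq n ▸ (Walk.mem_support_append_iff ..).2 (.inr (htq n))
    have t_injective : t.Injective := .of_lt_imp_ne fun m n hmn h =>
      htp n (h ▸ support_mono hmn (ht m))
    refine infinite_of_injective_forall_mem t_injective fun n => ⟨htT n, ?_⟩
    obtain ⟨k, hk, hkn⟩ := Walk.mem_support_iff_exists_getVert.1 (ht n)
    exact ⟨k, (getVert_eq _ k hkn).symm.trans hk⟩

end Trail

/-! ### Rooted trees in graphs -/

theorem exists_iterate_eq_of_wellFounded {α : Type*} {r : α → α → Prop} (hr : WellFounded r)
    {f : α → α} {a : α} (h : ∀ x ≠ a, r (f x) x) (x : α) : ∃ n, f^[n] x = a := by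
  induction x using hr.induction with | _ x ih =>
  by_cases hx : x = a
  · exact ⟨0, hx⟩
  · exact (ih _ (h x hx)).imp' (· + 1) fun _ hn => hn

theorem injOn_sym2_mk_of_lt {α β : Type*} {f g : α → β} {ρ : β → ℕ} {S : Set α}
    (hf : InjOn f S) (h : ∀ a ∈ S, ρ (g a) < ρ (f a)) : InjOn (fun a => s(f a, g a)) S := by
  intro a ha b hb hab
  rcases Sym2.eq_iff.1 hab with ⟨hab, -⟩ | ⟨hab, hba⟩
  · exact hf ha hb hab
  · have := (hba ▸ h a ha).trans (hab ▸ h b hb)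
    exact absurd this (lt_irrefl _)

variable {V : Type*} {G : SimpleGraph V} {T : Set V} {W : ℕ → V}

theorem hasTJoin_or_hasTJoin_symmDiff_singleton (hG : G.Preconnected) (T : Set V) (r : V) :
    G.HasTJoin T ∨ G.HasTJoin (T ∆ {r}) := by
  obtain ⟨π, ρ, h⟩ := exists_parent_toward hG (singleton_nonempty r)
  let τ : RootedTree V :=
    ⟨r, π, exists_iterate_eq_of_wellFounded (measure ρ).wf fun v hv => (h v hv).2⟩
  have hedge : InjOn (fun v => s(v, π v)) {r}ᶜ :=
    injOn_sym2_mk_of_lt (injOn_id _) fun v hv => (h v hv).2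
  obtain ⟨U, hU⟩ := τ.exists_isRouting T
  by_cases hroot : Even (τ.incoming T U r).encard
  · left
    simpa using hU.hasTJoin (f := id) hroot (fun v hv => (h v hv).1) hedge (injOn_id _)
  · right
    have hroot' : Even (τ.incoming (T ∆ {r}) U r).encard := by
      rw [RootedTree.incoming_symmDiff_root (τ := τ) hU.root_notMem_up,
        even_encard_symmDiff_singleton_iff]
      exact even_add_one_of_not_even hroot
    simpa using hU.symmDiff_root.hasTJoin (f := id) hroot' (fun v hv => (h v hv).1)
      hedge (injOn_id _)

theorem hasTJoin_of_even_ncard (hG : G.Connected) (hT : T.Finite) (heven : Even T.ncard) :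
    G.HasTJoin T := by
  obtain ⟨r⟩ := hG.nonempty
  refine (hasTJoin_or_hasTJoin_symmDiff_singleton hG.preconnected T r).resolve_right fun h => ?_
  have := even_encard_symmDiff_singleton_iff.1 (even_encard_of_hasTJoin h)
  rw [← hT.cast_ncard_eq, ← Nat.cast_succ, even_natCast, Nat.succ_eq_add_one,
    Nat.even_add_one] at this
  exact this heven

/-- The projection to `V` of the unfolding of a graph along a trail `W`: there every visit of the
trail is a vertex of its own, so that `W` becomes a path. -/
def foldMap (W : ℕ → V) : ℕ ⊕ ↥(range W)ᶜ → V :=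
  Sum.elim W Subtype.val

theorem foldMap_surjective (W : ℕ → V) : (foldMap W).Surjective := by
  intro v
  by_cases hv : v ∈ range W
  exacts [hv.imp' Sum.inl fun _ hn => hn, ⟨.inr ⟨v, hv⟩, rfl⟩]

theorem injOn_sym2_mk_foldMap (hedge : (fun n => s(W n, W (n + 1))).Injective)
    {parent : ℕ ⊕ ↥(range W)ᶜ → ℕ ⊕ ↥(range W)ᶜ} {ρ : V → ℕ}
    (hinl : ∀ n, parent (.inl (n + 1)) = .inl n)
    (hinr : ∀ v : ↥(range W)ᶜ, ρ (foldMap W (parent (.inr v))) < ρ v) :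
    InjOn (fun x => s(foldMap W x, foldMap W (parent x))) {.inl 0}ᶜ := by
  have edge_inl {n : ℕ} (hn : Sum.inl n ∈ ({.inl 0}ᶜ : Set (ℕ ⊕ ↥(range W)ᶜ))) :
      ∃ m, n = m + 1 ∧ s(foldMap W (.inl n), foldMap W (parent (.inl n))) = s(W m, W (m + 1)) := by
    obtain ⟨m, rfl⟩ := Nat.exists_eq_succ_of_ne_zero fun h => hn (congrArg Sum.inl h)
    exact ⟨m, rfl, by rw [hinl]; exact Sym2.eq_swap⟩
  have edge_ne (n : ℕ) (v : ↥(range W)ᶜ) (y : V) : s(W n, W (n + 1)) ≠ s(v.1, y) := fun h => by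
    rcases Sym2.mem_iff.1 (h ▸ Sym2.mem_mk_left v.1 y) with hv | hv
    exacts [v.2 ⟨n, hv.symm⟩, v.2 ⟨n + 1, hv.symm⟩]
  rintro (m | v) hx (n | w) hy hxy
  · obtain ⟨m, rfl, hm⟩ := edge_inl hx
    obtain ⟨n, rfl, hn⟩ := edge_inl hy
    rw [hedge (hm.symm.trans (hxy.trans hn))]
  · obtain ⟨m, -, hm⟩ := edge_inl hx
    exact absurd (hm.symm.trans hxy) (edge_ne m w _)
  · obtain ⟨n, -, hn⟩ := edge_inl hy
    exact absurd (hn.symm.trans hxy.symm) (edge_ne n v _)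
  · exact congrArg Sum.inr <| injOn_sym2_mk_of_lt Subtype.val_injective.injOn
      (fun v _ => hinr v) (mem_univ v) (mem_univ w) hxy

theorem exists_unfolding (hG : G.Preconnected) (hadj : ∀ n, G.Adj (W n) (W (n + 1)))
    (hedge : (fun n => s(W n, W (n + 1))).Injective) :
    ∃ τ : RootedTree (ℕ ⊕ ↥(range W)ᶜ), τ.IsRay Sum.inl ∧
      (∀ x ≠ τ.root, G.Adj (foldMap W x) (foldMap W (τ.parent x))) ∧
      InjOn (fun x => s(foldMap W x, foldMap W (τ.parent x))) {τ.root}ᶜ := by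
  obtain ⟨π, ρ, h⟩ := exists_parent_toward hG (range_nonempty W)
  obtain ⟨g, hg⟩ := (foldMap_surjective W).hasRightInverse
  let parent : ℕ ⊕ ↥(range W)ᶜ → ℕ ⊕ ↥(range W)ᶜ :=
    Sum.elim (fun n => .inl (n - 1)) fun v => g (π v)
  have foldMap_parent (v : ↥(range W)ᶜ) : foldMap W (parent (.inr v)) = π v := hg _
  have rank_parent_lt (v : ↥(range W)ᶜ) : ρ (foldMap W (parent (.inr v))) < ρ v :=
    foldMap_parent v ▸ (h v v.2).2
  have lex_wf : WellFounded (InvImage (Sum.Lex (· < ·) (· < ·))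
      (Sum.map id fun v => ρ v : ℕ ⊕ ↥(range W)ᶜ → ℕ ⊕ ℕ)) :=
    InvImage.wf _ (Sum.lex_wf wellFounded_lt wellFounded_lt)
  refine ⟨⟨.inl 0, parent, exists_iterate_eq_of_wellFounded lex_wf ?_⟩,
    ⟨rfl, fun _ => rfl, Sum.inl_injective⟩, ?_,
    injOn_sym2_mk_foldMap hedge (fun _ => rfl) rank_parent_lt⟩
  · rintro (n | v) hx
    · exact Sum.Lex.inl (Nat.pred_lt fun hn => hx (congrArg Sum.inl hn))
    · have hv := rank_parent_lt v
      rw [InvImage]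
      cases hx : parent (.inr v) with
      | inl n => exact Sum.Lex.sep ..
      | inr w => exact Sum.Lex.inr (by rwa [hx] at hv)
  · rintro ((_ | n) | v) hx
    exacts [absurd rfl hx, (hadj n).symm, (foldMap_parent v).symm ▸ (h v v.2).1]

theorem hasTJoin_of_infinite_inter_range (hG : G.Preconnected)
    (hadj : ∀ n, G.Adj (W n) (W (n + 1))) (hedge : (fun n => s(W n, W (n + 1))).Injective)
    (hT : (T ∩ range W).Infinite) : G.HasTJoin T := by
  obtain ⟨τ, hray, hadj', hedge'⟩ := exists_unfolding hG hadj hedge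
  obtain ⟨g, hg⟩ := (foldMap_surjective W).hasRightInverse
  have inl_preimage_infinite : (Sum.inl ⁻¹' (g '' T)).Infinite := by
    refine ((hT.image hg.injective.injOn).preimage ?_).mono
      (preimage_mono (image_mono inter_subset_left))
    rintro _ ⟨v, ⟨-, hv⟩, rfl⟩
    rcases hgv : g v with n | w
    · exact mem_range_self n
    · have := hg v
      rw [hgv] at this
      exact absurd hv (this ▸ w.2)
  obtain ⟨U, hU, hroot⟩ := hray.exists_isRouting_even_root inl_preimage_infinite
  have := hU.hasTJoin hroot hadj' hedge' <| by
    rintro _ ⟨s, -, rfl⟩ _ ⟨t, -, rfl⟩ hst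
    rw [hg, hg] at hst
    rw [hst]
  rwa [image_image, image_congr fun t _ => hg t, image_id'] at this

end TJoin

/-- A 2-edge-connected graph contains a `T`-join iff `T` is infinite or `|T|` is even. -/
theorem hasTJoin_iff_of_twoEdgeConnected {V : Type*} (G : SimpleGraph V)
    (hG : G.TwoEdgeConnected) (T : Set V) :
    G.HasTJoin T ↔ T.Infinite ∨ Even T.ncard := by
  refine ⟨fun h => TJoin.even_encard_iff_infinite_or_even_ncard.1 (TJoin.even_encard_of_hasTJoin h),
    fun h => ?_⟩
  rcases T.finite_or_infinite with hT | hT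
  · exact TJoin.hasTJoin_of_even_ncard hG.1 hT (h.resolve_left hT.not_infinite)
  · obtain ⟨W, hadj, hedge, hTW⟩ :=
      TJoin.exists_infinite_trail (TJoin.isEdgeReachable_two_of_twoEdgeConnected hG) hT
    exact TJoin.hasTJoin_of_infinite_inter_range hG.1.preconnected hadj hedge hTW
end

section
/- Let G be a 2-edge-connected graph and let T ⊆ V(G) be finite with |T| even and |T| ≥ 4. Let s and t be two distinct vertices of T. Then G contains a T-join in which s and t are not matched with each other, i.e., no single path of the T-join has endpoints s and t. -/
/-!
Put `S = T \ {s, t}`. We keep edge-disjoint walks from `s` to `u` and from `t` to `v`, together with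
a disjoint finite edge set `R` such that the union has odd degree exactly at `T`. If `u ≠ v` both
lie in `S`, then the rest of `R` splits into paths and the join is found. When `u ≠ v` and `v` lies
outside `S`, it is an odd vertex of `R`, so the second walk can be continued through `R` to another
odd vertex; hence either we succeed or the two walks can be made to meet at `u`.

A meeting vertex `x` can be moved along any edge `xz`, unless we succeed on the way. If `z` lies on
one of the walks, the part of that walk after `z` is handed over to the other. Otherwise
2-edge-connectivity provides a detour from `z` back to a vertex `y` of one of the walks which makes
`xz` available: cut that walk at `y`, prolong the other one by `xz` and let them meet again, at `z`.
Since `G` is connected the meeting vertex reaches `S`, where one of the walks can be continued.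
-/

namespace TJoin

open SimpleGraph Finset
open scoped symmDiff

variable {V : Type*} {G : SimpleGraph V} {S T : Set V} {s t u v w x y z : V}

lemma exists_isPath_to_finset (h : G.Reachable u v) {X : Finset V} (hv : v ∈ X) :
    ∃ y ∈ X, ∃ p : G.Walk u y, p.IsPath ∧ ∀ e ∈ p.edges, ∃ a ∈ e, a ∉ X := by
  classical
  obtain ⟨p, hp⟩ := h.exists_isPath
  obtain ⟨y, hyX, hy, hfirst⟩ := p.exists_mem_support_forall_mem_support_imp_eq X ⟨v, by simp [hv]⟩
  refine ⟨y, hyX, p.takeUntil y hy, hp.takeUntil hy, fun e he ↦ ?_⟩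
  induction e with | _ a b
  by_contra! hX
  have ha := hfirst a (hX a (by simp)) (Walk.fst_mem_support_of_mem_edges _ he)
  have hb := hfirst b (hX b (by simp)) (Walk.snd_mem_support_of_mem_edges _ he)
  exact (Walk.adj_of_mem_edges _ he).ne (ha.trans hb.symm)

lemma exists_isPath_to_finset_avoiding_edge {e : Sym2 V} (h : (G.deleteEdges {e}).Reachable u v)
    {X : Finset V} (hv : v ∈ X) :
    ∃ y ∈ X, ∃ p : G.Walk u y, p.IsPath ∧ e ∉ p.edges ∧ ∀ e' ∈ p.edges, ∃ a ∈ e', a ∉ X := by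
  obtain ⟨y, hy, p, hp, hpX⟩ := exists_isPath_to_finset h hv
  refine ⟨y, hy, p.mapLe (deleteEdges_le _), hp.mapLe _, fun he ↦ ?_, by simpa using hpX⟩
  rw [Walk.edges_mapLe_eq_edges] at he
  simpa using p.edges_subset_edgeSet he

lemma isTJoin_insert {P : Set (Σ u : V, Σ v : V, G.Walk u v)} (hP : G.IsTJoin T P)
    {p : G.Walk u v} (hp : p.IsPath) (huv : u ≠ v) (hu : u ∉ T) (hv : v ∉ T)
    (hpP : ∀ q ∈ P, ∀ e ∈ q.2.2.edges, e ∉ p.edges) :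
    G.IsTJoin (insert u (insert v T)) (insert ⟨u, v, p⟩ P) := by
  obtain ⟨hpath, hdisj, huniq⟩ := hP
  refine ⟨?_, ?_, ?_⟩
  · rintro q (rfl | hq)
    · exact ⟨hp, huv, by simp, by simp⟩
    · have := hpath q hq
      grind
  · rintro q (rfl | hq) r (rfl | hr) hne
    · exact absurd rfl hne
    · exact fun e he he' ↦ hpP r hr e he' he
    · exact hpP q hq
    · exact hdisj q hq r hr hne
  · intro a ha
    by_cases haT : a ∈ T
    · obtain ⟨q, ⟨hq, hqa⟩, hq_uniq⟩ := huniq a haT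
      exact ⟨q, ⟨.inr hq, hqa⟩, by grind⟩
    · exact ⟨⟨u, v, p⟩, ⟨.inl rfl, by grind⟩, by grind⟩

variable [DecidableEq V]

/-- The set of vertices of odd degree in the finite edge set `F`, i.e. the boundary of `F` over
`ℤ/2`. A loop in `F` would count once. -/
def oddVertices (F : Finset (Sym2 V)) : Set V := {v | Odd #{e ∈ F | v ∈ e}}

@[simp]
lemma oddVertices_empty : oddVertices (∅ : Finset (Sym2 V)) = ∅ := by simp [oddVertices]

lemma oddVertices_symmDiff (F F' : Finset (Sym2 V)) :
    oddVertices (F ∆ F') = oddVertices F ∆ oddVertices F' := by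
  ext v
  have hsymm : {e ∈ F ∆ F' | v ∈ e} = {e ∈ F | v ∈ e} ∆ {e ∈ F' | v ∈ e} := by
    grind [Finset.mem_symmDiff]
  have hcard (A B : Finset (Sym2 V)) : #(A ∆ B) + 2 * #(A ∩ B) = #A + #B := by
    have := card_sdiff_add_card_inter A B
    have := card_sdiff_add_card_inter B A
    rw [symmDiff_def, sup_eq_union, card_union_of_disjoint disjoint_sdiff_sdiff]
    grind [inter_comm]
  have := hcard {e ∈ F | v ∈ e} {e ∈ F' | v ∈ e}
  simp only [oddVertices, Set.mem_symmDiff, Set.mem_ofPred_eq, hsymm]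
  grind

lemma oddVertices_edges_toFinset {p : G.Walk u v} (hp : p.IsTrail) :
    oddVertices p.edges.toFinset = {u} ∆ {v} := by
  ext x
  have hcard : #{e ∈ p.edges.toFinset | x ∈ e} = p.edges.countP (x ∈ ·) := by
    have hfilter : {e ∈ p.edges.toFinset | x ∈ e} = (p.edges.filter (x ∈ ·)).toFinset := by
      ext; simp
    rw [hfilter, List.toFinset_card_of_nodup (hp.edges_nodup.filter _),
      List.countP_eq_length_filter]
  have := hp.even_countP_edges_iff x
  simp only [oddVertices, Set.mem_ofPred_eq, hcard, ← Nat.not_even_iff_odd, this,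
    Set.mem_symmDiff, Set.mem_singleton_iff]
  grind

lemma oddVertices_sdiff_edges {F : Finset (Sym2 V)} {p : G.Walk u v} (hp : p.IsTrail)
    (hpF : ∀ e ∈ p.edges, e ∈ F) :
    oddVertices (F \ p.edges.toFinset) = oddVertices F ∆ ({u} ∆ {v}) := by
  rw [← oddVertices_edges_toFinset hp, ← oddVertices_symmDiff, symmDiff_of_ge]
  simpa [Finset.subset_iff] using hpF

lemma oddVertices_erase {F : Finset (Sym2 V)} (h : u ≠ v) (he : s(u, v) ∈ F) :
    oddVertices (F.erase s(u, v)) = oddVertices F ∆ ({u} ∆ {v}) := by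
  have hpath := (Walk.IsPath.of_adj (G := ⊤) h).isTrail
  simpa [sdiff_singleton_eq_erase] using oddVertices_sdiff_edges hpath (F := F) (by simpa)

lemma exists_isPath_of_mem_oddVertices {F : Finset (Sym2 V)} (hF : ↑F ⊆ G.edgeSet)
    (hv : v ∈ oddVertices F) :
    ∃ w ∈ oddVertices F, w ≠ v ∧ ∃ p : G.Walk v w, p.IsPath ∧ ∀ e ∈ p.edges, e ∈ F := by
  induction F using Finset.strongInduction generalizing v with | H F ih
  obtain ⟨e, he⟩ : {e ∈ F | v ∈ e}.Nonempty := card_pos.mp (Odd.pos hv)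
  obtain ⟨heF, u, rfl⟩ := (mem_filter.mp he).imp_right Sym2.mem_iff_exists.mp
  have hvu : G.Adj v u := hF heF
  by_cases hu : u ∈ oddVertices F
  · exact ⟨u, hu, hvu.ne', hvu.toWalk, .of_adj hvu, by simpa⟩
  have hodd := oddVertices_erase hvu.ne heF
  have hu' : u ∈ oddVertices (F.erase s(v, u)) := by
    simp [hodd, Set.mem_symmDiff, hu, hvu.ne']
  obtain ⟨w, hw, hwu, p, -, hp⟩ := ih _ (erase_ssubset heF)
    ((coe_subset.mpr (erase_subset _ _)).trans hF) hu'
  simp only [hodd, Set.mem_symmDiff, Set.mem_singleton_iff] at hw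
  refine ⟨w, by grind, by grind, (Walk.cons hvu p).bypass, Walk.bypass_isPath _, fun e he ↦ ?_⟩
  have := Walk.edges_bypass_subset_edges _ he
  grind [Walk.edges_cons]

lemma exists_oddVertices_eq (hG : G.Preconnected) (hT : T.Finite) (heven : Even T.ncard) :
    ∃ F : Finset (Sym2 V), ↑F ⊆ G.edgeSet ∧ oddVertices F = T := by
  induction hn : T.ncard using Nat.strong_induction_on generalizing T with | _ n ih
  obtain rfl | ⟨a, ha⟩ := T.eq_empty_or_nonempty
  · exact ⟨∅, by simp⟩
  have hcard := Set.ncard_sdiff_singleton_add_one ha hT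
  obtain ⟨b, hb⟩ : (T \ {a}).Nonempty := Set.nonempty_of_ncard_ne_zero (by grind)
  have hcard' := Set.ncard_sdiff_singleton_add_one hb hT.sdiff
  obtain ⟨F, hF, hFodd⟩ := ih (T := (T \ {a}) \ {b}) _ (by lia) hT.sdiff.sdiff (by grind) rfl
  obtain ⟨p, hp⟩ := (hG a b).exists_isPath
  refine ⟨F ∆ p.edges.toFinset, fun e he ↦ ?_, ?_⟩
  · have := p.edges_subset_edgeSet (e := e)
    grind [Finset.mem_symmDiff, List.mem_toFinset]
  · rw [oddVertices_symmDiff, oddVertices_edges_toFinset hp.isTrail, hFodd]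
    grind

lemma exists_isTJoin_oddVertices {F : Finset (Sym2 V)} (hF : ↑F ⊆ G.edgeSet) :
    ∃ P, G.IsTJoin (oddVertices F) P ∧ ∀ p ∈ P, ∀ e ∈ p.2.2.edges, e ∈ F := by
  induction F using Finset.strongInduction with | H F ih
  obtain hodd | ⟨v, hv⟩ := (oddVertices F).eq_empty_or_nonempty
  · exact ⟨∅, by simp [hodd, IsTJoin]⟩
  obtain ⟨w, hw, hwv, p, hp, hpF⟩ := exists_isPath_of_mem_oddVertices hF hv
  have hodd := oddVertices_sdiff_edges hp.isTrail hpF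
  have hlt : F \ p.edges.toFinset ⊂ F := by
    refine sdiff_ssubset (by simpa [Finset.subset_iff] using hpF) ?_
    rw [List.toFinset_nonempty_iff, ne_eq, Walk.edges_eq_nil]
    exact fun hnil ↦ hwv hnil.eq.symm
  obtain ⟨P, hP, hPF⟩ := ih _ hlt ((coe_subset.mpr sdiff_subset).trans hF)
  have hpP : ∀ q ∈ P, ∀ e ∈ q.2.2.edges, e ∉ p.edges := by
    grind [List.mem_toFinset]
  have hT : oddVertices F = insert v (insert w (oddVertices (F \ p.edges.toFinset))) := by
    grind
  refine ⟨insert ⟨v, w, p⟩ P, ?_, by grind⟩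
  rw [hT]
  exact isTJoin_insert hP hp hwv.symm (by grind) (by grind) hpP

/-- A partial `T`-join for `T = S ∪ {s, t}`, where `s ≠ t` lie outside `S`: walks `p` from `s` and
`q` from `t`, with current ends `u` and `v`, and a set `R` of further edges, all edge-disjoint. The
last field says that `p`, `q` and `R` together have odd degree exactly at `T`. -/
structure IsLinkage (S : Set V) (p : G.Walk s u) (q : G.Walk t v) (R : Finset (Sym2 V)) :
    Prop where
  subset_edgeSet : ↑R ⊆ G.edgeSet
  disjoint : p.edges.Disjoint q.edges
  notMem_left : ∀ e ∈ R, e ∉ p.edges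
  notMem_right : ∀ e ∈ R, e ∉ q.edges
  oddVertices_eq : oddVertices R = S ∆ ({u} ∆ {v})

namespace IsLinkage

variable {p : G.Walk s u} {q : G.Walk t v} {R : Finset (Sym2 V)}

lemma symm (h : IsLinkage S p q R) : IsLinkage S q p R where
  subset_edgeSet := h.subset_edgeSet
  disjoint := h.disjoint.symm
  notMem_left := h.notMem_right
  notMem_right := h.notMem_left
  oddVertices_eq := by rw [h.oddVertices_eq, symmDiff_comm ({u} : Set V)]

lemma bypass (h : IsLinkage S p q R) : IsLinkage S p.bypass q.bypass R where
  subset_edgeSet := h.subset_edgeSet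
  disjoint _ hp hq :=
    h.disjoint (p.edges_bypass_subset_edges hp) (q.edges_bypass_subset_edges hq)
  notMem_left e he := mt (p.edges_bypass_subset_edges ·) (h.notMem_left e he)
  notMem_right e he := mt (q.edges_bypass_subset_edges ·) (h.notMem_right e he)
  oddVertices_eq := h.oddVertices_eq

lemma append_right (h : IsLinkage S p q R) {r : G.Walk v w} (hr : r.IsTrail)
    (hrR : ∀ e ∈ r.edges, e ∈ R) : IsLinkage S p (q.append r) (R \ r.edges.toFinset) where
  subset_edgeSet := (coe_subset.mpr sdiff_subset).trans h.subset_edgeSet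
  disjoint e hep heq := by
    have := h.disjoint hep
    have := h.notMem_left e
    grind [Walk.edges_append]
  notMem_left := by grind [h.notMem_left]
  notMem_right := by grind [Walk.edges_append, List.mem_toFinset, h.notMem_right]
  oddVertices_eq := by
    rw [oddVertices_sdiff_edges hr hrR, h.oddVertices_eq]
    grind

lemma exists_isTJoin (h : IsLinkage S p q R) (hu : u ∈ S) (hv : v ∈ S) (huv : u ≠ v)
    (hs : s ∉ S) (ht : t ∉ S) (hst : s ≠ t) :
    ∃ P, G.IsTJoin (insert s (insert t S)) P ∧ ∀ p ∈ P, s(p.1, p.2.1) ≠ s(s, t) := by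
  obtain ⟨P, hP, hPR⟩ := exists_isTJoin_oddVertices h.subset_edgeSet
  have hodd : oddVertices R = S \ {u, v} := by
    grind [h.oddVertices_eq]
  rw [hodd] at hP
  have hb := h.bypass
  have hPq := isTJoin_insert hP q.bypass_isPath (by grind) (by grind) (by grind)
    fun r hr e he ↦ hb.notMem_right e (hPR r hr e he)
  have hPqp := isTJoin_insert hPq p.bypass_isPath (by grind) (by grind) (by grind) <| by
    rintro r (rfl | hr) e he
    · exact fun he' ↦ hb.disjoint he' he
    · exact hb.notMem_left e (hPR r hr e he)
  have hT : insert s (insert t S) = insert s (insert u (insert t (insert v (S \ {u, v})))) := by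
    grind
  refine ⟨_, hT ▸ hPqp, ?_⟩
  have := hP.1
  rintro r (rfl | rfl | hr) <;> grind [Sym2.eq_iff]

end IsLinkage

/-- Some linkage has current ends `u` and `v`. -/
def Linked (G : SimpleGraph V) (S : Set V) (s t u v : V) : Prop :=
  ∃ (p : G.Walk s u) (q : G.Walk t v) (R : Finset (Sym2 V)), IsLinkage S p q R

/-- Some linkage joins `s` and `t` to distinct vertices of `S`, so that it extends to a join of
`S ∪ {s, t}` not matching `s` with `t`. -/
def LinkedInto (G : SimpleGraph V) (S : Set V) (s t : V) : Prop :=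
  ∃ u ∈ S, ∃ v ∈ S, u ≠ v ∧ Linked G S s t u v

lemma Linked.symm (h : Linked G S s t u v) : Linked G S t s v u :=
  let ⟨p, q, R, h⟩ := h
  ⟨q, p, R, h.symm⟩

lemma LinkedInto.symm (h : LinkedInto G S s t) : LinkedInto G S t s :=
  let ⟨u, hu, v, hv, huv, h⟩ := h
  ⟨v, hv, u, hu, huv.symm, h.symm⟩

lemma linked_of_oddVertices_eq {F : Finset (Sym2 V)} (hF : ↑F ⊆ G.edgeSet)
    (hodd : oddVertices F = S ∆ ({s} ∆ {t})) : Linked G S s t s t :=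
  ⟨.nil, .nil, F, hF, by simp, by simp, by simp, hodd⟩

namespace Linked

lemma exists_ne_of_mem (h : Linked G S s t u v) (hv : v ∈ S ∆ ({u} ∆ {v})) :
    ∃ w ∈ S ∆ ({u} ∆ {v}), w ≠ v ∧ Linked G S s t u w := by
  obtain ⟨p, q, R, h⟩ := h
  rw [← h.oddVertices_eq] at hv ⊢
  obtain ⟨w, hw, hwv, r, hr, hrR⟩ := exists_isPath_of_mem_oddVertices h.subset_edgeSet hv
  exact ⟨w, hw, hwv, p, q.append r, _, h.append_right hr.isTrail hrR⟩

lemma linkedInto_of_mem_left (h : Linked G S s t u v) (hu : u ∈ S) : LinkedInto G S s t := by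
  by_cases hv : v ∈ S ∧ u ≠ v
  · exact ⟨u, hu, v, hv.1, hv.2, h⟩
  obtain ⟨w, hw, hwv, h⟩ := h.exists_ne_of_mem (by grind)
  exact ⟨u, hu, w, by grind, by grind, h⟩

lemma linkedInto_or_linked_left (h : Linked G S s t u v) :
    LinkedInto G S s t ∨ Linked G S s t u u := by
  by_cases huv : u = v
  · exact .inr (huv ▸ h)
  by_cases hv : v ∈ S
  · exact .inl (h.symm.linkedInto_of_mem_left hv).symm
  obtain ⟨w, hw, hwv, h⟩ := h.exists_ne_of_mem (by grind)
  by_cases hwu : w = u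
  · exact .inr (hwu ▸ h)
  · exact .inl (h.symm.linkedInto_of_mem_left (by grind)).symm

end Linked

namespace IsLinkage

variable {p : G.Walk s x} {q : G.Walk t x} {R : Finset (Sym2 V)}

lemma linked_of_mem_support_left (h : IsLinkage S p q R) (hp : p.IsTrail) (hz : z ∈ p.support) :
    Linked G S s t z z := by
  have htake := p.edges_takeUntil_subset_edges hz
  have hdrop := p.edges_dropUntil_subset_edges hz
  refine ⟨p.takeUntil z hz, q.append (p.dropUntil z hz).reverse, R, h.subset_edgeSet, ?_, ?_, ?_,
    by simpa using h.oddVertices_eq⟩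
  · have := hp.disjoint_edges_takeUntil_dropUntil hz
    have := h.disjoint
    simp only [Walk.edges_append, Walk.edges_reverse]
    grind [List.Disjoint]
  · grind [h.notMem_left]
  · grind [h.notMem_left, h.notMem_right, Walk.edges_append, Walk.edges_reverse]

lemma exists_detour (hG : G.TwoEdgeConnected) (h : IsLinkage S p q R) (hxz : G.Adj x z)
    (hzp : z ∉ p.support) (hzq : z ∉ q.support) :
    ∃ y R', (y ∈ p.support ∨ y ∈ q.support) ∧ ↑R' ⊆ G.edgeSet ∧
      (∀ e ∈ R', e ∉ p.edges) ∧ (∀ e ∈ R', e ∉ q.edges) ∧ s(x, z) ∉ R' ∧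
      oddVertices R' = S ∆ ({z} ∆ {y}) := by
  let X := p.support.toFinset ∪ q.support.toFinset
  have hX {a} : a ∈ X ↔ a ∈ p.support ∨ a ∈ q.support := by simp [X]
  obtain ⟨y, hy, r, hr, hrR, hrX⟩ : ∃ y ∈ X, ∃ r : G.Walk z y, r.IsPath ∧
      (s(x, z) ∈ r.edges ↔ s(x, z) ∈ R) ∧ ∀ e ∈ r.edges, ∃ a ∈ e, a ∉ X := by
    -- If `R` uses `xz`, the detour is that edge itself: it then cancels in `R ∆ r`.
    by_cases hR : s(x, z) ∈ R
    · exact ⟨x, by simp [hX], hxz.symm.toWalk, .of_adj hxz.symm, by simpa [Sym2.eq_swap],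
        by simp [hX, hzp, hzq]⟩
    · obtain ⟨y, hy, r, hr, hrxz, hrX⟩ :=
        exists_isPath_to_finset_avoiding_edge ((hG.2 s(x, z) hxz).preconnected z x)
          (X := X) (by simp [hX])
      exact ⟨y, hy, r, hr, by simp [hR, hrxz], hrX⟩
  have hrp {e} (he : e ∈ r.edges) : e ∉ p.edges ∧ e ∉ q.edges := by
    obtain ⟨a, hae, haX⟩ := hrX e he
    exact ⟨fun hep ↦ haX (hX.mpr (.inl (Walk.mem_support_of_mem_edges hep hae))),
      fun heq ↦ haX (hX.mpr (.inr (Walk.mem_support_of_mem_edges heq hae)))⟩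
  refine ⟨y, R ∆ r.edges.toFinset, hX.mp hy, fun e he ↦ ?_, ?_, ?_, ?_, ?_⟩
  · have := h.subset_edgeSet (a := e)
    have := r.edges_subset_edgeSet (e := e)
    grind [Finset.mem_symmDiff, List.mem_toFinset]
  · grind [Finset.mem_symmDiff, List.mem_toFinset, h.notMem_left]
  · grind [Finset.mem_symmDiff, List.mem_toFinset, h.notMem_right]
  · grind [Finset.mem_symmDiff, List.mem_toFinset]
  · rw [oddVertices_symmDiff, oddVertices_edges_toFinset hr.isTrail, h.oddVertices_eq]
    simp

end IsLinkage

lemma linked_concat_takeUntil {p : G.Walk s w} {q : G.Walk t x} {R : Finset (Sym2 V)}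
    (hpq : p.edges.Disjoint q.edges) (hxz : G.Adj x z) (hz : z ∉ p.support) (hy : y ∈ p.support)
    (hR : ↑R ⊆ G.edgeSet) (hRp : ∀ e ∈ R, e ∉ p.edges) (hRq : ∀ e ∈ R, e ∉ q.edges)
    (hxzR : s(x, z) ∉ R) (hodd : oddVertices R = S ∆ ({z} ∆ {y})) : Linked G S t s z y := by
  have htake := p.edges_takeUntil_subset_edges hy
  have hxzp : s(x, z) ∉ p.edges := mt p.snd_mem_support_of_mem_edges hz
  refine ⟨q.concat hxz, p.takeUntil y hy, R, hR, ?_, ?_, ?_, hodd⟩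
  · simp only [Walk.edges_concat]
    grind [List.Disjoint]
  · grind [Walk.edges_concat]
  · grind

namespace Linked

lemma linkedInto_or_linked_of_adj (hG : G.TwoEdgeConnected) (h : Linked G S s t x x)
    (hxz : G.Adj x z) : LinkedInto G S s t ∨ Linked G S s t z z := by
  obtain ⟨p, q, R, h⟩ := h
  have h := h.bypass
  by_cases hzp : z ∈ p.bypass.support
  · exact .inr (h.linked_of_mem_support_left p.bypass_isPath.isTrail hzp)
  by_cases hzq : z ∈ q.bypass.support
  · exact .inr (h.symm.linked_of_mem_support_left q.bypass_isPath.isTrail hzq).symm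
  obtain ⟨y, R', hy | hy, hR', hpR', hqR', hxzR', hodd⟩ := h.exists_detour hG hxz hzp hzq
  · exact (linked_concat_takeUntil h.disjoint hxz hzp hy hR' hpR' hqR' hxzR' hodd)
      |>.linkedInto_or_linked_left.imp LinkedInto.symm Linked.symm
  · exact (linked_concat_takeUntil h.disjoint.symm hxz hzq hy hR' hqR' hpR' hxzR' hodd)
      |>.linkedInto_or_linked_left

lemma linkedInto_or_linked_of_reachable (hG : G.TwoEdgeConnected) (h : Linked G S s t u u)
    (huv : G.Reachable u v) : LinkedInto G S s t ∨ Linked G S s t v v := by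
  obtain ⟨p⟩ := huv
  induction p with
  | nil => exact .inr h
  | cons hadj _ ih => exact (h.linkedInto_or_linked_of_adj hG hadj).elim .inl ih

end Linked

end TJoin

/-- In a 2-edge-connected graph, if `T` is finite of even cardinality at least four and
`s ≠ t` are in `T`, then there is a `T`-join in which no single path has endpoints `s`
and `t`. -/
theorem exists_tJoin_avoiding_pair {V : Type*} (G : SimpleGraph V)
    (hG : G.TwoEdgeConnected) (T : Set V) (hfin : T.Finite) (heven : Even T.ncard)
    (hcard : 4 ≤ T.ncard) (s t : V) (hs : s ∈ T) (ht : t ∈ T) (hst : s ≠ t) :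
    ∃ P, G.IsTJoin T P ∧
      ∀ p ∈ P, ¬ ((p.1 = s ∧ p.2.1 = t) ∨ (p.1 = t ∧ p.2.1 = s)) := by
  classical
  obtain ⟨S, hsS, htS, rfl⟩ : ∃ S, s ∉ S ∧ t ∉ S ∧ T = insert s (insert t S) :=
    ⟨T \ {s, t}, by simp, by simp, by grind⟩
  obtain ⟨a, ha⟩ : S.Nonempty := by
    rw [Set.nonempty_iff_ne_empty]
    rintro rfl
    simp [Set.ncard_pair hst] at hcard
  obtain ⟨F, hF, hFodd⟩ := TJoin.exists_oddVertices_eq hG.1.preconnected hfin heven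
  obtain ⟨u, hu, v, hv, huv, p, q, R, h⟩ : TJoin.LinkedInto G S s t := by
    have hst : TJoin.Linked G S s t s t := TJoin.linked_of_oddVertices_eq hF (by grind)
    obtain h | hss := hst.linkedInto_or_linked_left
    · exact h
    obtain h | haa := hss.linkedInto_or_linked_of_reachable hG (hG.1.preconnected s a)
    · exact h
    · exact haa.linkedInto_of_mem_left ha
  obtain ⟨P, hP, hPst⟩ := h.exists_isTJoin hu hv huv hsS htS hst
  exact ⟨P, hP, fun p hp ↦ by simpa [Sym2.eq_iff] using hPst p hp⟩
end

section
/- Let G be a connected graph that has only finitely many 2-edge-connected components, and let T ⊆ V(G) be infinite. Then G contains a T-join. -/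
namespace SimpleGraph

variable {V : Type*}

/-- `S` is the vertex set of a 2-edge-connected component (i.e. a maximal 2-edge-connected
subgraph) of `G`. -/
def IsTwoEdgeConnectedComponent (G : SimpleGraph V) (S : Set V) : Prop :=
  (G.induce S).TwoEdgeConnected ∧
    ∀ S' : Set V, S ⊆ S' → (G.induce S').TwoEdgeConnected → S' = S

end SimpleGraph

/-!
A bridge is determined by the two 2-edge-connected components it joins, so `G` has only finitely
many bridges. Deleting finitely many edges preserves this, and in a bridgeless graph any two
vertices of a component are joined by two edge-disjoint paths. Hence edge-disjoint trails can be
chosen greedily one after the other, each starting where the previous one ends and visiting a new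
vertex of `T`; this gives pairwise edge-disjoint walks `W 0, W 1, …` where `W n` leads from `t n` to
`t (n + 1)`.

Place a token on every vertex of `T`. It suffices to move the tokens along edge-disjoint walks so
that every vertex receives an even or infinite number of them, since tokens that meet can be paired.
First all tokens are moved towards the set `R` of vertices of the walks `W n`, along a forest and
without edges inside `R`, so that the number of tokens is even or infinite outside `R`. Next the
tokens in `R` are distributed among the walks, where `W n` may borrow the token at `t (n + 1)` from
`W (n + 1)` to repair its parity. Finally each walk routes its own tokens.
-/

namespace TJoin

open SimpleGraph

universe u v

/-! ### Sets of even or infinite size -/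

section EvenOrInfinite

variable {α ι : Type*} {s : Set α} {a : α}

/-- The size of `s` is even or infinite; this is the condition for a partition of `s` into pairs.
Infinite sets are covered because `Set.ncard` is `0` on them. -/
def EvenOrInfinite (s : Set α) : Prop := Even s.ncard

lemma evenOrInfinite_of_infinite (h : s.Infinite) : EvenOrInfinite s := by
  simp [EvenOrInfinite, h.ncard]

lemma finite_of_not_evenOrInfinite (h : ¬ EvenOrInfinite s) : s.Finite :=
  Set.not_infinite.1 (mt evenOrInfinite_of_infinite h)

lemma evenOrInfinite_empty : EvenOrInfinite (∅ : Set α) := by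
  simp [EvenOrInfinite]

lemma evenOrInfinite_pair {b : α} (h : a ≠ b) : EvenOrInfinite ({a, b} : Set α) := by
  simp [EvenOrInfinite, Set.ncard_pair h]

lemma nonempty_of_not_evenOrInfinite (h : ¬ EvenOrInfinite s) : s.Nonempty :=
  Set.nonempty_iff_ne_empty.2 fun hs => h (hs ▸ evenOrInfinite_empty)

lemma evenOrInfinite_insert (h : ¬ EvenOrInfinite s) (ha : a ∉ s) :
    EvenOrInfinite (insert a s) := by
  rw [EvenOrInfinite, Set.ncard_insert_of_notMem ha (finite_of_not_evenOrInfinite h)]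
  exact (Nat.not_even_iff_odd.1 h).add_one

lemma evenOrInfinite_image_iff {β : Type*} {f : α → β} (hf : f.Injective) :
    EvenOrInfinite (f '' s) ↔ EvenOrInfinite s := by
  rw [EvenOrInfinite, EvenOrInfinite, Set.ncard_image_of_injective s hf]

lemma evenOrInfinite_union {t : Set α} (hs : EvenOrInfinite s) (ht : EvenOrInfinite t)
    (h : Disjoint s t) : EvenOrInfinite (s ∪ t) := by
  by_cases hfin : (s ∪ t).Finite
  · have := Set.finite_union.1 hfin
    rw [EvenOrInfinite, Set.ncard_union_eq h this.1 this.2]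
    exact hs.add ht
  · exact evenOrInfinite_of_infinite hfin

lemma evenOrInfinite_of_fibers (g : α → ι) (h : ∀ i, EvenOrInfinite {x ∈ s | g x = i}) :
    EvenOrInfinite s := by
  classical
  by_cases hs : s.Finite
  · lift s to Finset α using hs
    rw [EvenOrInfinite, Set.ncard_coe_finset,
      Finset.card_eq_sum_card_fiberwise fun x hx => Finset.mem_image_of_mem g hx]
    refine Finset.even_sum _ fun i _ => ?_
    simpa [EvenOrInfinite, ← Set.ncard_coe_finset] using h i
  · exact evenOrInfinite_of_infinite hs

lemma evenOrInfinite_fibers_comp {β : Type*} {g : α → ι} (h : ∀ i, EvenOrInfinite {x | g x = i})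
    (f : ι → β) (b : β) : EvenOrInfinite {x | f (g x) = b} := by
  refine evenOrInfinite_of_fibers g fun i => ?_
  by_cases hi : f i = b
  · convert h i using 1
    exact Set.sep_eq_of_subset (by rintro x rfl; exact hi)
  · convert evenOrInfinite_empty (α := α) using 1
    exact Set.sep_eq_empty_iff_mem_false.2 (by rintro x hx rfl; exact hi hx)

lemma EvenOrInfinite.exists_equiv_prod_bool {α : Type u} {s : Set α} (h : EvenOrInfinite s) :
    ∃ ι : Type u, Nonempty (ι × Bool ≃ s) := by
  by_cases hs : s.Finite
  · have := hs.fintype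
    obtain ⟨k, hk⟩ := h
    refine ⟨ULift (Fin k), ⟨Fintype.equivOfCardEq ?_⟩⟩
    rw [← Nat.card_eq_fintype_card (α := s), Nat.card_coe_set_eq, hk]
    simp [mul_two]
  · have : Infinite s := Set.infinite_coe_iff.2 hs
    refine ⟨s, Cardinal.lift_mk_eq'.1 ?_⟩
    simpa using Cardinal.mul_eq_left (Cardinal.aleph0_le_mk s)
      ((Cardinal.natCast_lt_aleph0 (n := 2)).le.trans (Cardinal.aleph0_le_mk s)) two_ne_zero

lemma exists_equiv_prod_bool_of_fibers {α : Type u} {ι : Type v} (g : α → ι)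
    (h : ∀ i, EvenOrInfinite {x | g x = i}) :
    ∃ (κ : Type (max u v)) (e : κ × Bool ≃ α), ∀ k, g (e (k, false)) = g (e (k, true)) := by
  choose κ e using fun i => (h i).exists_equiv_prod_bool
  let e' (i : ι) : κ i × Bool ≃ {x // g x = i} := (e i).some
  refine ⟨Σ i, κ i, (Equiv.sigmaProdDistrib κ Bool).trans
    ((Equiv.sigmaCongrRight e').trans (Equiv.sigmaFiberEquiv g)), fun ⟨i, k⟩ => ?_⟩
  exact (e' i (k, false)).2.trans (e' i (k, true)).2.symm

end EvenOrInfinite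

/-! ### Routing tokens along edge-disjoint walks -/

section Routes

variable {V τ ι : Type*} {E E' E₁ E₂ : Set (Sym2 V)} {pos mid fin : τ → V}

/-- The token `t` starts at `pos t` and is moved to `fin t` along a walk with edges in `L t`,
where the sets `L t ⊆ E` are pairwise disjoint. Recording edge sets in place of walks lets
routings be composed by taking unions. -/
def Routes (E : Set (Sym2 V)) (pos fin : τ → V) : Prop :=
  ∃ L : τ → Set (Sym2 V), (∀ t, L t ⊆ E) ∧ Pairwise (Function.onFun Disjoint L) ∧
    ∀ t, (fromEdgeSet (L t)).Reachable (pos t) (fin t)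

/-- The tokens can be moved along edge-disjoint walks in `E` so that every vertex receives an
even or infinite number of them. -/
def EvenlyRoutable (E : Set (Sym2 V)) (pos : τ → V) : Prop :=
  ∃ fin, Routes E pos fin ∧ ∀ v, EvenOrInfinite {t | fin t = v}

lemma Routes.refl (E : Set (Sym2 V)) (pos : τ → V) : Routes E pos pos :=
  ⟨fun _ => ∅, fun _ => Set.empty_subset E, fun _ _ _ => disjoint_bot_left, fun _ => .rfl⟩

lemma Routes.mono (h : Routes E pos fin) (hE : E ⊆ E') : Routes E' pos fin :=
  let ⟨L, hLE, hL⟩ := h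
  ⟨L, fun t => (hLE t).trans hE, hL⟩

lemma EvenlyRoutable.mono (h : EvenlyRoutable E pos) (hE : E ⊆ E') : EvenlyRoutable E' pos :=
  let ⟨fin, hfin, heven⟩ := h
  ⟨fin, hfin.mono hE, heven⟩

lemma Routes.trans (h₁ : Routes E₁ pos mid) (h₂ : Routes E₂ mid fin) (hd : Disjoint E₁ E₂) :
    Routes (E₁ ∪ E₂) pos fin := by
  obtain ⟨L, hLE, hLd, hLr⟩ := h₁
  obtain ⟨M, hME, hMd, hMr⟩ := h₂
  refine ⟨fun t => L t ∪ M t, fun t => Set.union_subset_union (hLE t) (hME t),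
    fun t t' htt' => ?_, fun t => ?_⟩
  · simp only [Function.onFun, Set.disjoint_union_left, Set.disjoint_union_right]
    exact ⟨⟨hLd htt', (hd.mono (hLE t') (hME t)).symm⟩, hd.mono (hLE t) (hME t'), hMd htt'⟩
  · exact ((hLr t).mono (fromEdgeSet_mono Set.subset_union_left)).trans
      ((hMr t).mono (fromEdgeSet_mono Set.subset_union_right))

lemma Routes.trans_evenlyRoutable (h₁ : Routes E₁ pos mid) (h₂ : EvenlyRoutable E₂ mid)
    (hd : Disjoint E₁ E₂) : EvenlyRoutable (E₁ ∪ E₂) pos :=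
  let ⟨fin, hfin, heven⟩ := h₂
  ⟨fin, h₁.trans hfin hd, heven⟩

lemma Routes.of_fibers (g : τ → ι) {F : ι → Set (Sym2 V)}
    (hF : Pairwise (Function.onFun Disjoint F))
    (h : ∀ i, Routes (F i) (fun t : {t // g t = i} => pos t) fun t => fin t) :
    Routes (⋃ i, F i) pos fin := by
  choose L hLE hLd hLr using h
  have hL (i) (t : {t // g t = i}) : L (g t) ⟨t, rfl⟩ = L i t := by
    obtain ⟨t, rfl⟩ := t; rfl
  refine ⟨fun t => L (g t) ⟨t, rfl⟩, fun t => (hLE _ _).trans (Set.subset_iUnion F _),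
    fun t t' htt' => ?_, fun t => hLr _ _⟩
  by_cases hg : g t = g t'
  · have hdisj : Disjoint (L (g t) ⟨t, rfl⟩) (L (g t) ⟨t', hg.symm⟩) :=
      hLd (g t) fun h => htt' (congrArg Subtype.val h)
    rwa [← hL (g t) ⟨t', hg.symm⟩] at hdisj
  · exact (hF hg).mono (hLE _ _) (hLE _ _)

lemma EvenlyRoutable.of_fibers (g : τ → ι) {F : ι → Set (Sym2 V)}
    (hF : Pairwise (Function.onFun Disjoint F))
    (h : ∀ i, EvenlyRoutable (F i) fun t : {t // g t = i} => pos t) :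
    EvenlyRoutable (⋃ i, F i) pos := by
  choose fin hfin heven using h
  have hglue (i) (t : {t // g t = i}) : fin (g t) ⟨t, rfl⟩ = fin i t := by
    obtain ⟨t, rfl⟩ := t; rfl
  refine ⟨fun t => fin (g t) ⟨t, rfl⟩, .of_fibers g hF fun i => ?_, fun v => ?_⟩
  · simpa only [hglue i] using hfin i
  · refine evenOrInfinite_of_fibers g fun i => ?_
    convert (evenOrInfinite_image_iff Subtype.val_injective).2 (heven i v) using 1
    ext t
    constructor
    · rintro ⟨hv, rfl⟩
      exact ⟨⟨t, rfl⟩, hv, rfl⟩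
    · rintro ⟨t, hv, rfl⟩
      exact ⟨(hglue i t).trans hv, t.2⟩

end Routes

section HasTJoin

variable {V : Type*} {G : SimpleGraph V} {T : Set V}

lemma hasTJoin_of_paths {κ : Type*} (e : κ × Bool ≃ T)
    (w : ∀ k, G.Walk (e (k, false)) (e (k, true))) (hw : ∀ k, (w k).IsPath)
    (hdisj : ∀ k l, k ≠ l → (w k).edges.Disjoint (w l).edges) : G.HasTJoin T := by
  refine ⟨Set.range fun k => ⟨_, _, w k⟩, ?_, ?_, fun t ht => ?_⟩
  · rintro _ ⟨k, rfl⟩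
    exact ⟨hw k, by simp [Subtype.val_inj], (e _).2, (e _).2⟩
  · rintro _ ⟨k, rfl⟩ _ ⟨l, rfl⟩ hkl
    exact fun x hx hx' => hdisj k l (by rintro rfl; exact hkl rfl) hx hx'
  · obtain ⟨⟨k, b⟩, hkb⟩ := e.surjective ⟨t, ht⟩
    have htk : (e (k, b)).1 = t := congrArg Subtype.val hkb
    refine ⟨_, ⟨⟨k, rfl⟩, ?_⟩, ?_⟩
    · cases b
      exacts [.inl htk, .inr htk]
    · rintro _ ⟨⟨l, rfl⟩, hl⟩
      have hlk : l = k := by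
        rcases hl with hl | hl
        all_goals exact congrArg Prod.fst (e.injective (Subtype.ext (hl.trans htk.symm)))
      rw [hlk]

lemma EvenlyRoutable.hasTJoin (h : EvenlyRoutable G.edgeSet (Subtype.val : T → V)) :
    G.HasTJoin T := by
  obtain ⟨fin, ⟨L, hLE, hLd, hLr⟩, heven⟩ := h
  obtain ⟨κ, e, he⟩ := exists_equiv_prod_bool_of_fibers fin heven
  let F (k : κ) : Set (Sym2 V) := L (e (k, false)) ∪ L (e (k, true))
  have hpath (k) : ∃ w : G.Walk (e (k, false)) (e (k, true)),
      w.IsPath ∧ ∀ x ∈ w.edges, x ∈ F k := by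
    have hreach : (fromEdgeSet (F k)).Reachable (e (k, false)).1 (e (k, true)).1 :=
      ((hLr _).mono (fromEdgeSet_mono Set.subset_union_left)).trans
        (he k ▸ ((hLr _).mono (fromEdgeSet_mono Set.subset_union_right)).symm)
    obtain ⟨w, hw⟩ := hreach.exists_isPath
    have hwF (x) (hx : x ∈ w.edges) : x ∈ F k :=
      ((edgeSet_fromEdgeSet (F k)).subset (w.edges_subset_edgeSet hx)).1
    exact ⟨w.transfer G fun x hx => Set.union_subset (hLE _) (hLE _) (hwF x hx), hw.transfer _,
      by simpa using hwF⟩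
  choose w hw hwF using hpath
  refine hasTJoin_of_paths e w hw fun k l hkl x hx hx' => ?_
  have hd (b c) : Disjoint (L (e (k, b))) (L (e (l, c))) :=
    hLd fun h => hkl (congrArg Prod.fst (e.injective h))
  rcases hwF k x hx with h | h <;> rcases hwF l x hx' with h' | h'
  all_goals exact Set.disjoint_left.1 (hd _ _) h h'

end HasTJoin

section Regroup

variable {τ ι : Type*}

lemma exists_set_mem_iff_of_wellFounded {r : ι → ι → Prop} (hr : WellFounded r)
    (P : ι → Set ι → Prop) (hP : ∀ i S, P i {j ∈ S | r j i} ↔ P i S) :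
    ∃ S : Set ι, ∀ i, i ∈ S ↔ P i S := by
  let S : Set ι := {i | hr.fix (fun i rec => P i {j | ∃ h : r j i, rec j h}) i}
  refine ⟨S, fun i => (iff_of_eq (hr.fix_eq _ i)).trans ?_⟩
  rw [← hP i S]
  refine iff_of_eq (congrArg (P i) (Set.ext fun j => ?_))
  exact ⟨fun ⟨hji, hj⟩ => ⟨hj, hji⟩, fun ⟨hj, hji⟩ => ⟨hji, hj⟩⟩

lemma exists_regrouping {σ : τ → ι} {f : ι → ι} (hf : f.Injective) {r : ι → τ}
    (hr : ∀ i, σ (r i) = i) (S : Set ι) :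
    ∃ g : τ → ι, ∀ x i, g x = i ↔
      (σ x = i ∧ ¬ ∃ j ∈ S, r (f j) = x) ∨ (i ∈ S ∧ x = r (f i)) := by
  have hrf : Function.Injective fun j => r (f j) := (Function.LeftInverse.injective hr).comp hf
  have hrfS : Function.Injective fun j : S => r (f j) := hrf.comp Subtype.val_injective
  refine ⟨Function.extend (fun j : S => r (f j)) Subtype.val σ, fun x i => ?_⟩
  by_cases hx : ∃ j ∈ S, r (f j) = x
  · obtain ⟨j, hj, rfl⟩ := hx
    have hij : r (f j) = r (f i) ↔ j = i := hrf.eq_iff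
    rw [hrfS.extend_apply _ _ ⟨j, hj⟩, hij]
    refine ⟨by rintro rfl; exact .inr ⟨hj, rfl⟩, ?_⟩
    rintro (h | h)
    exacts [(h.2 ⟨j, hj, rfl⟩).elim, h.2]
  · rw [Function.extend_apply' _ _ x (by rintro ⟨⟨j, hj⟩, hjx⟩; exact hx ⟨j, hj, hjx⟩)]
    refine ⟨fun h => .inl ⟨h, hx⟩, ?_⟩
    rintro (h | ⟨hi, rfl⟩)
    exacts [h.1, (hx ⟨i, hi, rfl⟩).elim]

/- Group `i` borrows the token `r (f i)` from group `f i` exactly if it would otherwise be odd;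
as `d` increases along `f`, these decisions can be made one after the other. -/
lemma exists_evenOrInfinite_regrouping (σ : τ → ι) (f : ι → ι) (hf : f.Injective) (r : ι → τ)
    (hr : ∀ i, σ (r i) = i) (d : ι → ℕ) (hd : ∀ i, d i < d (f i)) :
    ∃ g : τ → ι, (∀ x, g x = σ x ∨ x = r (f (g x))) ∧ ∀ i, EvenOrInfinite {x | g x = i} := by
  let rest (S : Set ι) (i : ι) : Set τ := {x | σ x = i ∧ ¬ ∃ j ∈ S, r (f j) = x}
  obtain ⟨S, hS⟩ : ∃ S : Set ι, ∀ i, i ∈ S ↔ ¬ EvenOrInfinite (rest S i) := by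
    refine exists_set_mem_iff_of_wellFounded (measure d).wf _ fun i S => ?_
    refine not_congr (iff_of_eq (congrArg _ (Set.ext fun x => and_congr_right fun hx => ?_)))
    refine not_congr (exists_congr fun j => and_congr_left fun hj => and_iff_left ?_)
    have hfj : f j = i := by rw [← hx, ← hj, hr]
    exact hfj ▸ hd j
  obtain ⟨g, hg⟩ := exists_regrouping hf hr S
  refine ⟨g, fun x => ?_, fun i => ?_⟩
  · exact ((hg x (g x)).1 rfl).imp (fun h => h.1.symm) And.right
  · by_cases hi : i ∈ S
    · have hnot : r (f i) ∉ rest S i := fun h => h.2 ⟨i, hi, rfl⟩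
      convert evenOrInfinite_insert ((hS i).1 hi) hnot using 1
      ext x
      simp [hg, hi, rest, or_comm]
    · convert not_not.1 (mt (hS i).2 hi) using 1
      ext x
      simp [hg, hi, rest]

end Regroup

/-! ### Routing towards the roots of a forest -/

section Forest

variable {V τ : Type*} [PartialOrder V] {pos : τ → V}

/-- The partial order of a rooted forest, where `v ≤ w` means that `v` is an ancestor of `w`;
every vertex has finitely many ancestors, and they form a chain. -/
structure IsForestOrder (V : Type*) [PartialOrder V] : Prop where
  finite_Iic (v : V) : (Set.Iic v).Finite
  isChain_Iic (v : V) : IsChain (· ≤ ·) (Set.Iic v)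

namespace IsForestOrder

lemma le_total (hV : IsForestOrder V) {u v w : V} (hu : u ≤ w) (hv : v ≤ w) : u ≤ v ∨ v ≤ u :=
  (hV.isChain_Iic w).total hu hv

lemma ncard_Iic_lt (hV : IsForestOrder V) {v w : V} (h : v < w) :
    (Set.Iic v).ncard < (Set.Iic w).ncard :=
  Set.ncard_lt_ncard (Set.Iic_ssubset_Iic.2 h) (hV.finite_Iic w)

lemma wellFoundedLT (hV : IsForestOrder V) : WellFoundedLT V :=
  ⟨(measure fun v : V => (Set.Iic v).ncard).wf.mono fun _ _ => hV.ncard_Iic_lt⟩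

lemma exists_isMin_le (hV : IsForestOrder V) (v : V) : ∃ r ≤ v, IsMin r := by
  have := hV.wellFoundedLT
  simpa using exists_minimal_le_of_wellFoundedLT (fun _ => True) v trivial

lemma exists_isGreatest_inter_Iic (hV : IsForestOrder V) {X : Set V} {v : V}
    (h : (X ∩ Set.Iic v).Nonempty) : ∃ x, IsGreatest (X ∩ Set.Iic v) x := by
  obtain ⟨x, hx⟩ := ((hV.finite_Iic v).inter_of_right X).exists_maximal h
  exact ⟨x, hx.prop, fun y hy => (hV.le_total hy.2 hx.prop.2).elim id (hx.le_of_ge hy)⟩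

end IsForestOrder

/-- A stage in the construction of a routing towards the roots: `(t, v) ∈ M` means that the token
`t` has been moved from `pos t` to its ancestor `v` for good. The vertices in
`Set.Ioc v (pos t)` stand for the forest edges traversed, each edge being named by its lower end. -/
structure IsSettlement (pos : τ → V) (M : Set (τ × V)) : Prop where
  le : ∀ x ∈ M, x.2 ≤ pos x.1
  fst_ne : M.Pairwise fun x y => x.1 ≠ y.1
  disjoint : M.PairwiseDisjoint fun x => Set.Ioc x.2 (pos x.1)
  disjoint_unsettled : ∀ x ∈ M, ∀ t ∉ Prod.fst '' M,
    Disjoint (Set.Ioc x.2 (pos x.1)) (Set.Iic (pos t))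
  even : ∀ v, EvenOrInfinite {t | (t, v) ∈ M}

lemma IsSettlement.sUnion {c : Set (Set (τ × V))} (h : ∀ M ∈ c, IsSettlement pos M)
    (hc : IsChain (· ⊆ ·) c) : IsSettlement pos (⋃₀ c) where
  le := fun x ⟨M, hM, hx⟩ => (h M hM).le x hx
  fst_ne := (Set.pairwise_sUnion hc.directedOn).2 fun M hM => (h M hM).fst_ne
  disjoint := (Set.pairwiseDisjoint_sUnion hc.directedOn).2 fun M hM => (h M hM).disjoint
  disjoint_unsettled := fun x ⟨M, hM, hx⟩ t ht => (h M hM).disjoint_unsettled x hx t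
    fun htM => ht (Set.image_mono (Set.subset_sUnion_of_mem hM) htM)
  even v := by
    by_contra hodd
    obtain ⟨t, M, hM, -⟩ := nonempty_of_not_evenOrInfinite hodd
    obtain ⟨N, hN, hsub⟩ := hc.directedOn.exists_mem_subset_of_finite_of_subset_sUnion ⟨M, hM⟩
      ((finite_of_not_evenOrInfinite hodd).image (·, v)) (Set.image_subset_iff.2 fun _ h => h)
    have heq : {t | (t, v) ∈ ⋃₀ c} = {t | (t, v) ∈ N} :=
      (Set.image_subset_iff.1 hsub).antisymm fun _ h => ⟨N, hN, h⟩
    exact hodd (heq ▸ (h N hN).even v)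

lemma IsSettlement.union_image {M : Set (τ × V)} {A : Set τ} {N : Set (A × V)}
    (hM : IsSettlement pos M) (hN : IsSettlement (fun a : A => pos a) N)
    (hA : Disjoint A (Prod.fst '' M))
    (hAcl : ∀ a ∈ A, ∀ t ∉ Prod.fst '' M, t ∉ A → Disjoint (Set.Iic (pos a)) (Set.Iic (pos t))) :
    IsSettlement pos (M ∪ Prod.map Subtype.val id '' N) := by
  have hMA (x) (hx : x ∈ M) (a : A) : x.1 ≠ a := fun h =>
    Set.disjoint_left.1 hA a.2 ⟨x, hx, h⟩
  have hMN (x) (hx : x ∈ M) (y : A × V) :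
      Disjoint (Set.Ioc x.2 (pos x.1)) (Set.Ioc y.2 (pos y.1)) :=
    (hM.disjoint_unsettled x hx y.1 (Set.disjoint_left.1 hA y.1.2)).mono_right
      Set.Ioc_subset_Iic_self
  refine ⟨?_, ?_, ?_, ?_, fun v => ?_⟩
  · rintro _ (hx | ⟨y, hy, rfl⟩)
    exacts [hM.le _ hx, hN.le y hy]
  · rintro x (hx | ⟨x, hx, rfl⟩) y (hy | ⟨y, hy, rfl⟩) hxy
    · exact hM.fst_ne hx hy hxy
    · exact hMA x hx y.1
    · exact (hMA y hy x.1).symm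
    · exact fun h => hN.fst_ne hx hy (fun h => hxy (h ▸ rfl)) (Subtype.ext h)
  · rintro x (hx | ⟨x, hx, rfl⟩) y (hy | ⟨y, hy, rfl⟩) hxy
    · exact hM.disjoint hx hy hxy
    · exact hMN x hx y
    · exact (hMN y hy x).symm
    · exact hN.disjoint hx hy fun h => hxy (h ▸ rfl)
  · rintro x hx t ht
    rw [Set.image_union, Set.mem_union, not_or] at ht
    rcases hx with hx | ⟨x, hx, rfl⟩
    · exact hM.disjoint_unsettled x hx t ht.1
    · by_cases htA : t ∈ A
      · refine hN.disjoint_unsettled x hx ⟨t, htA⟩ fun ⟨y, hy, hyt⟩ => ht.2 ?_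
        exact ⟨_, ⟨y, hy, rfl⟩, congrArg Subtype.val hyt⟩
      · exact (hAcl x.1 x.1.2 t ht.1 htA).mono_left Set.Ioc_subset_Iic_self
  · convert evenOrInfinite_union (hM.even v)
      ((evenOrInfinite_image_iff Subtype.val_injective).2 (hN.even v)) ?_ using 1
    · ext t
      simp [Prod.map]
    · refine Set.disjoint_left.2 ?_
      rintro _ ht ⟨a, -, rfl⟩
      exact hMA _ ht a rfl

lemma isSettlement_graphOn {A : Set τ} {m : τ → V} (hle : ∀ t ∈ A, m t ≤ pos t)
    (hdisj : A.PairwiseDisjoint fun t => Set.Ioc (m t) (pos t))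
    (hcl : ∀ s ∈ A, ∀ t ∉ A, Disjoint (Set.Ioc (m s) (pos s)) (Set.Iic (pos t)))
    (heven : ∀ v, EvenOrInfinite {t ∈ A | m t = v}) : IsSettlement pos (A.graphOn m) where
  le := by rintro _ ⟨t, ht, rfl⟩; exact hle t ht
  fst_ne := by
    rintro _ ⟨s, -, rfl⟩ _ ⟨t, -, rfl⟩ hst (rfl : s = t)
    exact hst rfl
  disjoint := by
    rintro _ ⟨s, hs, rfl⟩ _ ⟨t, ht, rfl⟩ hst
    exact hdisj hs ht fun h => hst (h ▸ rfl)
  disjoint_unsettled := by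
    rintro _ ⟨s, hs, rfl⟩ t ht
    exact hcl s hs t (by simpa using ht)
  even v := by simpa using heven v

/-- The vertices that are ancestors of two different tokens. -/
def commonAncestors (pos : τ → V) : Set V := {v | ∃ s t, s ≠ t ∧ v ≤ pos s ∧ v ≤ pos t}

/-- `x` is the first vertex on the way from `pos t` to the root that is also an ancestor of
another token. -/
def IsEntry (pos : τ → V) (t : τ) (x : V) : Prop :=
  IsGreatest (commonAncestors pos ∩ Set.Iic (pos t)) x

lemma IsEntry.eq_of_mem_Ioc {s t : τ} {v x : V} (hx : IsEntry pos s x)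
    (hv : v ∈ Set.Ioc x (pos s)) (ht : v ≤ pos t) : s = t := by
  by_contra hst
  exact hv.1.not_ge (hx.2 ⟨⟨s, t, hst, hv.2, ht⟩, hv.2⟩)

lemma isSettlement_pair {s t : τ} {x : V} (hst : s ≠ t) (hs : IsEntry pos s x)
    (ht : IsEntry pos t x) : IsSettlement pos (({s, t} : Set τ).graphOn fun _ => x) := by
  have hentry : ∀ r ∈ ({s, t} : Set τ), IsEntry pos r x := by simp [hs, ht]
  refine isSettlement_graphOn (fun r hr => (hentry r hr).1.2) (fun r hr r' _ hrr' => ?_)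
    (fun r hr r' hr' => ?_) fun v => ?_
  · exact Set.disjoint_left.2 fun v hv hv' => hrr' ((hentry r hr).eq_of_mem_Ioc hv hv'.2)
  · refine Set.disjoint_left.2 fun v hv hv' => hr' ?_
    rwa [← (hentry r hr).eq_of_mem_Ioc hv hv']
  · by_cases hv : x = v
    · simpa [hv] using! evenOrInfinite_pair hst
    · simp [hv, evenOrInfinite_empty]

lemma IsEntry.exists_ne_le {t : τ} {x : V} (hx : IsEntry pos t x) : ∃ s, s ≠ t ∧ x ≤ pos s := by
  obtain ⟨s, s', hne, hs, hs'⟩ := hx.1.1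
  by_cases h : s = t
  exacts [⟨s', fun h' => hne (h.trans h'.symm), hs'⟩, ⟨s, h, hs⟩]

lemma IsForestOrder.exists_next (hV : IsForestOrder V) {e : τ → V}
    (h : ∀ t, ∃ s, e t < e s) :
    ∃ next : τ → τ, ∀ t, e t < e (next t) ∧ ∀ s, e t < e s → ¬ e s < e (next t) := by
  have := hV.wellFoundedLT
  choose next hnext using fun t => (InvImage.wf e wellFounded_lt).has_min {s | e t < e s} (h t)
  exact ⟨next, hnext⟩

lemma IsForestOrder.pairwise_disjoint_Ioc_next (hV : IsForestOrder V) {e : τ → V}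
    (he : e.Injective) {next : τ → τ} (hmin : ∀ t s, e t < e s → ¬ e s < e (next t)) :
    Pairwise (Function.onFun Disjoint fun t => Set.Ioc (e t) (e (next t))) := by
  refine fun s t hst => Set.disjoint_left.2 fun v hs ht => ?_
  rcases hV.le_total hs.1.le ht.1.le with h | h
  · exact hmin s t (h.lt_of_ne (he.ne hst)) (ht.1.trans_le hs.2)
  · exact hmin t s (h.lt_of_ne (he.ne hst.symm)) (hs.1.trans_le ht.2)

/- Every token may be left at its own entry or be moved on to the entry preceding it, and these
moves never share an edge. The group borrowing lemma chooses between the two. -/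
lemma exists_isSettlement_of_injective_entry (hV : IsForestOrder V) {e : τ → V}
    (hentry : ∀ t, IsEntry pos t (e t)) (he : e.Injective) :
    ∃ m : τ → V, IsSettlement pos (Set.univ.graphOn m) := by
  have hlt (t) : ∃ s, e t < e s := by
    obtain ⟨s, hst, hs⟩ := (hentry t).exists_ne_le
    exact ⟨s, ((hentry s).2 ⟨(hentry t).1.1, hs⟩).lt_of_ne (he.ne hst.symm)⟩
  obtain ⟨next, hnext⟩ := hV.exists_next hlt
  have hdisj := hV.pairwise_disjoint_Ioc_next he fun t => (hnext t).2
  have hinj : next.Injective := fun s t hst => by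
    by_contra hne
    exact Set.disjoint_left.1 (hdisj hne) ⟨(hnext s).1, le_rfl⟩ ⟨hst ▸ (hnext t).1, hst ▸ le_rfl⟩
  obtain ⟨g, hg, heven⟩ := exists_evenOrInfinite_regrouping id next hinj id (fun _ => rfl)
    (fun t => (Set.Iic (e t)).ncard) fun t => hV.ncard_Iic_lt (hnext t).1
  replace hg (t) : g t = t ∨ next (g t) = t := (hg t).imp_right Eq.symm
  have hmem (t v) (hv : v ∈ Set.Ioc (e (g t)) (pos t)) :
      v ∈ Set.Ioc (e t) (pos t) ∨ next (g t) = t ∧ v ∈ Set.Ioc (e (g t)) (e (next (g t))) := by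
    rcases hg t with h | h
    · exact .inl (by rwa [h] at hv)
    · by_cases hvt : v ≤ e t
      · exact .inr ⟨h, hv.1, h.symm ▸ hvt⟩
      · exact .inl ⟨((hV.le_total hv.2 (hentry t).1.2).resolve_left hvt).lt_of_not_ge hvt, hv.2⟩
  refine ⟨fun t => e (g t), isSettlement_graphOn (fun t _ => ?_) (fun s _ t _ hst => ?_)
    (fun _ _ t ht => (ht trivial).elim) fun v => ?_⟩
  · rcases hg t with h | h
    · exact h.symm ▸ (hentry t).1.2
    · exact (h ▸ (hnext (g t)).1.le).trans (hentry t).1.2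
  · refine Set.disjoint_left.2 fun v hs ht => hst ?_
    rcases hmem s v hs with hs' | ⟨hgs, hs'⟩
    · exact (hentry s).eq_of_mem_Ioc hs' ht.2
    rcases hmem t v ht with ht' | ⟨hgt, ht'⟩
    · exact ((hentry t).eq_of_mem_Ioc ht' hs.2).symm
    · rw [← hgs, ← hgt, hdisj.eq (Set.not_disjoint_iff.2 ⟨v, hs', ht'⟩)]
  · simpa using evenOrInfinite_fibers_comp heven e v

lemma exists_nonempty_isSettlement [Nonempty τ] (hV : IsForestOrder V)
    (h : ∀ t, (commonAncestors pos ∩ Set.Iic (pos t)).Nonempty) :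
    ∃ N : Set (τ × V), N.Nonempty ∧ IsSettlement pos N := by
  choose e he using fun t => hV.exists_isGreatest_inter_Iic (h t)
  by_cases hinj : e.Injective
  · obtain ⟨m, hm⟩ := exists_isSettlement_of_injective_entry hV he hinj
    exact ⟨_, Set.univ_nonempty.image _, hm⟩
  · obtain ⟨s, t, heq, hst⟩ := Function.not_injective_iff.1 hinj
    exact ⟨_, (Set.insert_nonempty _ _).image _, isSettlement_pair hst (he s) (heq ▸ he t)⟩

lemma disjoint_Iic_of_maximal_isSettlement (hV : IsForestOrder V) {M : Set (τ × V)}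
    (hM : Maximal (IsSettlement pos) M) {s t : τ} (hs : s ∉ Prod.fst '' M) (ht : t ∉ Prod.fst '' M)
    (hst : s ≠ t) : Disjoint (Set.Iic (pos s)) (Set.Iic (pos t)) := by
  let A : Set τ := {a | a ∉ Prod.fst '' M ∧ ∃ b ∉ Prod.fst '' M, a ≠ b ∧
    ¬ Disjoint (Set.Iic (pos a)) (Set.Iic (pos b))}
  by_contra hdisj
  have : Nonempty A := ⟨s, hs, t, ht, hst, hdisj⟩
  have hA (a : A) : (commonAncestors (fun a : A => pos a) ∩ Set.Iic (pos a)).Nonempty := by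
    obtain ⟨a, ha, b, hb, hab, h⟩ := a
    obtain ⟨v, hva, hvb⟩ := Set.not_disjoint_iff.1 h
    exact ⟨v, ⟨⟨a, ha, b, hb, hab, h⟩, ⟨b, hb, a, ha, hab.symm, fun h' => h h'.symm⟩,
      mt (congrArg Subtype.val) hab, hva, hvb⟩, hva⟩
  obtain ⟨N, ⟨x, hx⟩, hN⟩ := exists_nonempty_isSettlement hV hA
  have hMN := hM.prop.union_image hN (Set.disjoint_left.2 fun a ha => ha.1)
    fun a ha t ht htA => ?_
  · exact x.1.2.1 ⟨_, hM.le_of_ge hMN Set.subset_union_left (.inr ⟨x, hx, rfl⟩), rfl⟩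
  · by_contra h
    exact htA ⟨ht, a, ha.1, by rintro rfl; exact htA ha, fun h' => h h'.symm⟩

lemma exists_maximal_isSettlement (pos : τ → V) : ∃ M, Maximal (IsSettlement pos) M :=
  zorn_subset {M | IsSettlement pos M} fun c hc hchain =>
    ⟨⋃₀ c, .sUnion hc hchain, fun _ => Set.subset_sUnion_of_mem⟩

lemma IsForestOrder.exists_routing (hV : IsForestOrder V) (pos : τ → V) :
    ∃ fin : τ → V, fin ≤ pos ∧
      Pairwise (Function.onFun Disjoint fun t => Set.Ioc (fin t) (pos t)) ∧
      ∀ v, ¬ IsMin v → EvenOrInfinite {t | fin t = v} := by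
  obtain ⟨M, hM⟩ := exists_maximal_isSettlement pos
  have hsettled (t) (ht : t ∈ Prod.fst '' M) : ∃ v, (t, v) ∈ M := by simpa using ht
  choose root hroot hmin using hV.exists_isMin_le
  classical
  let fin (t : τ) : V := if ht : t ∈ Prod.fst '' M then (hsettled t ht).choose else root (pos t)
  have hfin (t) (ht : t ∈ Prod.fst '' M) : (t, fin t) ∈ M := by
    simpa only [fin, dif_pos ht] using (hsettled t ht).choose_spec
  have hfin' (t) (ht : t ∉ Prod.fst '' M) : fin t = root (pos t) := dif_neg ht
  refine ⟨fin, fun t => ?_, fun s t hst => ?_, fun v hv => ?_⟩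
  · by_cases ht : t ∈ Prod.fst '' M
    exacts [hM.prop.le _ (hfin t ht), hfin' t ht ▸ hroot _]
  · by_cases hs : s ∈ Prod.fst '' M <;> by_cases ht : t ∈ Prod.fst '' M
    · exact hM.prop.disjoint (hfin s hs) (hfin t ht) fun h => hst (congrArg Prod.fst h)
    · exact (hM.prop.disjoint_unsettled _ (hfin s hs) t ht).mono_right Set.Ioc_subset_Iic_self
    · exact (hM.prop.disjoint_unsettled _ (hfin t ht) s hs).symm.mono_left Set.Ioc_subset_Iic_self
    · exact (disjoint_Iic_of_maximal_isSettlement hV hM hs ht hst).mono Set.Ioc_subset_Iic_self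
        Set.Ioc_subset_Iic_self
  · convert hM.prop.even v using 1
    ext t
    constructor
    · rintro rfl
      exact hfin t (by_contra fun ht => hv (hfin' t ht ▸ hmin _))
    · refine fun ht => by_contra fun hne => ?_
      exact hM.prop.fst_ne ht (hfin t ⟨_, ht, rfl⟩) (fun h => hne (congrArg Prod.snd h).symm) rfl

end Forest

section Hasse

variable {V τ : Type*} [PartialOrder V]

lemma IsForestOrder.exists_covBy_of_lt (hV : IsForestOrder V) {r v : V} (h : r < v) :
    ∃ u, r ≤ u ∧ u ⋖ v := by
  obtain ⟨u, ⟨huv, -⟩, hu⟩ :=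
    hV.exists_isGreatest_inter_Iic (X := Set.Iio v) (v := v) ⟨r, h, h.le⟩
  exact ⟨u, hu ⟨h, h.le⟩, huv, fun w huw hwv => huw.not_ge (hu ⟨hwv, hwv.le⟩)⟩

/-- The edges of the Hasse diagram whose larger endpoint lies in `S`. In a forest order they join
the elements of `S` to their parents. -/
def parentEdges (S : Set V) : Set (Sym2 V) := {e | ∃ u, ∃ v ∈ S, u ⋖ v ∧ s(u, v) = e}

lemma parentEdges_mono {S S' : Set V} (h : S ⊆ S') : parentEdges S ⊆ parentEdges S' :=
  fun _ ⟨u, v, hv, huv⟩ => ⟨u, v, h hv, huv⟩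

lemma parentEdges_subset_edgeSet_hasse (S : Set V) : parentEdges S ⊆ (hasse V).edgeSet := by
  rintro _ ⟨u, v, -, huv, rfl⟩
  exact .inl huv

lemma disjoint_parentEdges {S S' : Set V} (h : Disjoint S S') :
    Disjoint (parentEdges S) (parentEdges S') := by
  refine Set.disjoint_left.2 ?_
  rintro _ ⟨u, v, hv, huv, rfl⟩ ⟨u', v', hv', huv', heq⟩
  rcases Sym2.eq_iff.1 heq with ⟨rfl, rfl⟩ | ⟨rfl, rfl⟩
  · exact Set.disjoint_left.1 h hv hv'
  · exact huv.lt.asymm huv'.lt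

lemma IsForestOrder.reachable_parentEdges_Ioc (hV : IsForestOrder V) {r v : V} (h : r ≤ v) :
    (fromEdgeSet (parentEdges (Set.Ioc r v))).Reachable v r := by
  have := hV.wellFoundedLT
  induction v using WellFoundedLT.induction with
  | ind v ih =>
    rcases h.eq_or_lt with rfl | hlt
    · rfl
    · obtain ⟨u, hru, huv⟩ := hV.exists_covBy_of_lt hlt
      have hadj : (fromEdgeSet (parentEdges (Set.Ioc r v))).Adj v u :=
        ⟨⟨u, v, ⟨hlt, le_rfl⟩, huv, Sym2.eq_swap⟩, huv.lt.ne'⟩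
      exact hadj.reachable.trans ((ih u huv.lt hru).mono
        (fromEdgeSet_mono (parentEdges_mono (Set.Ioc_subset_Ioc_right huv.le))))

lemma IsForestOrder.exists_routes_hasse (hV : IsForestOrder V) (pos : τ → V) :
    ∃ fin ≤ pos, Routes (hasse V).edgeSet pos fin ∧
      ∀ v, ¬ IsMin v → EvenOrInfinite {t | fin t = v} := by
  obtain ⟨fin, hle, hdisj, heven⟩ := hV.exists_routing pos
  exact ⟨fin, hle, ⟨fun t => parentEdges (Set.Ioc (fin t) (pos t)),
    fun t => parentEdges_subset_edgeSet_hasse _, fun s t hst => disjoint_parentEdges (hdisj hst),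
    fun t => hV.reachable_parentEdges_Ioc (hle t)⟩, heven⟩

end Hasse

section Descent

variable {V τ : Type*} {p : V → V} {h : V → ℕ}

lemma iterate_eq_or_lt (hp : ∀ v, p v = v ∨ h (p v) < h v) (k : ℕ) (v : V) :
    p^[k] v = v ∨ h (p^[k] v) < h v := by
  induction k with
  | zero => exact .inl rfl
  | succ k ih =>
    rw [Function.iterate_succ_apply']
    grind

/-- The order in which the ancestors of a vertex are its iterated images under the parent map `p`.
The roots are the fixed points of `p`. -/
abbrev parentOrder (hp : ∀ v, p v = v ∨ h (p v) < h v) : PartialOrder V where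
  le v w := ∃ k, p^[k] w = v
  le_refl v := ⟨0, rfl⟩
  le_trans := by
    rintro _ _ w ⟨k, rfl⟩ ⟨l, rfl⟩
    exact ⟨k + l, Function.iterate_add_apply p k l w⟩
  le_antisymm := by
    rintro v w ⟨k, hk⟩ ⟨l, hl⟩
    have := iterate_eq_or_lt hp k w
    have := iterate_eq_or_lt hp l v
    grind

lemma isForestOrder_parentOrder (hp : ∀ v, p v = v ∨ h (p v) < h v) :
    @IsForestOrder V (parentOrder hp) := by
  let := parentOrder hp
  refine ⟨fun v => ?_, ?_⟩
  · induction v using (measure h).wf.induction with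
    | h v ih =>
      rcases hp v with hv | hv
      · refine (Set.finite_singleton v).subset ?_
        rintro _ ⟨k, rfl⟩
        exact Function.iterate_fixed hv k
      · refine ((ih (p v) hv).insert v).subset ?_
        rintro _ ⟨_ | k, rfl⟩
        exacts [.inl rfl, .inr ⟨k, rfl⟩]
  · rintro v _ ⟨k, rfl⟩ _ ⟨l, rfl⟩ -
    rcases le_total k l with hkl | hkl <;> obtain ⟨m, rfl⟩ := Nat.exists_eq_add_of_le' hkl
    · exact .inr ⟨m, (Function.iterate_add_apply p m k v).symm⟩
    · exact .inl ⟨m, (Function.iterate_add_apply p m l v).symm⟩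

lemma eq_parent_of_covBy (hp : ∀ v, p v = v ∨ h (p v) < h v) {u v : V}
    (huv : @CovBy V (parentOrder hp).toLT u v) : u = p v := by
  let := parentOrder hp
  obtain ⟨_ | k, hk⟩ := huv.le
  · exact (huv.lt.ne' hk).elim
  · refine ((huv.eq_or_eq ⟨k, hk⟩ ⟨1, rfl⟩).resolve_right fun hv => huv.lt.ne' ?_).symm
    exact (Function.iterate_fixed hv (k + 1)).symm.trans hk

lemma exists_isForestOrder_hasse_le (H : SimpleGraph V) (h : V → ℕ) :
    ∃ _ : PartialOrder V, IsForestOrder V ∧ hasse V ≤ H ∧ (∀ v w : V, v < w → h v < h w) ∧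
      ∀ v : V, (∃ u, H.Adj v u ∧ h u < h v) → ¬ IsMin v := by
  classical
  let p (v : V) : V := if hv : ∃ u, H.Adj v u ∧ h u < h v then hv.choose else v
  have hlower (v : V) (hv : ∃ u, H.Adj v u ∧ h u < h v) : H.Adj v (p v) ∧ h (p v) < h v := by
    simpa only [p, dif_pos hv] using hv.choose_spec
  have hroot (v : V) (hv : ¬ ∃ u, H.Adj v u ∧ h u < h v) : p v = v := dif_neg hv
  have hp (v : V) : p v = v ∨ h (p v) < h v :=
    or_iff_not_imp_left.2 fun hv => (hlower v (by_contra fun hn => hv (hroot v hn))).2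
  let := parentOrder hp
  have hcov (u v : V) (huv : u ⋖ v) : H.Adj v u := by
    obtain rfl := eq_parent_of_covBy hp huv
    exact (hlower v (by_contra fun hv => huv.lt.ne (hroot v hv))).1
  refine ⟨parentOrder hp, isForestOrder_parentOrder hp, ?_, ?_, ?_⟩
  · rintro u v (huv | huv)
    exacts [(hcov u v huv).symm, hcov v u huv]
  · intro v w hvw
    obtain ⟨k, hk⟩ := hvw.le
    exact hk ▸ (iterate_eq_or_lt hp k w).resolve_left fun hw => hvw.ne (hk.symm.trans hw)
  · intro v hv hmin
    exact (hlower v hv).1.ne (hmin.eq_of_le ⟨1, rfl⟩).symm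

lemma exists_routes_descending (H : SimpleGraph V) (h : V → ℕ) (pos : τ → V) :
    ∃ fin, Routes H.edgeSet pos fin ∧ (∀ t, fin t = pos t ∨ h (fin t) < h (pos t)) ∧
      ∀ v, (∃ u, H.Adj v u ∧ h u < h v) → EvenOrInfinite {t | fin t = v} := by
  obtain ⟨_, hV, hle, hlt, hmin⟩ := exists_isForestOrder_hasse_le H h
  obtain ⟨fin, hfin, hroutes, heven⟩ := hV.exists_routes_hasse pos
  exact ⟨fin, hroutes.mono (edgeSet_mono hle),
    fun t => (hfin t).eq_or_lt.imp_right (hlt _ _), fun v hv => heven v (hmin v hv)⟩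

end Descent

/-! ### Routing towards a set of vertices -/

section Target

variable {V τ : Type*} {H : SimpleGraph V} {R : Set V} {pos fin : τ → V}

lemma exists_height (H : SimpleGraph V) (R : Set V) :
    ∃ h : V → ℕ, (∀ r ∈ R, h r = 0) ∧
      ∀ v ∉ R, (∃ r ∈ R, H.Reachable v r) → ∃ u, H.Adj v u ∧ h u < h v := by
  let lengths (v : V) : Set ℕ := {n | ∃ r ∈ R, ∃ w : H.Walk v r, w.length = n}
  refine ⟨fun v => sInf (lengths v), fun r hr => ?_, ?_⟩
  · exact Nat.sInf_eq_zero.2 (.inl ⟨r, hr, .nil, rfl⟩)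
  · rintro v hv ⟨r, hr, ⟨w⟩⟩
    obtain ⟨r, hr, w, hw⟩ := Nat.sInf_mem (s := lengths v) ⟨w.length, r, hr, w, rfl⟩
    cases w with
    | nil => exact (hv hr).elim
    | cons hadj w =>
      refine ⟨_, hadj, ?_⟩
      change sInf _ < sInf (lengths v)
      rw [← hw, Walk.length_cons]
      exact Nat.lt_succ_of_le (Nat.sInf_le ⟨r, hr, w, rfl⟩)

lemma Routes.reachable (h : Routes H.edgeSet pos fin) (t : τ) : H.Reachable (pos t) (fin t) := by
  obtain ⟨L, hL, -, hreach⟩ := h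
  exact (hreach t).mono ((fromEdgeSet_mono (hL t)).trans (fromEdgeSet_edgeSet H).le)

lemma exists_routes_into (hR : ∀ t, ∃ r ∈ R, H.Reachable (pos t) r) :
    ∃ fin, Routes H.edgeSet pos fin ∧ (∀ t, pos t ∈ R → fin t = pos t) ∧
      ∀ v ∉ R, EvenOrInfinite {t | fin t = v} := by
  obtain ⟨h, hzero, hdesc⟩ := exists_height H R
  obtain ⟨fin, hroutes, hfin, heven⟩ := exists_routes_descending H h pos
  refine ⟨fin, hroutes, fun t ht => ?_, fun v hv => ?_⟩
  · exact (hfin t).resolve_right fun hlt => Nat.not_lt_zero _ (hzero _ ht ▸ hlt)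
  · by_contra hodd
    obtain ⟨t, rfl⟩ := nonempty_of_not_evenOrInfinite hodd
    obtain ⟨r, hr, htr⟩ := hR t
    exact hodd (heven _ (hdesc _ hv ⟨r, hr, (hroutes.reachable t).symm.trans htr⟩))

lemma evenOrInfinite_fiber_of_forall_ne [Finite τ] (f : τ → V) (r : V)
    (huniv : EvenOrInfinite (Set.univ : Set τ))
    (h : ∀ v ≠ r, EvenOrInfinite {t | f t = v}) : EvenOrInfinite {t | f t = r} := by
  have hcompl : EvenOrInfinite {t | f t = r}ᶜ := by
    refine evenOrInfinite_of_fibers f fun v => ?_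
    by_cases hv : v = r
    · convert evenOrInfinite_empty (α := τ) using 1
      ext t
      simp [hv]
    · convert h v hv using 1
      ext t
      simp +contextual [hv]
  rw [EvenOrInfinite, Set.ncard_univ, ← Set.ncard_add_ncard_compl {t | f t = r}] at huniv
  exact (Nat.even_add.1 huniv).2 hcompl

/- If there are infinitely many tokens, some vertex carries infinitely many of them already, and
they stay there. Otherwise the root is even because of the total parity. -/
lemma evenlyRoutable_of_reachable (hpos : (Set.range pos).Finite)
    (hreach : ∀ s t, H.Reachable (pos s) (pos t)) (heven : EvenOrInfinite (Set.univ : Set τ)) :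
    EvenlyRoutable H.edgeSet pos := by
  rcases isEmpty_or_nonempty τ with hτ | ⟨⟨t₀⟩⟩
  · exact ⟨pos, .refl _ pos, fun v => by simp [Set.eq_empty_of_isEmpty, evenOrInfinite_empty]⟩
  obtain ⟨s, hs⟩ : ∃ s, Infinite τ → {t | pos t = pos s}.Infinite := by
    by_cases hτ : Infinite τ
    · have : Finite (Set.range pos) := hpos
      obtain ⟨⟨_, s, rfl⟩, hs⟩ := Finite.exists_infinite_fiber (Set.rangeFactorization pos)
      refine ⟨s, fun _ => (Set.infinite_coe_iff.1 hs).mono fun t ht => ?_⟩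
      simpa [Set.rangeFactorization, Subtype.ext_iff] using ht
    · exact ⟨t₀, fun h => (hτ h).elim⟩
  obtain ⟨fin, hroutes, hstay, hfin⟩ :=
    exists_routes_into (R := {pos s}) fun t => ⟨pos s, rfl, hreach t s⟩
  refine ⟨fin, hroutes, fun v => ?_⟩
  by_cases hv : v = pos s
  · subst hv
    rcases finite_or_infinite τ with hτ | hτ
    · exact evenOrInfinite_fiber_of_forall_ne fin _ heven hfin
    · exact evenOrInfinite_of_infinite ((hs hτ).mono fun t ht => (hstay t ht).trans ht)
  · exact hfin v hv

end Target

section Walks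

variable {V : Type*} {G : SimpleGraph V} {X : Set V} {a b u v : V}

lemma edgeSet_subset_sym2 {w : G.Walk a b} (h : ∀ v ∈ w.support, v ∈ X) : w.edgeSet ⊆ X.sym2 := by
  rintro ⟨u, v⟩ he
  exact ⟨h u (w.fst_mem_support_of_mem_edges he), h v (w.snd_mem_support_of_mem_edges he)⟩

lemma reachable_fromEdgeSet_edgeSet (w : G.Walk a b) (hu : u ∈ w.support) :
    (fromEdgeSet w.edgeSet).Reachable a u := by
  classical
  refine ⟨(w.takeUntil u hu).transfer _ fun e he => ?_⟩
  rw [edgeSet_fromEdgeSet]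
  exact ⟨w.edges_takeUntil_subset_edges hu he, G.not_isDiag_of_mem_edgeSet
    ((w.takeUntil u hu).edges_subset_edgeSet he)⟩

lemma exists_reachable_deleteEdges_sym2 (h : G.Reachable v u) (hu : u ∈ X) :
    ∃ s ∈ X, (G.deleteEdges X.sym2).Reachable v s := by
  obtain ⟨w⟩ := h
  induction w with
  | nil => exact ⟨_, hu, .rfl⟩
  | @cons v v' u hadj _ ih =>
    by_cases hv : v ∈ X
    · exact ⟨v, hv, .rfl⟩
    · obtain ⟨s, hs, hvs⟩ := ih hu
      have hadj' : (G.deleteEdges X.sym2).Adj v v' := deleteEdges_adj.2 ⟨hadj, fun h => hv h.1⟩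
      exact ⟨s, hs, hadj'.reachable.trans hvs⟩

end Walks

section Chain

variable {V τ : Type*} {G : SimpleGraph V} {E : Set (Sym2 V)} {pos : τ → V}

lemma EvenlyRoutable.of_restrict {R : Set V}
    (h : EvenlyRoutable E fun t : {t // pos t ∈ R} => pos t)
    (hR : ∀ v ∉ R, EvenOrInfinite {t | pos t = v}) : EvenlyRoutable E pos := by
  classical
  obtain ⟨fin, ⟨L, hLE, hLd, hLr⟩, heven⟩ := h
  let fin' (t : τ) : V := if ht : pos t ∈ R then fin ⟨t, ht⟩ else pos t
  let L' (t : τ) : Set (Sym2 V) := if ht : pos t ∈ R then L ⟨t, ht⟩ else ∅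
  have hin (t : {t // pos t ∈ R}) : fin' t = fin t := dif_pos t.2
  have hout (t) (ht : pos t ∉ R) : fin' t = pos t := dif_neg ht
  refine ⟨fin', ⟨L', fun t => ?_, fun s t hst => ?_, fun t => ?_⟩, fun v => ?_⟩
  · by_cases ht : pos t ∈ R <;> simp [L', ht, hLE]
  · by_cases hs : pos s ∈ R
    · by_cases ht : pos t ∈ R
      · simpa [L', hs, ht, Function.onFun] using
          hLd (Subtype.mk_eq_mk.not.2 hst : ⟨s, hs⟩ ≠ ⟨t, ht⟩)
      · simp [L', ht, Function.onFun]
    · simp [L', hs, Function.onFun]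
  · by_cases ht : pos t ∈ R
    · simpa [fin', L', ht] using hLr ⟨t, ht⟩
    · simp [fin', ht]
  · have hrest : EvenOrInfinite {t | pos t = v ∧ v ∉ R} := by
      by_cases hv : v ∈ R
      · simpa [hv] using evenOrInfinite_empty
      · simpa [hv] using hR v hv
    convert evenOrInfinite_union
      ((evenOrInfinite_image_iff Subtype.val_injective).2 (heven v)) hrest ?_ using 1
    · ext t
      refine ⟨fun h => ?_, ?_⟩
      · by_cases ht : pos t ∈ R
        · exact .inl ⟨⟨t, ht⟩, (hin ⟨t, ht⟩).symm.trans h, rfl⟩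
        · have hv : pos t = v := (hout t ht).symm.trans h
          exact .inr ⟨hv, hv ▸ ht⟩
      · rintro (⟨t, h, rfl⟩ | ⟨rfl, ht⟩)
        exacts [(hin t).trans h, hout t ht]
    · refine Set.disjoint_left.2 ?_
      rintro _ ⟨t, -, rfl⟩ ⟨hv, hvR⟩
      exact hvR (hv ▸ t.2)

lemma evenlyRoutable_of_walks {a : ℕ → V} (W : ∀ n, G.Walk (a n) (a (n + 1)))
    (hW : Pairwise (Function.onFun Disjoint fun n => (W n).edgeSet))
    (t : ℕ → τ) (ha : ∀ n, pos (t n) = a n) (σ : τ → ℕ) (hσ : ∀ n, σ (t n) = n)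
    (hpos : ∀ x, pos x ∈ (W (σ x)).support) : EvenlyRoutable (⋃ n, (W n).edgeSet) pos := by
  obtain ⟨g, hg, heven⟩ := exists_evenOrInfinite_regrouping σ Nat.succ Nat.succ_injective t hσ id
    Nat.lt_succ_self
  have hsupp (x : τ) : pos x ∈ (W (g x)).support := by
    rcases hg x with h | h
    · rw [h]
      exact hpos x
    · rw [h, ha, ← h]
      exact (W (g x)).end_mem_support
  refine .of_fibers g hW fun n => ?_
  replace hsupp (x : {x // g x = n}) : pos x ∈ (W n).support := by
    obtain ⟨x, rfl⟩ := x
    exact hsupp x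
  have hreach (x : {x // g x = n}) := reachable_fromEdgeSet_edgeSet (W n) (hsupp x)
  refine (evenlyRoutable_of_reachable ?_ (fun x y => (hreach x).symm.trans (hreach y)) ?_).mono
    ((edgeSet_fromEdgeSet _).subset.trans Set.sdiff_subset)
  · refine (W n).support.finite_toSet.subset ?_
    rintro _ ⟨x, rfl⟩
    exact hsupp x
  · rw [← evenOrInfinite_image_iff Subtype.val_injective]
    simpa using heven n

lemma hasTJoin_of_walks_s12 (hG : G.Connected) {T : Set V} (t : ℕ → T) (ht : t.Injective)
    (W : ∀ n, G.Walk (t n) (t (n + 1)))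
    (hW : Pairwise (Function.onFun Disjoint fun n => (W n).edgeSet)) : G.HasTJoin T := by
  let R : Set V := {v | ∃ n, v ∈ (W n).support}
  have htR (n) : (t n : V) ∈ R := ⟨n, (W n).start_mem_support⟩
  have hWR : ⋃ n, (W n).edgeSet ⊆ R.sym2 := Set.iUnion_subset fun n =>
    edgeSet_subset_sym2 fun v hv => ⟨n, hv⟩
  obtain ⟨mid, hmid, hstay, heven⟩ := exists_routes_into (H := G.deleteEdges R.sym2)
    (pos := Subtype.val) fun x : T => exists_reachable_deleteEdges_sym2 (hG x (t 0)) (htR 0)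
  replace hstay (n) : mid (t n) = t n := hstay (t n) (htR n)
  choose m hm using fun x : {x // mid x ∈ R} => x.2
  let t' (n : ℕ) : {x // mid x ∈ R} := ⟨t n, (hstay n).symm ▸ htR n⟩
  have ht' : t'.Injective := fun i j h => ht (congrArg Subtype.val h)
  have hrest : EvenlyRoutable (⋃ n, (W n).edgeSet) fun x : {x // mid x ∈ R} => mid x := by
    refine evenlyRoutable_of_walks W hW t' hstay (Function.extend t' id m) (ht'.extend_apply id m)
      fun x => ?_
    by_cases hx : ∃ n, t' n = x
    · obtain ⟨n, rfl⟩ := hx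
      rw [ht'.extend_apply, hstay]
      exact (W n).start_mem_support
    · rw [Function.extend_apply' _ _ _ hx]
      exact hm x
  refine EvenlyRoutable.hasTJoin ((hmid.trans_evenlyRoutable (.of_restrict hrest heven) ?_).mono ?_)
  · rw [edgeSet_deleteEdges]
    exact Set.disjoint_sdiff_left.mono_right hWR
  · refine Set.union_subset (edgeSet_mono (deleteEdges_le _)) (Set.iUnion_subset fun n e he => ?_)
    exact (W n).edges_subset_edgeSet he

end Chain

/-! ### Bridges -/

section Bridges

variable {V : Type*} {G H : SimpleGraph V} {B : Set (Sym2 V)} {x y u v : V}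

/-- The set of bridges of `G`. It is cut down to `G.edgeSet` because `IsBridge` does not require
its argument to be an edge. -/
def bridges (G : SimpleGraph V) : Set (Sym2 V) := {e ∈ G.edgeSet | G.IsBridge e}

lemma bridges_deleteEdges_subset (hB : ∀ e ∈ B, G.IsBridge e) :
    bridges (G.deleteEdges B) ⊆ bridges G := by
  rintro e ⟨he, hbridge⟩
  have heG : e ∈ G.edgeSet := edgeSet_mono (deleteEdges_le B) he
  refine ⟨heG, (isBridge_iff_forall_cycle_notMem heG).2 fun u c hc hec => ?_⟩
  have hcB (f) (hf : f ∈ c.edges) : f ∈ (G.deleteEdges B).edgeSet := by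
    rw [edgeSet_deleteEdges]
    exact ⟨c.edges_subset_edgeSet hf, fun hfB => (hB f hfB).notMem_edges_of_isCycle hc hf⟩
  exact hbridge.notMem_edges_of_isCycle (hc.transfer hcB) (by rwa [Walk.edges_transfer])

lemma bridges_deleteEdges_bridges (G : SimpleGraph V) :
    bridges (G.deleteEdges (bridges G)) = ∅ := by
  refine Set.eq_empty_of_forall_notMem fun e he => ?_
  have he' : e ∈ G.edgeSet \ bridges G := edgeSet_deleteEdges (bridges G) ▸ he.1
  exact he'.2 (bridges_deleteEdges_subset (fun e he => he.2) he)

lemma reachable_of_forall_adj (h : ∀ ⦃u v⦄, G.Adj u v → H.Reachable u v) (hxy : G.Reachable x y) :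
    H.Reachable x y := by
  obtain ⟨w⟩ := hxy
  induction w with
  | nil => rfl
  | cons hadj _ ih => exact (h hadj).trans ih

lemma bridges_deleteEdges_singleton_subset (w : (G.deleteEdges {s(u, v)}).Walk u v) :
    bridges (G.deleteEdges {s(u, v)}) ⊆ bridges G ∪ w.edgeSet := by
  rintro ⟨x, y⟩ ⟨hxy, hbridge⟩
  have hxyG : s(x, y) ∈ G.edgeSet := edgeSet_mono (deleteEdges_le _) hxy
  by_contra! hnot
  simp only [Set.mem_union, not_or] at hnot
  have hreach : (G.deleteEdges {s(x, y)}).Reachable x y :=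
    not_not.1 (mt isBridge_iff.2 fun h => hnot.1 ⟨hxyG, h⟩)
  refine isBridge_iff.1 hbridge (reachable_of_forall_adj (fun a b hab => ?_) hreach)
  have huv : ((G.deleteEdges {s(u, v)}).deleteEdges {s(x, y)}).Reachable u v :=
    ⟨w.toDeleteEdges _ fun e he => by rintro rfl; exact hnot.2 he⟩
  by_cases heq : s(a, b) = s(u, v)
  · rcases Sym2.eq_iff.1 heq with ⟨rfl, rfl⟩ | ⟨rfl, rfl⟩
    exacts [huv, huv.symm]
  · rw [deleteEdges_adj] at hab
    exact (deleteEdges_adj.2 ⟨deleteEdges_adj.2 ⟨hab.1, heq⟩, hab.2⟩).reachable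

lemma finite_bridges_deleteEdges_singleton (h : (bridges G).Finite) (e : Sym2 V) :
    (bridges (G.deleteEdges {e})).Finite := by
  by_cases he : G.IsBridge e
  · exact h.subset (bridges_deleteEdges_subset (by simpa using he))
  · induction e with | h u v =>
    obtain ⟨w⟩ : (G.deleteEdges {s(u, v)}).Reachable u v := not_not.1 (mt isBridge_iff.2 he)
    exact (h.union w.edges.finite_toSet).subset (bridges_deleteEdges_singleton_subset w)

lemma finite_bridges_deleteEdges (h : (bridges G).Finite) {F : Set (Sym2 V)} (hF : F.Finite) :
    (bridges (G.deleteEdges F)).Finite := by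
  induction F, hF using Set.Finite.induction_on with
  | empty => simpa using h
  | @insert e F _ _ ih =>
    rw [← Set.union_singleton, ← deleteEdges_deleteEdges]
    exact finite_bridges_deleteEdges_singleton ih e

end Bridges

section EdgeDisjointWalks

variable {V : Type*} {G : SimpleGraph V} {x y z s : V}

lemma exists_edgeDisjoint_walks_of_detour [DecidableEq V] {R₁ R₂ : G.Walk x y}
    (hd : R₁.edges.Disjoint R₂.edges) (hadj : G.Adj y z) (hs : s ∈ R₁.support) (S : G.Walk z s)
    (hS : S.edges.Disjoint R₂.edges) (hSe : s(y, z) ∉ S.edges)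
    (hRe : s(y, z) ∉ (R₁.takeUntil s hs).edges) :
    ∃ Q₁ Q₂ : G.Walk x z, Q₁.edges.Disjoint Q₂.edges := by
  refine ⟨(R₁.takeUntil s hs).append S.reverse, R₂.concat hadj, fun e he he' => ?_⟩
  rw [Walk.edges_append, Walk.edges_reverse, List.mem_append, List.mem_reverse] at he
  rw [Walk.edges_concat, List.concat_eq_append, List.mem_append, List.mem_singleton] at he'
  rcases he with he | he <;> rcases he' with he' | rfl
  · exact hd (R₁.edges_takeUntil_subset_edges hs he) he'
  · exact hRe he
  · exact hS he he'
  · exact hSe he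

lemma exists_edgeDisjoint_walks_of_mem_edges_s12 {R₁ R₂ : G.Walk x y}
    (hR₁ : R₁.IsPath) (hd : R₁.edges.Disjoint R₂.edges) (he : s(y, z) ∈ R₁.edges) :
    ∃ Q₁ Q₂ : G.Walk x z, Q₁.edges.Disjoint Q₂.edges := by
  classical
  have hz := R₁.snd_mem_support_of_mem_edges he
  have hadj := R₁.adj_of_mem_edges he
  refine exists_edgeDisjoint_walks_of_detour hd hadj hz .nil (by simp) (by simp) fun h => ?_
  exact Walk.endpoint_notMem_support_takeUntil hR₁ hz hadj.ne
    (Walk.fst_mem_support_of_mem_edges _ h)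

lemma exists_edgeDisjoint_walks_of_adj_s12 {R₁ R₂ : G.Walk x y} (hR₁ : R₁.IsPath) (hR₂ : R₂.IsPath)
    (hd : R₁.edges.Disjoint R₂.edges) (hadj : G.Adj y z) (hyz : ¬ G.IsBridge s(y, z)) :
    ∃ Q₁ Q₂ : G.Walk x z, Q₁.edges.Disjoint Q₂.edges := by
  classical
  by_cases he₁ : s(y, z) ∈ R₁.edges
  · exact exists_edgeDisjoint_walks_of_mem_edges_s12 hR₁ hd he₁
  by_cases he₂ : s(y, z) ∈ R₂.edges
  · exact exists_edgeDisjoint_walks_of_mem_edges_s12 hR₂ hd.symm he₂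
  let X : Set V := {v | v ∈ R₁.support} ∪ {v | v ∈ R₂.support}
  have hreach : (G.deleteEdges {s(y, z)}).Reachable z y := (not_not.1 (mt isBridge_iff.2 hyz)).symm
  obtain ⟨s, hs, ⟨S⟩⟩ :=
    exists_reachable_deleteEdges_sym2 (X := X) hreach (.inl R₁.end_mem_support)
  rw [deleteEdges_deleteEdges] at S
  have hS : ∀ e ∈ (S.mapLe (deleteEdges_le _)).edges, e ∉ {s(y, z)} ∪ X.sym2 := fun e he => by
    rw [Walk.edges_mapLe_eq_edges] at he
    exact ((edgeSet_deleteEdges _).subset (S.edges_subset_edgeSet he)).2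
  have hX₁ : R₁.edgeSet ⊆ X.sym2 := edgeSet_subset_sym2 fun v => .inl
  have hX₂ : R₂.edgeSet ⊆ X.sym2 := edgeSet_subset_sym2 fun v => .inr
  rcases hs with hs | hs
  · exact exists_edgeDisjoint_walks_of_detour hd hadj hs (S.mapLe (deleteEdges_le _))
      (fun e he he' => hS e he (.inr (hX₂ he'))) (fun h => hS _ h (.inl rfl))
      fun h => he₁ (R₁.edges_takeUntil_subset_edges hs h)
  · exact exists_edgeDisjoint_walks_of_detour hd.symm hadj hs (S.mapLe (deleteEdges_le _))
      (fun e he he' => hS e he (.inr (hX₁ he'))) (fun h => hS _ h (.inl rfl))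
      fun h => he₂ (R₂.edges_takeUntil_subset_edges hs h)

lemma exists_edgeDisjoint_isPath_of_bridges_eq_empty (hG : bridges G = ∅) (h : G.Reachable x y) :
    ∃ R₁ R₂ : G.Walk x y, R₁.IsPath ∧ R₂.IsPath ∧ R₁.edges.Disjoint R₂.edges := by
  classical
  rw [reachable_iff_reflTransGen] at h
  induction h with
  | refl => exact ⟨.nil, .nil, .nil, .nil, by simp⟩
  | @tail y z _ hadj ih =>
    obtain ⟨R₁, R₂, hR₁, hR₂, hd⟩ := ih
    obtain ⟨Q₁, Q₂, hQ⟩ := exists_edgeDisjoint_walks_of_adj_s12 hR₁ hR₂ hd hadj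
      fun h => (hG ▸ ⟨hadj, h⟩ : s(y, z) ∈ (∅ : Set (Sym2 V)))
    exact ⟨Q₁.bypass, Q₂.bypass, Q₁.bypass_isPath, Q₂.bypass_isPath, fun e h₁ h₂ =>
      hQ (Q₁.edges_bypass_subset_edges h₁) (Q₂.edges_bypass_subset_edges h₂)⟩

end EdgeDisjointWalks

/-! ### Greedy choice of edge-disjoint trails -/

section GreedyTrails

variable {V : Type*} {G K : SimpleGraph V} {T : Set V} {x y s t a : V}

lemma sym2_subset_sym2 {X Y : Set V} (h : X ⊆ Y) : X.sym2 ⊆ Y.sym2 := fun _ he =>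
  Set.mem_sym2_iff_subset.2 ((Set.mem_sym2_iff_subset.1 he).trans h)

lemma exists_finite_subset_sym2 {B : Set (Sym2 V)} (hB : B.Finite) :
    ∃ X : Set V, X.Finite ∧ B ⊆ X.sym2 := by
  refine ⟨⋃ e ∈ B, (e : Set V), hB.biUnion fun e _ => ?_, fun e he => ?_⟩
  · induction e with | h u v => simp
  · exact Set.mem_sym2_iff_subset.2 (Set.subset_biUnion_of_mem he)

lemma exists_infinite_reachable_deleteEdges_sym2 {X : Set V} (hX : X.Finite) (hx : x ∈ X)
    (h : {t ∈ T | G.Reachable x t}.Infinite) :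
    ∃ y ∈ X, {t ∈ T | (G.deleteEdges X.sym2).Reachable y t}.Infinite := by
  by_contra! hfin
  refine h ((hX.biUnion hfin).subset fun t ht => ?_)
  obtain ⟨y, hy, hty⟩ := exists_reachable_deleteEdges_sym2 ht.2.symm hx
  exact Set.mem_biUnion hy ⟨ht.1, hty.symm⟩

lemma exists_infinite_reachable_deleteEdges_bridges (hb : (bridges G).Finite)
    (h : {t ∈ T | G.Reachable x t}.Infinite) :
    ∃ y, G.Reachable x y ∧ {t ∈ T | (G.deleteEdges (bridges G)).Reachable y t}.Infinite := by
  obtain ⟨X, hX, hbX⟩ := exists_finite_subset_sym2 hb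
  have hsub : (G.deleteEdges (insert x X).sym2) ≤ G.deleteEdges (bridges G) :=
    deleteEdges_anti (hbX.trans (sym2_subset_sym2 (Set.subset_insert x X)))
  obtain ⟨y, -, hy⟩ :=
    exists_infinite_reachable_deleteEdges_sym2 (T := {t ∈ T | G.Reachable x t}) (hX.insert x)
    (Set.mem_insert x X) (h.mono fun t ht => ⟨ht, ht.2⟩)
  obtain ⟨t, ht, hyt⟩ := hy.nonempty
  exact ⟨y, ht.2.trans (hyt.mono (deleteEdges_le _)).symm,
    hy.mono fun t ht => ⟨ht.1.1, ht.2.mono hsub⟩⟩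

lemma exists_isTrail_of_edgeDisjoint {S : G.Walk x s} {R₁ R₂ : G.Walk s t} (hS : S.IsTrail)
    (hR₁ : R₁.IsTrail) (hR₂ : R₂.IsTrail) (hSR₁ : S.edges.Disjoint R₁.edges)
    (hSR₂ : S.edges.Disjoint R₂.edges) (hR : R₁.edges.Disjoint R₂.edges)
    (ha : a ∈ R₁.support ∨ a ∈ R₂.support) :
    ∃ W : G.Walk x a, W.IsTrail ∧ t ∈ W.support ∧
      W.edgeSet ⊆ S.edgeSet ∪ (R₁.edgeSet ∪ R₂.edgeSet) := by
  classical
  wlog ha₁ : a ∈ R₁.support generalizing R₁ R₂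
  · rw [Set.union_comm R₁.edgeSet]
    exact this hR₂ hR₁ hSR₂ hSR₁ hR.symm ha.symm (ha.resolve_left ha₁)
  have hsub := R₁.edges_dropUntil_subset_edges ha₁
  refine ⟨S.append (R₂.append (R₁.dropUntil a ha₁).reverse), ?_, ?_, ?_⟩
  · simp only [Walk.isTrail_append, Walk.edges_append, Walk.edges_reverse,
      List.disjoint_append_right, List.disjoint_reverse_right]
    exact ⟨hS, ⟨hR₂, (hR₁.dropUntil ha₁).reverse, fun e he he' => hR (hsub he') he⟩, hSR₂,
      fun e he he' => hSR₁ he (hsub he')⟩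
  · simp [Walk.mem_support_append_iff]
  · intro e he
    simp only [Walk.mem_edgeSet, Walk.edges_append, Walk.edges_reverse, List.mem_append,
      List.mem_reverse] at he
    rcases he with he | he | he
    exacts [.inl he, .inr (.inr he), .inr (.inl (hsub he))]

lemma reachable_of_forall_reachable_adj (hK : ∀ ⦃u v⦄, K.Reachable x u → K.Adj u v → G.Adj u v)
    (h : K.Reachable x y) : G.Reachable x y := by
  have h' := (reachable_iff_reflTransGen x y).1 h
  clear h
  induction h' with
  | refl => rfl
  | tail hxu huv ih => exact ih.trans (hK ((reachable_iff_reflTransGen _ _).2 hxu) huv).reachable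

lemma exists_isTrail_disjoint_sym2 {C : Set V} (h : G.Reachable x y) (hy : y ∈ C) :
    ∃ s ∈ C, ∃ S : G.Walk x s, S.IsTrail ∧ Disjoint S.edgeSet C.sym2 := by
  classical
  obtain ⟨s, hs, ⟨S⟩⟩ := exists_reachable_deleteEdges_sym2 h hy
  refine ⟨s, hs, S.bypass.mapLe (deleteEdges_le _), S.bypass_isPath.isTrail.mapLe _,
    Set.disjoint_left.2 fun e he => ?_⟩
  rw [Walk.mem_edgeSet, Walk.edges_mapLe_eq_edges] at he
  exact ((edgeSet_deleteEdges _).subset (S.bypass.edges_subset_edgeSet he)).2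

lemma exists_isTrail_of_bridges_eq_empty (hKG : K ≤ G) (hK : bridges K = ∅) (hxy : G.Reachable x y)
    (h : {t ∈ T | K.Reachable y t}.Infinite) :
    ∃ a, ∃ W : G.Walk x a, W.IsTrail ∧ (∃ t ∈ T, t ∈ W.support) ∧
      {t ∈ T | (G.deleteEdges W.edgeSet).Reachable a t}.Infinite := by
  let C : Set V := {v | K.Reachable y v}
  obtain ⟨s, hs, S, hS, hSC⟩ := exists_isTrail_disjoint_sym2 (C := C) hxy .rfl
  obtain ⟨t, htT, ht⟩ := h.nonempty
  obtain ⟨R₁, R₂, hR₁, hR₂, hR⟩ :=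
    exists_edgeDisjoint_isPath_of_bridges_eq_empty hK (hs.symm.trans ht)
  let X : Set V := {v | v ∈ R₁.support ∨ v ∈ R₂.support}
  have hXC : X ⊆ C := by
    classical
    rintro v (hv | hv)
    exacts [hs.trans ⟨R₁.takeUntil v hv⟩, hs.trans ⟨R₂.takeUntil v hv⟩]
  have hR₁X : R₁.edgeSet ⊆ X.sym2 := edgeSet_subset_sym2 fun v => .inl
  have hR₂X : R₂.edgeSet ⊆ X.sym2 := edgeSet_subset_sym2 fun v => .inr
  obtain ⟨a, haX, ha⟩ := exists_infinite_reachable_deleteEdges_sym2 (T := T) (x := s)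
    (R₁.support.finite_toSet.union R₂.support.finite_toSet : X.Finite) (.inl R₁.start_mem_support)
    (h.mono fun u hu => ⟨hu.1, hs.symm.trans hu.2⟩)
  have hSR (e) (he : e ∈ S.edges) (heX : e ∈ X.sym2) : False :=
    Set.disjoint_left.1 hSC he (sym2_subset_sym2 hXC heX)
  obtain ⟨W, hW, htW, hWsub⟩ := exists_isTrail_of_edgeDisjoint (R₁ := R₁.mapLe hKG)
    (R₂ := R₂.mapLe hKG) (a := a) hS (hR₁.isTrail.mapLe hKG) (hR₂.isTrail.mapLe hKG)
    (by simpa [List.Disjoint] using fun e he he' => hSR e he (hR₁X he'))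
    (by simpa [List.Disjoint] using fun e he he' => hSR e he (hR₂X he')) (by simpa using hR)
    (by simpa using! haX)
  refine ⟨a, W, hW, ⟨t, htT, htW⟩, ha.mono fun u hu => ⟨hu.1, ?_⟩⟩
  refine reachable_of_forall_reachable_adj (fun v v' hav hadj => ?_) hu.2
  have hv : v ∈ C := (hXC haX).trans (hav.mono (deleteEdges_le _))
  rw [deleteEdges_adj] at hadj
  refine deleteEdges_adj.2 ⟨hKG hadj.1, fun he => ?_⟩
  rcases hWsub he with he | he | he
  · exact Set.disjoint_left.1 hSC he ⟨hv, hv.trans hadj.1.reachable⟩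
  · exact hadj.2 (hR₁X (by simpa using he))
  · exact hadj.2 (hR₂X (by simpa using he))

lemma exists_isTrail_of_finite_bridges (hb : (bridges G).Finite)
    (h : {t ∈ T | G.Reachable x t}.Infinite) :
    ∃ a, ∃ W : G.Walk x a, W.IsTrail ∧ (∃ t ∈ T, t ∈ W.support) ∧
      {t ∈ T | (G.deleteEdges W.edgeSet).Reachable a t}.Infinite :=
  let ⟨_, hxy, hy⟩ := exists_infinite_reachable_deleteEdges_bridges hb h
  exists_isTrail_of_bridges_eq_empty (deleteEdges_le _) (bridges_deleteEdges_bridges G) hxy hy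

/-- A stage in the greedy choice of an infinite sequence of edge-disjoint trails: the trails so far
end in `base` and their edges are in `used`. The vertices in `target` are still to be visited, and
infinitely many of them can be reached without `used` edges. -/
structure Stage (G : SimpleGraph V) where
  base : V
  used : Set (Sym2 V)
  target : Set V
  finite_used : used.Finite
  infinite_reachable : {t ∈ target | (G.deleteEdges used).Reachable base t}.Infinite

lemma Stage.exists_next (hb : (bridges G).Finite) (σ : Stage G) :
    ∃ (σ' : Stage G) (W : G.Walk σ.base σ'.base) (t : V), W.IsTrail ∧ Disjoint W.edgeSet σ.used ∧
      W.edgeSet ∪ σ.used ⊆ σ'.used ∧ t ∈ W.support ∧ t ∈ σ.target ∧ σ'.target = σ.target \ {t} := by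
  obtain ⟨a, W, hW, ⟨t, ht, htW⟩, hinf⟩ :=
    exists_isTrail_of_finite_bridges (finite_bridges_deleteEdges hb σ.finite_used)
      σ.infinite_reachable
  let σ' : Stage G :=
    { base := a
      used := W.edgeSet ∪ σ.used
      target := σ.target \ {t}
      finite_used := W.edges.finite_toSet.union σ.finite_used
      infinite_reachable := by
        refine (hinf.sdiff (Set.finite_singleton t)).mono fun u hu => ⟨⟨hu.1.1, hu.2⟩, ?_⟩
        rw [Set.union_comm, ← deleteEdges_deleteEdges]
        exact hu.1.2 }
  refine ⟨σ', W.mapLe (deleteEdges_le _), t, hW.mapLe _, ?_, ?_, ?_, ht, rfl⟩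
  · refine Set.disjoint_left.2 fun e he => ?_
    rw [Walk.mem_edgeSet, Walk.edges_mapLe_eq_edges] at he
    exact ((edgeSet_deleteEdges _).subset (W.edges_subset_edgeSet he)).2
  · exact Set.union_subset_union_left _ fun e he => by simpa using he
  · simpa using htW

lemma exists_edgeDisjoint_trails (hG : G.Connected) (hb : (bridges G).Finite) (hT : T.Infinite) :
    ∃ (x : ℕ → V) (W : ∀ n, G.Walk (x n) (x (n + 1))) (t : ℕ → T), t.Injective ∧
      (∀ n, (W n).IsTrail) ∧ (∀ n, (t n : V) ∈ (W n).support) ∧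
      Pairwise (Function.onFun Disjoint fun n => (W n).edgeSet) := by
  choose next W t hW hdisj hused htW ht htarget using Stage.exists_next hb
  obtain ⟨x⟩ := hG.nonempty
  let σ₀ : Stage G := ⟨x, ∅, T, Set.finite_empty, hT.mono fun t ht => ⟨ht, by
    simpa using hG.preconnected x t⟩⟩
  let σ : ℕ → Stage G := fun n => Nat.rec σ₀ (fun _ => next) n
  have hused_mono : Monotone fun n => (σ n).used :=
    monotone_nat_of_le_succ fun n => Set.subset_union_right.trans (hused (σ n))
  have htarget_anti : Antitone fun n => (σ n).target :=
    antitone_nat_of_succ_le fun n => (htarget (σ n)).subset.trans Set.sdiff_subset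
  refine ⟨fun n => (σ n).base, fun n => W (σ n),
    fun n => ⟨t (σ n), htarget_anti n.zero_le (ht (σ n))⟩, ?_, fun n => hW _, fun n => htW _, ?_⟩
  · refine Function.Injective.of_lt_imp_ne fun m n hmn heq => ?_
    have heq' : t (σ m) = t (σ n) := congrArg Subtype.val heq
    have hmem : t (σ m) ∈ (next (σ m)).target :=
      htarget_anti (Nat.succ_le_of_lt hmn) (heq' ▸ ht (σ n))
    rw [htarget] at hmem
    exact hmem.2 rfl
  · refine (pairwise_disjoint_on _).2 fun m n hmn => ?_
    exact (hdisj (σ n)).symm.mono_left ((Set.subset_union_left.trans (hused (σ m))).trans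
      (hused_mono (Nat.succ_le_of_lt hmn)))

lemma exists_edgeDisjoint_walks_s12 (hG : G.Connected) (hb : (bridges G).Finite) (hT : T.Infinite) :
    ∃ (t : ℕ → T) (U : ∀ n, G.Walk (t n) (t (n + 1))), t.Injective ∧
      Pairwise (Function.onFun Disjoint fun n => (U n).edgeSet) := by
  classical
  obtain ⟨x, W, t, ht, htrail, htW, hW⟩ := exists_edgeDisjoint_trails hG hb hT
  refine ⟨t, fun n => ((W n).dropUntil (t n) (htW n)).append
    ((W (n + 1)).takeUntil (t (n + 1)) (htW (n + 1))), ht, ?_⟩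
  refine (pairwise_disjoint_on _).2 fun m n hmn => Set.disjoint_left.2 fun e he he' => ?_
  simp only [Walk.mem_edgeSet, Walk.edges_append, List.mem_append] at he he'
  have hne {i j} (hij : i ≠ j) (hi : e ∈ (W i).edges) (hj : e ∈ (W j).edges) : False :=
    Set.disjoint_left.1 (hW hij) hi hj
  rcases he with he | he <;> rcases he' with he' | he'
  · exact hne hmn.ne (Walk.edges_dropUntil_subset_edges _ _ he)
      (Walk.edges_dropUntil_subset_edges _ _ he')
  · exact hne (hmn.trans n.lt_succ_self).ne (Walk.edges_dropUntil_subset_edges _ _ he)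
      (Walk.edges_takeUntil_subset_edges _ _ he')
  · obtain rfl | hmn' := eq_or_ne (m + 1) n
    · exact (htrail (m + 1)).disjoint_edges_takeUntil_dropUntil (htW (m + 1)) he he'
    · exact hne hmn' (Walk.edges_takeUntil_subset_edges _ _ he)
        (Walk.edges_dropUntil_subset_edges _ _ he')
  · exact hne (Nat.succ_lt_succ hmn).ne (Walk.edges_takeUntil_subset_edges _ _ he)
      (Walk.edges_takeUntil_subset_edges _ _ he')

end GreedyTrails

/-! ### Bridges and 2-edge-connected components -/

section TwoEdgeConnectedComponents

variable {V W : Type*} {G : SimpleGraph V} {H : SimpleGraph W} {k : ℕ} {v : V}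

lemma isEdgeReachable_map (f : H →g G) (hf : Function.Injective f) {a b : W}
    (h : H.IsEdgeReachable k a b) : G.IsEdgeReachable k (f a) (f b) := by
  intro B hB
  let φ : H.deleteEdges (Sym2.map f ⁻¹' B) →g G.deleteEdges B :=
    ⟨f, fun h => deleteEdges_adj.2 ⟨f.map_adj (deleteEdges_adj.1 h).1, (deleteEdges_adj.1 h).2⟩⟩
  refine (h (lt_of_le_of_lt ?_ hB)).map φ
  exact Set.encard_le_encard_of_injOn (Set.mapsTo_preimage _ _) (Sym2.map.injective hf).injOn

lemma isEdgeReachable_two_of_twoEdgeConnected_s12 (hH : H.TwoEdgeConnected) (a b : W) :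
    H.IsEdgeReachable 2 a b := by
  refine isEdgeReachable_two.2 fun e => ?_
  by_cases he : e ∈ H.edgeSet
  · exact (hH.2 e he).preconnected a b
  · rw [deleteEdges_eq_self.2 (Set.disjoint_singleton_right.2 he)]
    exact hH.1.preconnected a b

/-- The class of `v` under 2-edge-reachability; these classes turn out to be the vertex sets of
the 2-edge-connected components. -/
def twoEdgeClass (G : SimpleGraph V) (v : V) : Set V := {w | G.IsEdgeReachable 2 v w}

lemma mem_twoEdgeClass_of_isTrail {x y z : V} {w : G.Walk x y} (hw : w.IsTrail)
    (hx : x ∈ twoEdgeClass G v) (hy : y ∈ twoEdgeClass G v) (hz : z ∈ w.support) :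
    z ∈ twoEdgeClass G v :=
  IsEdgeReachable.trans hx
    (hw.isEdgeReachable_two_of_isEdgeReachable_two (hx.symm.trans hy) w.start_mem_support hz)

lemma connected_induce_twoEdgeClass_deleteEdges (e : Sym2 (twoEdgeClass G v)) :
    ((G.induce (twoEdgeClass G v)).deleteEdges {e}).Connected := by
  classical
  have : Nonempty (twoEdgeClass G v) := ⟨v, .rfl⟩
  refine ⟨fun ⟨a, ha⟩ ⟨b, hb⟩ => ?_⟩
  obtain ⟨⟨x, y⟩⟩ := e
  obtain ⟨w, hw⟩ := reachable_deleteEdges_iff_exists_walk.1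
    (isEdgeReachable_two.1 (IsEdgeReachable.trans ha.symm hb) s(↑x, ↑y))
  let w' := w.bypass.induce _ fun _ => mem_twoEdgeClass_of_isTrail w.bypass_isPath.isTrail ha hb
  refine ⟨w'.toDeleteEdges _ fun f hf hfe => hw (w.edges_bypass_subset_edges ?_)⟩
  have hedges : w.bypass.edges = w'.edges.map (Sym2.map Subtype.val) :=
    (congrArg Walk.edges (w.bypass.map_induce _)).symm.trans (w'.edges_map _)
  exact hedges ▸ List.mem_map.2 ⟨f, hf, congrArg (Sym2.map Subtype.val) hfe⟩

lemma isTwoEdgeConnectedComponent_twoEdgeClass (G : SimpleGraph V) (v : V) :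
    G.IsTwoEdgeConnectedComponent (twoEdgeClass G v) := by
  have hdel := connected_induce_twoEdgeClass_deleteEdges (G := G) (v := v)
  refine ⟨⟨(hdel s(⟨v, .rfl⟩, ⟨v, .rfl⟩)).mono (deleteEdges_le _), fun e _ => hdel e⟩, ?_⟩
  refine fun S hS h => Set.Subset.antisymm (fun w hw => ?_) hS
  exact isEdgeReachable_map (Embedding.induce S).toHom Subtype.val_injective
    (isEdgeReachable_two_of_twoEdgeConnected_s12 h ⟨v, hS .rfl⟩ ⟨w, hw⟩)

lemma eq_of_mem_bridges {a b c d : V} (hab : s(a, b) ∈ bridges G) (hcd : s(c, d) ∈ bridges G)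
    (hac : twoEdgeClass G a = twoEdgeClass G c) (hbd : twoEdgeClass G b = twoEdgeClass G d) :
    s(a, b) = s(c, d) := by
  by_contra hne
  have hc : G.IsEdgeReachable 2 a c := hac.symm.subset (IsEdgeReachable.refl c)
  have hd : G.IsEdgeReachable 2 d b := hbd.subset (IsEdgeReachable.refl b)
  have hadj : (G.deleteEdges {s(a, b)}).Adj c d := deleteEdges_adj.2 ⟨hcd.1, fun h => hne h.symm⟩
  exact isBridge_iff.1 hab.2 ((isEdgeReachable_two.1 hc _).trans
    (hadj.reachable.trans (isEdgeReachable_two.1 hd _)))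

lemma finite_bridges_of_finite_twoEdgeConnectedComponents
    (h : {S : Set V | G.IsTwoEdgeConnectedComponent S}.Finite) : (bridges G).Finite := by
  refine Set.Finite.of_finite_image (f := Sym2.map (twoEdgeClass G))
    (h.toFinset.sym2.finite_toSet.subset ?_) ?_
  · rintro _ ⟨⟨a, b⟩, -, rfl⟩
    simp [isTwoEdgeConnectedComponent_twoEdgeClass]
  · rintro ⟨a, b⟩ hab ⟨c, d⟩ hcd heq
    rcases Sym2.eq_iff.1 heq with ⟨hac, hbd⟩ | ⟨had, hbc⟩
    · exact eq_of_mem_bridges hab hcd hac hbd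
    · exact (eq_of_mem_bridges hab (Sym2.eq_swap ▸ hcd) had hbc).trans Sym2.eq_swap

end TwoEdgeConnectedComponents

end TJoin

/-- A connected graph with only finitely many 2-edge-connected components contains a
`T`-join for every infinite `T`. -/
theorem hasTJoin_of_finitely_many_2ecc {V : Type*} (G : SimpleGraph V) (hG : G.Connected)
    (hfin : {S : Set V | G.IsTwoEdgeConnectedComponent S}.Finite)
    (T : Set V) (hT : T.Infinite) :
    G.HasTJoin T := by
  have hb := TJoin.finite_bridges_of_finite_twoEdgeConnectedComponents hfin
  obtain ⟨t, W, ht, hW⟩ := TJoin.exists_edgeDisjoint_walks_s12 hG hb hT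
  exact TJoin.hasTJoin_of_walks_s12 hG t ht W hW
end
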